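/- For all positive constants μ, κ, R, c_v and all M, m > 0 and K ≥ 1 there exists a constant C₀ > 0, depending only on μ, κ, R, c_v, M, m, K, such that: whenever (v,u,θ) is a classical solution of the one-dimensional compressible Navier–Stokes system on ℝ whose initial data are (M,m)-bounded and which is K-volume-bounded, then C₀⁻¹ ≤ θ(x,t) ≤ C₀ for all (x,t) ∈ ℝ × [0,∞). -/

import Mathlib

/-!
The temperature is bounded on time windows of a fixed length `L`, by constants that depend only on
norms of the data at the start of the window; every time lies in a window that starts at a
good time, one at which those norms are controlled by quantities that are uniform in time.

*Lower bound.* Completing the square in the viscous heating gives `c_v θ_t ≥ qₓ - (R² / 4μ) θ² / v`,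
with the heat flux `q = κ θₓ / v`. Hence `θ` stays above the solution of `k' = -a k²` that starts
at the initial infimum of `θ`; this is proved by estimating the integral of the cube of
`max (k - θ) 0` (`NSFlow.lower_bound`). The bound degenerates as time grows, so it is used on
windows of length `L` only, and qualitatively to make sense of the entropy estimate.

*Energy.* The energy relative to the state `(1, 0, 1)` is nonincreasing and its dissipation is
integrable over all times (`IsClassicalSolution.energy_bound`). So each interval of length `L`
contains a time at which the dissipation is at most `E / L`. There `(θ - 1) / (θ + 1)` is small
in the supremum norm, whence `θ ≥ 1/2` and `θ - 1`, `uₓ`, `θₓ` are bounded in `L²`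
(`NSFlow.good_time`).

*Upper bound on a window.* With the effective viscous flux `G = μ uₓ / v - R (θ / v - 1)` the
system reads `v_t = uₓ`, `u_t = Gₓ`, `c_v θ_t = qₓ + (G - R) uₓ`. A quartic functional in
`(u, θ - 1)` controls `θ - 1` in `L²` and the gradients in `L²(dx dt)`. Balance laws for `∫ v G²`
and `∫ v q²` together with Gronwall's inequality then control `uₓ` and `θₓ` in `L²` at every time
of the window, and `θ` is bounded by the Sobolev inequality (`NSFlow.upper_bound`).

Solutions are differentiable only once in time, with no continuity of the time derivatives, so `G`
and `q` need not be differentiable in time. Their balance laws are therefore derived for the fluxes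
in which `uₓ`, `θₓ` are replaced by spatial difference quotients, and the step is sent to `0`
(`FluxFlow` and the two parts on squared fluxes).
-/

open MeasureTheory Filter Set

noncomputable section

/-- Partial derivative in the spatial variable. -/
def pdx (f : ℝ → ℝ → ℝ) (x t : ℝ) : ℝ := deriv (fun y => f y t) x

/-- Partial derivative in the time variable. -/
def pdt (f : ℝ → ℝ → ℝ) (x t : ℝ) : ℝ := deriv (fun s => f x s) t

/-- The `L²(ℝ)` norm, valued in `ℝ≥0∞`. -/
def L2 (f : ℝ → ℝ) : ENNReal := eLpNorm f 2 volume

/-- The `H¹(ℝ)` norm, valued in `ℝ≥0∞`. -/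
def H1 (f : ℝ → ℝ) : ENNReal := L2 f + L2 (deriv f)

/-- The `H²(ℝ)` norm, valued in `ℝ≥0∞`. -/
def H2 (f : ℝ → ℝ) : ENNReal := L2 f + L2 (deriv f) + L2 (deriv (deriv f))

/-- A classical solution of the 1-D compressible Navier–Stokes system in Lagrangian
coordinates on `ℝ`, together with the regularity and far-field conditions. -/
structure IsClassicalSolution (μ κ R cv : ℝ) (v u θ : ℝ → ℝ → ℝ) : Prop where
  v_pos : ∀ x t : ℝ, 0 ≤ t → 0 < v x t
  θ_pos : ∀ x t : ℝ, 0 ≤ t → 0 < θ x t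
  smooth_x_v : ∀ t : ℝ, 0 ≤ t → ContDiff ℝ 2 (fun x => v x t)
  smooth_x_u : ∀ t : ℝ, 0 ≤ t → ContDiff ℝ 2 (fun x => u x t)
  smooth_x_θ : ∀ t : ℝ, 0 ≤ t → ContDiff ℝ 2 (fun x => θ x t)
  smooth_t_v : ∀ x t : ℝ, 0 ≤ t → DifferentiableAt ℝ (fun s => v x s) t
  smooth_t_u : ∀ x t : ℝ, 0 ≤ t → DifferentiableAt ℝ (fun s => u x s) t
  smooth_t_θ : ∀ x t : ℝ, 0 ≤ t → DifferentiableAt ℝ (fun s => θ x s) t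
  eq_mass : ∀ x t : ℝ, 0 ≤ t → pdt v x t = pdx u x t
  eq_momentum : ∀ x t : ℝ, 0 ≤ t →
    pdt u x t + pdx (fun y s => R * θ y s / v y s) x t
      = μ * pdx (fun y s => pdx u y s / v y s) x t
  eq_energy : ∀ x t : ℝ, 0 ≤ t →
    cv * pdt θ x t + (R * θ x t / v x t) * pdx u x t
      = κ * pdx (fun y s => pdx θ y s / v y s) x t + μ * (pdx u x t) ^ 2 / v x t
  reg_H1 : ∀ T : ℝ, 0 ≤ T → ∃ B : ℝ, ∀ t ∈ Icc (0 : ℝ) T,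
    H1 (fun x => v x t - 1) + H1 (fun x => u x t) + H1 (fun x => θ x t - 1)
      ≤ ENNReal.ofReal B
  reg_H2 : ∀ T : ℝ, 0 < T →
    (∫⁻ t in Icc (0 : ℝ) T,
      (H2 (fun x => u x t) ^ 2 + H2 (fun x => θ x t - 1) ^ 2)) < ⊤
  farfield_v : ∀ t : ℝ, 0 ≤ t → Tendsto (fun x => v x t) (cocompact ℝ) (nhds 1)
  farfield_u : ∀ t : ℝ, 0 ≤ t → Tendsto (fun x => u x t) (cocompact ℝ) (nhds 0)
  farfield_θ : ∀ t : ℝ, 0 ≤ t → Tendsto (fun x => θ x t) (cocompact ℝ) (nhds 1)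

/-- The initial data of `(v, u, θ)` are `(M, m)`-bounded. -/
def InitBounded (M m : ℝ) (v u θ : ℝ → ℝ → ℝ) : Prop :=
  H1 (fun x => v x 0 - 1) + H1 (fun x => u x 0) + H1 (fun x => θ x 0 - 1)
      ≤ ENNReal.ofReal M
    ∧ (∀ x : ℝ, m ≤ v x 0) ∧ (∀ x : ℝ, m ≤ θ x 0)

/-- The solution is `K`-volume-bounded. -/
def VolBounded (K : ℝ) (v : ℝ → ℝ → ℝ) : Prop :=
  ∀ x t : ℝ, 0 ≤ t → K⁻¹ ≤ v x t ∧ v x t ≤ K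

end

/-! ### Square-integrable continuous functions of one variable -/

/-- Continuous and square integrable on the line. -/
def Sq (f : ℝ → ℝ) : Prop := Continuous f ∧ Integrable (fun x => f x ^ 2)

namespace Sq

variable {f g : ℝ → ℝ}

lemma cont (hf : Sq f) : Continuous f := hf.1

lemma int (hf : Sq f) : Integrable (fun x => f x ^ 2) := hf.2

lemma of_le (hf : Continuous f) {b : ℝ → ℝ} (hb : Integrable b) (h : ∀ x, f x ^ 2 ≤ b x) :
    Sq f := by
  refine ⟨hf, hb.mono' (by fun_prop) (Eventually.of_forall fun x => ?_)⟩
  rw [Real.norm_eq_abs, abs_of_nonneg (sq_nonneg _)]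
  exact h x

lemma mul_int (hf : Sq f) (hg : Sq g) : Integrable (fun x => f x * g x) := by
  have h1 := hf.1
  have h2 := hg.1
  refine (hf.2.add hg.2).mono' (by fun_prop) (Eventually.of_forall fun x => ?_)
  simp only [Pi.add_apply, Real.norm_eq_abs]
  rw [abs_le]
  constructor <;> nlinarith [sq_nonneg (f x + g x), sq_nonneg (f x - g x)]

lemma add (hf : Sq f) (hg : Sq g) : Sq (fun x => f x + g x) := by
  have h1 := hf.1
  have h2 := hg.1
  refine of_le (by fun_prop) ((hf.2.const_mul 2).add (hg.2.const_mul 2)) fun x => ?_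
  simp only [Pi.add_apply]
  nlinarith [sq_nonneg (f x - g x)]

lemma const_mul (hf : Sq f) (c : ℝ) : Sq (fun x => c * f x) := by
  have h1 := hf.1
  refine of_le (by fun_prop) (hf.2.const_mul (c ^ 2)) fun x => ?_
  simp only [mul_pow]
  exact le_rfl

lemma neg (hf : Sq f) : Sq (fun x => -f x) := by
  have := hf.const_mul (-1)
  simpa using this

lemma sub (hf : Sq f) (hg : Sq g) : Sq (fun x => f x - g x) := by
  have := hf.add hg.neg
  simpa [sub_eq_add_neg] using this

lemma bdd_mul (hf : Sq f) (hg : Continuous g) {C : ℝ} (hC : ∀ x, |g x| ≤ C) :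
    Sq (fun x => g x * f x) := by
  have h1 := hf.1
  refine of_le (by fun_prop) (hf.2.const_mul (C ^ 2)) fun x => ?_
  rw [mul_pow]
  have : g x ^ 2 ≤ C ^ 2 := by
    have := hC x
    exact sq_le_sq' (by linarith [neg_abs_le (g x)]) (le_trans (le_abs_self _) this)
  exact mul_le_mul_of_nonneg_right this (sq_nonneg _)

lemma congr (hf : Sq f) (h : ∀ x, f x = g x) : Sq g := by
  have : f = g := funext h
  exact this ▸ hf

lemma shift (hf : Sq f) (h : ℝ) : Sq (fun x => f (x + h)) := by
  have h1 := hf.1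
  exact ⟨by fun_prop, hf.2.comp_add_right h⟩

end Sq

section OneDim

variable {f f' g g' : ℝ → ℝ}

lemma tendsto_sq_atBot (hf : ∀ x, HasDerivAt f (f' x) x) (sf : Sq f) (sf' : Sq f') :
    Tendsto (fun x => f x ^ 2) atBot (nhds 0) := by
  have hd : ∀ x, HasDerivAt (fun x => f x ^ 2) (2 * (f x * f' x)) x := fun x => by
    have := (hf x).pow 2
    convert! this using 1
    simp; ring
  exact tendsto_zero_of_hasDerivAt_of_integrableOn_Iic (a := 0) (fun x _ => hd x)
    ((sf.mul_int sf').const_mul 2).integrableOn sf.2.integrableOn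

/-- The one-dimensional Sobolev (Agmon) inequality, with a free parameter. -/
lemma sup_sq_le (hf : ∀ x, HasDerivAt f (f' x) x) (sf : Sq f) (sf' : Sq f') {ε : ℝ} (hε : 0 < ε)
    (x : ℝ) : f x ^ 2 ≤ ε * (∫ y, f' y ^ 2) + ε⁻¹ * ∫ y, f y ^ 2 := by
  have hd : ∀ x, HasDerivAt (fun x => f x ^ 2) (2 * (f x * f' x)) x := fun x => by
    have := (hf x).pow 2
    convert! this using 1
    simp; ring
  have hi : Integrable (fun x => 2 * (f x * f' x)) := (sf.mul_int sf').const_mul 2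
  have h1 := integral_Iic_of_hasDerivAt_of_tendsto' (a := x) (fun x _ => hd x)
    hi.integrableOn (tendsto_sq_atBot hf sf sf')
  have hb : Integrable (fun y => ε * f' y ^ 2 + ε⁻¹ * f y ^ 2) :=
    (sf'.2.const_mul ε).add (sf.2.const_mul ε⁻¹)
  have hpt : ∀ y, 2 * (f y * f' y) ≤ ε * f' y ^ 2 + ε⁻¹ * f y ^ 2 := fun y => by
    have : ε * f' y ^ 2 + ε⁻¹ * f y ^ 2 - 2 * (f y * f' y) = ε⁻¹ * (ε * f' y - f y) ^ 2 := by
      field_simp; ring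
    have h2 : 0 ≤ ε⁻¹ * (ε * f' y - f y) ^ 2 := by positivity
    linarith
  have h2 : ∫ y in Iic x, 2 * (f y * f' y) ≤ ∫ y in Iic x, (ε * f' y ^ 2 + ε⁻¹ * f y ^ 2) :=
    setIntegral_mono hi.integrableOn hb.integrableOn hpt
  have h3 : ∫ y in Iic x, (ε * f' y ^ 2 + ε⁻¹ * f y ^ 2) ≤ ∫ y, (ε * f' y ^ 2 + ε⁻¹ * f y ^ 2) :=
    setIntegral_le_integral hb (Eventually.of_forall fun y => by positivity)
  rw [integral_add (sf'.2.const_mul ε) (sf.2.const_mul ε⁻¹), integral_const_mul,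
    integral_const_mul] at h3
  linarith

lemma sup_sq_le' (hf : ∀ x, HasDerivAt f (f' x) x) (sf : Sq f) (sf' : Sq f') (x : ℝ) :
    f x ^ 2 ≤ (∫ y, f y ^ 2) + ∫ y, f' y ^ 2 := by
  have := sup_sq_le hf sf sf' one_pos x
  simp at this
  linarith

lemma ibp (hf : ∀ x, HasDerivAt f (f' x) x) (hg : ∀ x, HasDerivAt g (g' x) x)
    (sf : Sq f) (sf' : Sq f') (sg : Sq g) (sg' : Sq g') :
    ∫ x, f x * g' x = - ∫ x, f' x * g x :=
  integral_mul_deriv_eq_deriv_mul_of_integrable (fun x _ => hf x) (fun x _ => hg x)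
    (sf.mul_int sg') (sf'.mul_int sg) (sf.mul_int sg)

lemma two_mul_integral_le (sf : Sq f) (sg : Sq g) {ε : ℝ} (hε : 0 < ε) :
    2 * |∫ x, f x * g x| ≤ ε * (∫ x, f x ^ 2) + ε⁻¹ * ∫ x, g x ^ 2 := by
  have hb : Integrable (fun y => ε * f y ^ 2 + ε⁻¹ * g y ^ 2) :=
    (sf.2.const_mul ε).add (sg.2.const_mul ε⁻¹)
  have h1 : |∫ x, f x * g x| ≤ ∫ x, |f x * g x| := abs_integral_le_integral_abs
  have h2 : ∫ x, 2 * |f x * g x| ≤ ∫ x, (ε * f x ^ 2 + ε⁻¹ * g x ^ 2) := by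
    refine integral_mono ((sf.mul_int sg).abs.const_mul 2) hb fun x => ?_
    have : ε * f x ^ 2 + ε⁻¹ * g x ^ 2 - 2 * |f x * g x| = ε⁻¹ * (ε * |f x| - |g x|) ^ 2 := by
      rw [abs_mul, sub_sq, mul_pow, sq_abs, sq_abs]
      field_simp; ring
    have h2 : 0 ≤ ε⁻¹ * (ε * |f x| - |g x|) ^ 2 := by positivity
    simp only
    linarith
  rw [integral_add (sf.2.const_mul ε) (sg.2.const_mul ε⁻¹), integral_const_mul,
    integral_const_mul, integral_const_mul] at h2
  linarith

lemma cauchy_schwarz (sf : Sq f) (sg : Sq g) :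
    (∫ x, f x * g x) ^ 2 ≤ (∫ x, f x ^ 2) * ∫ x, g x ^ 2 := by
  set A := ∫ x, f x ^ 2
  set B := ∫ x, g x ^ 2
  set I := ∫ x, f x * g x
  have hA : 0 ≤ A := integral_nonneg fun x => sq_nonneg _
  have hB : 0 ≤ B := integral_nonneg fun x => sq_nonneg _
  have key : ∀ ε > 0, 2 * |I| ≤ ε * A + ε⁻¹ * B := fun ε hε => two_mul_integral_le sf sg hε
  by_contra hcon
  push Not at hcon
  have hI : 0 < |I| := by
    rw [abs_pos]; intro h0; rw [h0] at hcon
    have := mul_nonneg hA hB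
    nlinarith
  rw [← sq_abs] at hcon
  rcases hA.eq_or_lt with h0 | hApos
  · have := key ((B + 1) / |I|) (by positivity)
    rw [← h0, mul_zero, zero_add, inv_div, div_mul_eq_mul_div, le_div_iff₀ (by linarith)] at this
    nlinarith
  · have := key (|I| / A) (by positivity)
    rw [div_mul_cancel₀ _ hApos.ne', inv_div, div_mul_eq_mul_div] at this
    have h2 : |I| ≤ A * B / |I| := by linarith
    rw [le_div_iff₀ hI] at h2
    nlinarith

end OneDim

/-! ### Difference quotients -/

/-- The difference quotient of step `h`. -/
noncomputable def dq (h : ℝ) (f : ℝ → ℝ) (x : ℝ) : ℝ := (f (x + h) - f x) / h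

section DQ

variable {f f' g : ℝ → ℝ}

lemma dq_continuous (h : ℝ) (hf : Continuous f) : Continuous (dq h f) := by
  unfold dq; fun_prop

lemma dq_sq (h : ℝ) (sf : Sq f) : Sq (dq h f) := by
  have := ((sf.shift h).sub sf).const_mul h⁻¹
  refine this.congr fun x => ?_
  unfold dq; ring

lemma dq_hasDerivAt (h : ℝ) (hf : ∀ x, HasDerivAt f (f' x) x) (x : ℝ) :
    HasDerivAt (dq h f) (dq h f' x) x := by
  have h1 : HasDerivAt (fun x => f (x + h)) (f' (x + h)) x := (hf (x + h)).comp_add_const x h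
  exact (h1.sub (hf x)).div_const h

lemma dq_eq_integral {h : ℝ} (hh : h ≠ 0) (hf : ∀ x, HasDerivAt f (f' x) x) (cf' : Continuous f')
    (x : ℝ) : dq h f x = ∫ s in (0 : ℝ)..1, f' (x + s * h) := by
  have h1 : ∀ s ∈ uIcc (0 : ℝ) 1, HasDerivAt (fun s => f (x + s * h) / h) (f' (x + s * h)) s := by
    intro s _
    have h2 : HasDerivAt (fun s : ℝ => x + s * h) h s := by
      simpa using ((hasDerivAt_id s).mul_const h).const_add x
    have h3 := ((hf (x + s * h)).comp s h2).div_const h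
    convert! h3 using 1
    field_simp
  rw [intervalIntegral.integral_eq_sub_of_hasDerivAt h1
    (Continuous.intervalIntegrable (by fun_prop) _ _)]
  unfold dq
  simp [sub_div]

lemma sq_integral_le {g : ℝ → ℝ} (hg : Continuous g) :
    (∫ s in (0 : ℝ)..1, g s) ^ 2 ≤ ∫ s in (0 : ℝ)..1, g s ^ 2 := by
  set I := ∫ s in (0 : ℝ)..1, g s
  have h : 0 ≤ ∫ s in (0 : ℝ)..1, (g s - I) ^ 2 :=
    intervalIntegral.integral_nonneg zero_le_one fun s _ => sq_nonneg _
  have h2 : ∫ s in (0 : ℝ)..1, (g s - I) ^ 2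
      = (∫ s in (0 : ℝ)..1, g s ^ 2) - ∫ s in (0 : ℝ)..1, (2 * I * g s - I ^ 2) := by
    rw [← intervalIntegral.integral_sub (Continuous.intervalIntegrable (by fun_prop) _ _)
      (Continuous.intervalIntegrable (by fun_prop) _ _)]
    congr 1; ext s; ring
  rw [intervalIntegral.integral_sub (Continuous.intervalIntegrable (by fun_prop) _ _)
      (Continuous.intervalIntegrable (by fun_prop) _ _), intervalIntegral.integral_const_mul] at h2
  simp only [intervalIntegral.integral_const, sub_zero, one_smul] at h2
  change _ = _ - (2 * I * I - I ^ 2) at h2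
  nlinarith

/-- Difference quotients contract `L²` norms: Jensen's inequality and Tonelli's theorem. -/
lemma dq_lintegral_le {h : ℝ} (hh : h ≠ 0) (hf : ∀ x, HasDerivAt f (f' x) x)
    (cf' : Continuous f') :
    ∫⁻ x, ENNReal.ofReal (dq h f x ^ 2) ≤ ∫⁻ x, ENNReal.ofReal (f' x ^ 2) := by
  calc ∫⁻ x, ENNReal.ofReal (dq h f x ^ 2)
      ≤ ∫⁻ x, ∫⁻ s in Ioc (0 : ℝ) 1, ENNReal.ofReal (f' (x + s * h) ^ 2) := by
        refine lintegral_mono fun x => ?_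
        rw [dq_eq_integral hh hf cf']
        refine (ENNReal.ofReal_le_ofReal (sq_integral_le (by fun_prop))).trans ?_
        rw [intervalIntegral.integral_of_le zero_le_one,
          ofReal_integral_eq_lintegral_ofReal]
        · exact (Continuous.integrableOn_Icc (by fun_prop)).mono_set Ioc_subset_Icc_self
        · exact Eventually.of_forall fun s => sq_nonneg _
    _ = ∫⁻ s in Ioc (0 : ℝ) 1, ∫⁻ x, ENNReal.ofReal (f' (x + s * h) ^ 2) := by
        refine lintegral_lintegral_swap ?_
        refine Measurable.aemeasurable ?_
        unfold Function.uncurry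
        refine ENNReal.measurable_ofReal.comp (Continuous.measurable ?_)
        fun_prop
    _ = ∫⁻ s in Ioc (0 : ℝ) 1, ∫⁻ x, ENNReal.ofReal (f' x ^ 2) := by
        congr 1; ext s
        exact lintegral_add_right_eq_self (fun x => ENNReal.ofReal (f' x ^ 2)) (s * h)
    _ = ∫⁻ x, ENNReal.ofReal (f' x ^ 2) := by simp

lemma dq_sq' {h : ℝ} (hh : h ≠ 0) (hf : ∀ x, HasDerivAt f (f' x) x) (sf' : Sq f') :
    Sq (dq h f) := by
  have cf : Continuous f := continuous_iff_continuousAt.2 fun x => (hf x).continuousAt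
  have hc := dq_continuous h cf
  refine ⟨hc, ⟨by fun_prop, ?_⟩⟩
  rw [hasFiniteIntegral_iff_ofReal (Eventually.of_forall fun x => sq_nonneg _)]
  refine (dq_lintegral_le hh hf sf'.1).trans_lt ?_
  rw [← hasFiniteIntegral_iff_ofReal (Eventually.of_forall fun x => sq_nonneg _)]
  exact sf'.2.2

lemma dq_integral_le {h : ℝ} (hh : h ≠ 0) (hf : ∀ x, HasDerivAt f (f' x) x) (sf' : Sq f') :
    ∫ x, dq h f x ^ 2 ≤ ∫ x, f' x ^ 2 := by
  have h1 := dq_lintegral_le hh hf sf'.1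
  rw [← ofReal_integral_eq_lintegral_ofReal (dq_sq' hh hf sf').2
    (Eventually.of_forall fun x => sq_nonneg _), ← ofReal_integral_eq_lintegral_ofReal sf'.2
    (Eventually.of_forall fun x => sq_nonneg _)] at h1
  exact (ENNReal.ofReal_le_ofReal_iff (integral_nonneg fun x => sq_nonneg _)).1 h1

/-- Pointwise convergence without gain of norm is strong `L²` convergence: Fatou's lemma applied
to `(F n + f)²`. -/
lemma tendsto_integral_sq_sub {F : ℕ → ℝ → ℝ} (sF : ∀ n, Sq (F n)) (sf : Sq f)
    (hle : ∀ n, ∫ x, F n x ^ 2 ≤ ∫ x, f x ^ 2) (hpt : ∀ x, Tendsto (fun n => F n x) atTop (nhds (f x))) :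
    Tendsto (fun n => ∫ x, (F n x - f x) ^ 2) atTop (nhds 0) := by
  set A := ∫ x, f x ^ 2 with hA
  have hA0 : 0 ≤ A := integral_nonneg fun x => sq_nonneg _
  have hpar : ∀ n, ∫ x, (F n x - f x) ^ 2 ≤ 4 * A - ∫ x, (F n x + f x) ^ 2 := fun n => by
    have h1 : ∫ x, (F n x - f x) ^ 2 = (∫ x, (2 * F n x ^ 2 + 2 * f x ^ 2)) - ∫ x, (F n x + f x) ^ 2 := by
      have i1 : Integrable (fun x => 2 * F n x ^ 2 + 2 * f x ^ 2) :=
        ((sF n).2.const_mul 2).add (sf.2.const_mul 2)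
      have i2 : Integrable (fun x => (F n x + f x) ^ 2) := ((sF n).add sf).2
      rw [← integral_sub i1 i2]
      congr 1; ext x; ring
    rw [integral_add ((sF n).2.const_mul 2) (sf.2.const_mul 2), integral_const_mul,
      integral_const_mul] at h1
    linarith [hle n]
  have hfatou : ∫⁻ x, ENNReal.ofReal (4 * f x ^ 2)
      ≤ liminf (fun n => ∫⁻ x, ENNReal.ofReal ((F n x + f x) ^ 2)) atTop := by
    refine le_trans (le_of_eq ?_) (lintegral_liminf_le fun n => ?_)
    · congr 1; ext x
      symm
      apply Tendsto.liminf_eq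
      refine (ENNReal.continuous_ofReal.tendsto _).comp ?_
      have : 4 * f x ^ 2 = (f x + f x) ^ 2 := by ring
      rw [this]
      exact ((hpt x).add_const _).pow 2
    · have h1 := (sF n).1
      have h2 := sf.1
      exact ENNReal.measurable_ofReal.comp (Continuous.measurable (by fun_prop))
  rw [← ofReal_integral_eq_lintegral_ofReal (sf.2.const_mul 4)
    (Eventually.of_forall fun x => by positivity), integral_const_mul, ← hA] at hfatou
  rw [Metric.tendsto_atTop]
  intro ε hε
  have hev : ∀ᶠ n in atTop, 4 * A - ε < ∫ x, (F n x + f x) ^ 2 := by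
    rcases lt_or_ge (4 * A - ε) 0 with hneg | hnn
    · exact Eventually.of_forall fun n => hneg.trans_le (integral_nonneg fun x => sq_nonneg _)
    · have hlt : ENNReal.ofReal (4 * A - ε) <
          liminf (fun n => ∫⁻ x, ENNReal.ofReal ((F n x + f x) ^ 2)) atTop :=
        lt_of_lt_of_le ((ENNReal.ofReal_lt_ofReal_iff (by linarith)).2 (by linarith)) hfatou
      filter_upwards [eventually_lt_of_lt_liminf hlt] with n hn
      rw [← ofReal_integral_eq_lintegral_ofReal ((sF n).add sf).2
        (Eventually.of_forall fun x => by positivity)] at hn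
      exact (ENNReal.ofReal_lt_ofReal_iff_of_nonneg hnn).1 hn
  obtain ⟨N, hN⟩ := eventually_atTop.1 hev
  refine ⟨N, fun n hn => ?_⟩
  rw [Real.dist_eq, sub_zero, abs_of_nonneg (integral_nonneg fun x => sq_nonneg _)]
  linarith [hN n hn, hpar n]

lemma dq_tendsto {h : ℕ → ℝ} (hh : ∀ n, h n ≠ 0) (hlim : Tendsto h atTop (nhds 0))
    (hf : ∀ x, HasDerivAt f (f' x) x) (sf' : Sq f') :
    Tendsto (fun n => ∫ x, (dq (h n) f x - f' x) ^ 2) atTop (nhds 0) := by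
  refine tendsto_integral_sq_sub (fun n => dq_sq' (hh n) hf sf') sf'
    (fun n => dq_integral_le (hh n) hf sf') fun x => ?_
  have h1 := (hasDerivAt_iff_tendsto_slope_zero.1 (hf x))
  have h2 : Tendsto h atTop (nhdsWithin 0 {0}ᶜ) :=
    tendsto_nhdsWithin_iff.2 ⟨hlim, Eventually.of_forall fun n => hh n⟩
  refine (h1.comp h2).congr fun n => ?_
  simp only [Function.comp, dq, smul_eq_mul]
  rw [div_eq_inv_mul]

lemma dq_ibp (h : ℝ) (sf : Sq f) (sg : Sq g) :
    ∫ x, f x * dq h g x = - ∫ x, dq (-h) f x * g x := by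
  have e1 : ∫ x, f x * g (x + h) = ∫ x, f (x + -h) * g x := by
    rw [← integral_add_right_eq_self (fun x => f (x + -h) * g x) h]
    simp
  have h1 : ∫ x, f x * dq h g x = h⁻¹ * ((∫ x, f x * g (x + h)) - ∫ x, f x * g x) := by
    rw [← integral_sub (sf.mul_int (sg.shift h)) (sf.mul_int sg), ← integral_const_mul]
    congr 1; ext x; unfold dq; ring
  have h2 : ∫ x, dq (-h) f x * g x = (-h)⁻¹ * ((∫ x, f (x + -h) * g x) - ∫ x, f x * g x) := by
    rw [← integral_sub ((sf.shift (-h)).mul_int sg) (sf.mul_int sg), ← integral_const_mul]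
    congr 1; ext x; unfold dq; ring
  rw [h1, h2, e1, inv_neg]; ring

end DQ

/-! ### Estimates on a single time slice -/

/-- The spatial profile, at a fixed time, of a solution with volume in `[K⁻¹, K]`. Here
`G = μ uₓ / v - R (θ / v - 1)` is the effective viscous flux, normalised to vanish at infinity,
and `q = κ θₓ / v` is the heat flux. In these terms the system reads `v_t = uₓ`, `u_t = Gₓ`,
`c_v θ_t = qₓ + (G - R) uₓ`. -/
structure Slice (μ κ R K : ℝ) (v u θ ux θx G Gx q qx : ℝ → ℝ) : Prop where
  du : ∀ x, HasDerivAt u (ux x) x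
  dθ : ∀ x, HasDerivAt θ (θx x) x
  dG : ∀ x, HasDerivAt G (Gx x) x
  dq : ∀ x, HasDerivAt q (qx x) x
  sv : Sq (fun x => v x - 1)
  su : Sq u
  sux : Sq ux
  sθ : Sq (fun x => θ x - 1)
  sθx : Sq θx
  sG : Sq G
  sGx : Sq Gx
  sq : Sq q
  sqx : Sq qx
  vlo : ∀ x, K⁻¹ ≤ v x
  vhi : ∀ x, v x ≤ K
  θpos : ∀ x, 0 < θ x
  eG : ∀ x, v x * G x = μ * ux x - R * (θ x - v x)
  eq : ∀ x, v x * q x = κ * θx x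

lemma ibp_zero {f f' g g' : ℝ → ℝ} (hf : ∀ x, HasDerivAt f (f' x) x)
    (hg : ∀ x, HasDerivAt g (g' x) x) (sf : Sq f) (sf' : Sq f') (sg : Sq g) (sg' : Sq g') :
    Integrable (fun x => f x * g' x + f' x * g x) ∧ ∫ x, (f x * g' x + f' x * g x) = 0 := by
  refine ⟨(sf.mul_int sg').add (sf'.mul_int sg), ?_⟩
  rw [integral_add (sf.mul_int sg') (sf'.mul_int sg), ibp hf hg sf sf' sg sg']
  ring

lemma integral_le_of_le_add {F H Z : ℝ → ℝ} (iF : Integrable F) (iH : Integrable H)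
    (iZ : Integrable Z) (hZ : ∫ x, Z x = 0) (h : ∀ x, F x ≤ H x + Z x) :
    ∫ x, F x ≤ ∫ x, H x := by
  have h1 := integral_mono iF (iH.add iZ) h
  simp only [Pi.add_apply] at h1
  rw [integral_add iH iZ, hZ, add_zero] at h1
  exact h1

lemma integral_eq_of_eq_add {F H Z : ℝ → ℝ} (iF : Integrable F) (iZ : Integrable Z)
    (hZ : ∫ x, Z x = 0) (h : ∀ x, F x = H x + Z x) : ∫ x, F x = ∫ x, H x := by
  have h1 : H = fun x => F x - Z x := by ext x; rw [h x]; ring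
  rw [h1, integral_sub iF iZ, hZ, sub_zero]

lemma hasDerivAt_max_sq (y : ℝ) : HasDerivAt (fun y : ℝ => max y 0 ^ 2) (2 * max y 0) y := by
  rcases lt_trichotomy y 0 with h | h | h
  · have : (fun y : ℝ => max y 0 ^ 2) =ᶠ[nhds y] fun _ => 0 := by
      filter_upwards [Iio_mem_nhds h] with z hz
      rw [max_eq_right (le_of_lt hz)]; simp
    rw [max_eq_right h.le, mul_zero]
    exact (hasDerivAt_const y (0 : ℝ)).congr_of_eventuallyEq this
  · subst h
    simp only [max_self, mul_zero]
    rw [hasDerivAt_iff_isLittleO_nhds_zero]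
    simp only [zero_add, max_self, smul_zero, sub_zero, ne_eq, OfNat.ofNat_ne_zero,
      not_false_eq_true, zero_pow]
    refine Asymptotics.IsBigO.trans_isLittleO (g := fun h : ℝ => h ^ 2) ?_ ?_
    · refine Asymptotics.IsBigO.of_bound 1 (Eventually.of_forall fun h => ?_)
      rw [one_mul, norm_pow, norm_pow]
      refine pow_le_pow_left₀ (norm_nonneg _) ?_ 2
      simp only [Real.norm_eq_abs]
      rw [abs_of_nonneg (le_max_right h 0)]
      exact max_le (le_abs_self _) (abs_nonneg _)
    · exact Asymptotics.isLittleO_pow_id one_lt_two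
  · have : (fun y : ℝ => max y 0 ^ 2) =ᶠ[nhds y] fun y => y ^ 2 := by
      filter_upwards [Ioi_mem_nhds h] with z hz
      rw [max_eq_left (le_of_lt hz)]
    rw [max_eq_left h.le]
    have h2 : HasDerivAt (fun y : ℝ => y ^ 2) (2 * y) y := by simpa using hasDerivAt_pow 2 y
    exact h2.congr_of_eventuallyEq this

lemma hasDerivAt_max_cube (y : ℝ) :
    HasDerivAt (fun y : ℝ => max y 0 ^ 3 / 3) (max y 0 ^ 2) y := by
  have hm : ∀ y : ℝ, max y 0 * max y 0 = y * max y 0 := fun y => by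
    rcases le_total y 0 with h | h
    · simp [max_eq_right h]
    · simp [max_eq_left h]
  have h1 : (fun y : ℝ => max y 0 ^ 3 / 3) = fun y => y * max y 0 ^ 2 / 3 := by
    ext y
    have := hm y
    have h2 : max y 0 ^ 3 = y * max y 0 ^ 2 := by
      rw [pow_succ, mul_comm, pow_two]
      calc max y 0 * (max y 0 * max y 0) = max y 0 * (y * max y 0) := by rw [this]
        _ = _ := by ring
    rw [h2]
  rw [h1]
  have h2 := ((hasDerivAt_id y).mul (hasDerivAt_max_sq y)).div_const 3
  convert! h2 using 1
  simp only [id]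
  have := hm y
  nlinarith

/-- If `P ∈ H¹` and `w ∈ L²` then `∫ P² w` is controlled by a small multiple of the
squared `H¹` norm of `P`, up to a term without derivatives. -/
lemma cubic_le {P Px w : ℝ → ℝ} (dP : ∀ x, HasDerivAt P (Px x) x) (sP : Sq P) (sPx : Sq Px)
    (sw : Sq w) {δ : ℝ} (hδ : 0 < δ) :
    |∫ x, P x ^ 2 * w x| ≤ δ * ((∫ x, P x ^ 2) + ∫ x, Px x ^ 2)
      + (4 * δ)⁻¹ * ((∫ x, P x ^ 2) * ∫ x, w x ^ 2) := by
  set S := (∫ x, P x ^ 2) + ∫ x, Px x ^ 2 with hS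
  have hS0 : 0 ≤ S := add_nonneg (integral_nonneg fun x => sq_nonneg _)
    (integral_nonneg fun x => sq_nonneg _)
  have hsup : ∀ x, |P x| ≤ √S := fun x => Real.abs_le_sqrt (sup_sq_le' dP sP sPx x)
  have saP : Sq (fun x => |P x|) := ⟨sP.1.abs, by simpa using sP.2⟩
  have saw : Sq (fun x => |w x|) := ⟨sw.1.abs, by simpa using sw.2⟩
  have hcs := cauchy_schwarz saP saw
  simp only [sq_abs] at hcs
  set I := ∫ x, |P x| * |w x|
  have h1 : |∫ x, P x ^ 2 * w x| ≤ √S * I := by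
    refine abs_integral_le_integral_abs.trans ?_
    rw [← integral_const_mul]
    refine integral_mono_of_nonneg (Eventually.of_forall fun x => abs_nonneg _)
      ((saP.mul_int saw).const_mul _) (Eventually.of_forall fun x => ?_)
    simp only [abs_mul, abs_pow]
    nlinarith [hsup x, abs_nonneg (P x), abs_nonneg (w x), mul_nonneg (abs_nonneg (P x)) (abs_nonneg (w x))]
  have h2 : √S * I ≤ δ * S + (4 * δ)⁻¹ * I ^ 2 := by
    have hs : √S ^ 2 = S := Real.sq_sqrt hS0
    have : δ * S + (4 * δ)⁻¹ * I ^ 2 - √S * I = (4 * δ)⁻¹ * (2 * δ * √S - I) ^ 2 := by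
      rw [sub_sq, mul_pow, hs]; field_simp; ring
    have h3 : 0 ≤ (4 * δ)⁻¹ * (2 * δ * √S - I) ^ 2 := by positivity
    linarith
  have h3 : (4 * δ)⁻¹ * I ^ 2 ≤ (4 * δ)⁻¹ * ((∫ x, P x ^ 2) * ∫ x, w x ^ 2) :=
    mul_le_mul_of_nonneg_left hcs (by positivity)
  linarith

namespace Slice

variable {μ κ R cv K : ℝ} {v u θ ux θx G Gx q qx : ℝ → ℝ}

lemma vpos (hK : 1 ≤ K) (S : Slice μ κ R K v u θ ux θx G Gx q qx) (x : ℝ) : 0 < v x :=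
  lt_of_lt_of_le (inv_pos.2 (by linarith)) (S.vlo x)

lemma inv_v_le (hK : 1 ≤ K) (S : Slice μ κ R K v u θ ux θx G Gx q qx) (x : ℝ) : (v x)⁻¹ ≤ K :=
  inv_le_of_inv_le₀ (by linarith) (S.vlo x)

lemma le_inv_v (hK : 1 ≤ K) (S : Slice μ κ R K v u θ ux θx G Gx q qx) (x : ℝ) : K⁻¹ ≤ (v x)⁻¹ :=
  inv_anti₀ (S.vpos hK x) (S.vhi x)

lemma cont_v (S : Slice μ κ R K v u θ ux θx G Gx q qx) : Continuous v := by
  have := S.sv.1.add_const 1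
  simpa using this

lemma cont_θ (S : Slice μ κ R K v u θ ux θx G Gx q qx) : Continuous θ := by
  have := S.sθ.1.add_const 1
  simpa using this

lemma bdd_u (S : Slice μ κ R K v u θ ux θx G Gx q qx) : ∃ C, ∀ x, |u x| ≤ C :=
  ⟨_, fun x => Real.abs_le_sqrt (sup_sq_le' S.du S.su S.sux x)⟩

lemma bdd_θ (S : Slice μ κ R K v u θ ux θx G Gx q qx) : ∃ C, ∀ x, |θ x - 1| ≤ C :=
  ⟨_, fun x => Real.abs_le_sqrt
    (sup_sq_le' (f := fun x => θ x - 1) (fun x => (S.dθ x).sub_const 1) S.sθ S.sθx x)⟩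

lemma bdd_G (S : Slice μ κ R K v u θ ux θx G Gx q qx) : ∃ C, ∀ x, |G x| ≤ C :=
  ⟨_, fun x => Real.abs_le_sqrt (sup_sq_le' S.dG S.sG S.sGx x)⟩

lemma sGu (S : Slice μ κ R K v u θ ux θx G Gx q qx) : Sq (fun x => (G x - R) * ux x) := by
  obtain ⟨C, hC⟩ := S.bdd_G
  refine S.sux.bdd_mul (C := C + |R|) (S.sG.1.sub continuous_const) fun x => ?_
  exact (abs_sub _ _).trans (add_le_add (hC x) le_rfl)

/-- The differential inequality behind the lower bound for the temperature. -/
lemma lower (hμ : 0 < μ) (hκ : 0 < κ) (hcv : 0 < cv) (hK : 1 ≤ K)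
    (S : Slice μ κ R K v u θ ux θx G Gx q qx) {k k' : ℝ} (hk0 : 0 < k) (hk1 : k < 1)
    (hk' : k' ≤ - (R ^ 2 * K / (4 * μ * cv)) * k ^ 2) :
    ∫ x, max (k - θ x) 0 ^ 2 * (k' - (qx x + (G x - R) * ux x) / cv) ≤ 0 := by
  have hcθ := S.cont_θ
  set p : ℝ → ℝ := fun x => max (k - θ x) 0 ^ 2 with hp
  set p' : ℝ → ℝ := fun x => 2 * max (k - θ x) 0 * (-θx x) with hp'
  have hcp : Continuous p := by fun_prop
  have hm0 : ∀ x, 0 ≤ max (k - θ x) 0 := fun x => le_max_right _ _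
  have hm1 : ∀ x, max (k - θ x) 0 ≤ 1 := fun x =>
    max_le (by linarith [S.θpos x]) zero_le_one
  have hmθ : ∀ x, max (k - θ x) 0 ^ 2 ≤ (θ x - 1) ^ 2 := fun x => by
    rcases le_total (k - θ x) 0 with h | h
    · rw [max_eq_right h]; nlinarith [sq_nonneg (θ x - 1)]
    · rw [max_eq_left h]; nlinarith
  have sp : Sq p := by
    refine Sq.of_le hcp S.sθ.2 fun x => ?_
    refine le_trans ?_ (hmθ x)
    have : p x ≤ 1 := by simp only [hp]; nlinarith [hm0 x, hm1 x]
    have : 0 ≤ p x := by positivity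
    change p x ^ 2 ≤ p x
    nlinarith
  have sp' : Sq p' := by
    have := S.sθx.bdd_mul (g := fun x => -2 * max (k - θ x) 0) (C := 2) (by fun_prop) (fun x => by
      rw [abs_mul, abs_of_nonneg (hm0 x), abs_neg, abs_two]
      linarith [hm1 x])
    exact this.congr fun x => by simp only [hp']; ring
  have dp : ∀ x, HasDerivAt p (p' x) x := fun x => by
    have h1 : HasDerivAt (fun x => k - θ x) (-θx x) x := (S.dθ x).const_sub k
    exact (hasDerivAt_max_sq (k - θ x)).comp x h1
  obtain ⟨iZ, hZ⟩ := ibp_zero dp S.dq sp sp' S.sq S.sqx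
  by_cases hF : Integrable (fun x => p x * (k' - (qx x + (G x - R) * ux x) / cv))
  swap
  · rw [integral_undef hF]
  have h0 : Integrable (fun _ : ℝ => (0 : ℝ)) := integrable_zero _ _ _
  have := integral_le_of_le_add hF h0 (iZ.const_mul (-1 / cv))
    (by rw [integral_const_mul, hZ, mul_zero]) (fun x => ?_)
  · simpa using this
  -- heat conduction has a sign, and the remaining terms form a square completed in `uₓ`
  have hvp := S.vpos hK x
  have h1 : p' x * q x ≤ 0 := by
    have : q x = κ * θx x / v x := by rw [← S.eq x]; field_simp
    rw [this]
    have h2 : p' x * (κ * θx x / v x) = -(2 * max (k - θ x) 0 * (κ * θx x ^ 2 / v x)) := by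
      simp only [hp']; ring
    rw [h2]
    have : 0 ≤ 2 * max (k - θ x) 0 * (κ * θx x ^ 2 / v x) := by
      have := hm0 x; positivity
    linarith
  have h2 : p x * (k' - (G x - R) * ux x / cv) ≤ 0 := by
    rcases le_total (k - θ x) 0 with h | h
    · simp [hp, max_eq_right h]
    · refine mul_nonpos_of_nonneg_of_nonpos (by positivity) ?_
      have hθ := S.θpos x
      have e1 : (G x - R) * ux x = (μ * ux x ^ 2 - R * θ x * ux x) / v x := by
        have := S.eG x
        rw [eq_div_iff hvp.ne']
        calc (G x - R) * ux x * v x = (v x * G x - R * v x) * ux x := by ring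
          _ = _ := by rw [this]; ring
      have e2 : -(R ^ 2 * K / (4 * μ)) * θ x ^ 2 ≤ (G x - R) * ux x := by
        rw [e1]
        have e3 : -(R ^ 2 / (4 * μ)) * θ x ^ 2 ≤ μ * ux x ^ 2 - R * θ x * ux x := by
          have : μ * ux x ^ 2 - R * θ x * ux x + (R ^ 2 / (4 * μ)) * θ x ^ 2
              = μ * (ux x - R * θ x / (2 * μ)) ^ 2 := by field_simp; ring
          have h3 : 0 ≤ μ * (ux x - R * θ x / (2 * μ)) ^ 2 := by positivity
          linarith
        have e4 : -(R ^ 2 / (4 * μ)) * θ x ^ 2 / v x ≤ (μ * ux x ^ 2 - R * θ x * ux x) / v x :=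
          div_le_div_of_nonneg_right e3 hvp.le
        have e5 : R ^ 2 / (4 * μ) * θ x ^ 2 * (v x)⁻¹ ≤ R ^ 2 / (4 * μ) * θ x ^ 2 * K :=
          mul_le_mul_of_nonneg_left (S.inv_v_le hK x) (by positivity)
        have e6 : -(R ^ 2 / (4 * μ)) * θ x ^ 2 / v x = -(R ^ 2 / (4 * μ) * θ x ^ 2 * (v x)⁻¹) := by
          rw [div_eq_mul_inv]; ring
        have e7 : -(R ^ 2 * K / (4 * μ)) * θ x ^ 2 = -(R ^ 2 / (4 * μ) * θ x ^ 2 * K) := by ring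
        linarith
      have e3 : (R ^ 2 * K / (4 * μ)) * θ x ^ 2 ≤ (R ^ 2 * K / (4 * μ)) * k ^ 2 := by
        have : θ x ^ 2 ≤ k ^ 2 := by nlinarith
        exact mul_le_mul_of_nonneg_left this (by positivity)
      have e4 : k' * cv ≤ -(R ^ 2 * K / (4 * μ)) * k ^ 2 := by
        have := mul_le_mul_of_nonneg_right hk' hcv.le
        refine this.trans (le_of_eq ?_)
        field_simp
      rw [sub_nonpos, le_div_iff₀ hcv]
      linarith
  have h3 : p x * (k' - (qx x + (G x - R) * ux x) / cv)
      = p x * (k' - (G x - R) * ux x / cv) + (-1 / cv) * (p x * qx x) := by ring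
  have h4 : (-1 / cv) * (p x * qx x + p' x * q x)
      = (-1 / cv) * (p x * qx x) + (-(p' x * q x)) / cv := by ring
  have h5 : 0 ≤ (-(p' x * q x)) / cv := div_nonneg (by linarith) hcv.le
  linarith

/-- The entropy identity. -/
lemma energy (hK : 1 ≤ K) (S : Slice μ κ R K v u θ ux θx G Gx q qx) {k : ℝ} (hk0 : 0 < k)
    (hk : ∀ x, k ≤ θ x) :
    ∫ x, (u x * Gx x + R * (1 - (v x)⁻¹) * ux x + (1 - (θ x)⁻¹) * (qx x + (G x - R) * ux x))
      = - ∫ x, (μ * ux x ^ 2 / (v x * θ x) + κ * θx x ^ 2 / (v x * θ x ^ 2)) := by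
  have hcv := S.cont_v
  have hcθ := S.cont_θ
  have hvp := S.vpos hK
  have hθi : ∀ x, (θ x)⁻¹ ≤ k⁻¹ := fun x => inv_anti₀ hk0 (hk x)
  have ci : Continuous fun x => (θ x)⁻¹ := hcθ.inv₀ fun x => (S.θpos x).ne'
  have civ : Continuous fun x => (v x)⁻¹ := hcv.inv₀ fun x => (hvp x).ne'
  set p : ℝ → ℝ := fun x => 1 - (θ x)⁻¹ with hp
  set p' : ℝ → ℝ := fun x => θx x / θ x ^ 2 with hp'
  have sp : Sq p := by
    have := S.sθ.bdd_mul ci (C := k⁻¹) fun x => by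
      rw [abs_of_pos (inv_pos.2 (S.θpos x))]; exact hθi x
    refine this.congr fun x => ?_
    have := (S.θpos x).ne'
    simp only [hp]; field_simp
  have sp' : Sq p' := by
    have := S.sθx.bdd_mul (g := fun x => (θ x)⁻¹ ^ 2) (by fun_prop) (C := k⁻¹ ^ 2) fun x => by
      have h0 : 0 < (θ x)⁻¹ := inv_pos.2 (S.θpos x)
      rw [abs_of_pos (by positivity)]
      exact pow_le_pow_left₀ h0.le (hθi x) 2
    refine this.congr fun x => ?_
    have := (S.θpos x).ne'
    simp only [hp']; field_simp
  have sr : Sq (fun x => R * (1 - (v x)⁻¹)) := by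
    have := (S.sv.bdd_mul civ (C := K) fun x => by
      rw [abs_of_pos (inv_pos.2 (hvp x))]; exact S.inv_v_le hK x).const_mul R
    refine this.congr fun x => ?_
    have := (hvp x).ne'
    field_simp
  have dp : ∀ x, HasDerivAt p (p' x) x := fun x => by
    have := ((S.dθ x).inv (S.θpos x).ne').const_sub 1
    convert! this using 1
    simp only [hp']; ring
  obtain ⟨i1, h1⟩ := ibp_zero S.du S.dG S.su S.sux S.sG S.sGx
  obtain ⟨i2, h2⟩ := ibp_zero dp S.dq sp sp' S.sq S.sqx
  have iF : Integrable (fun x => u x * Gx x + R * (1 - (v x)⁻¹) * ux x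
      + (1 - (θ x)⁻¹) * (qx x + (G x - R) * ux x)) :=
    ((S.su.mul_int S.sGx).add (sr.mul_int S.sux)).add (sp.mul_int (S.sqx.add S.sGu))
  rw [← integral_neg]
  refine integral_eq_of_eq_add iF (i1.add i2) ?_ fun x => ?_
  · simp only [Pi.add_apply]
    rw [integral_add i1 i2, h1, h2, add_zero]
  have hv0 := (hvp x).ne'
  have hθ0 := (S.θpos x).ne'
  have eG : G x = (μ * ux x - R * (θ x - v x)) / v x := by rw [← S.eG x]; field_simp
  have eq : q x = κ * θx x / v x := by rw [← S.eq x]; field_simp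
  simp only [hp, hp', Pi.add_apply]
  rw [eG, eq]
  field_simp
  ring

end Slice

/-! ### Dissipation estimates for the quartic functional and the fluxes -/

/-- The weight of `u⁴` in the functional controlling `θ - 1` in `L²`. -/
noncomputable def quarticWeight (μ κ cv : ℝ) : ℝ := (cv * μ + κ) ^ 2 / (cv * κ * μ)

/-- The density `w² / 2 + A u⁴ / 4 + u² / 2`, where `w = c_v (θ - 1) + u² / 2` is the total energy
relative to the far field. -/
noncomputable def quarticDensity (μ κ cv u θ : ℝ) : ℝ :=
  (cv * (θ - 1) + u ^ 2 / 2) ^ 2 / 2 + quarticWeight μ κ cv * u ^ 4 / 4 + u ^ 2 / 2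

lemma quarticWeight_pos {μ κ cv : ℝ} (hμ : 0 < μ) (hκ : 0 < κ) (hcv : 0 < cv) :
    0 < quarticWeight μ κ cv := by unfold quarticWeight; positivity

lemma quarticDensity_nonneg {μ κ cv : ℝ} (hμ : 0 < μ) (hκ : 0 < κ) (hcv : 0 < cv) (u θ : ℝ) :
    0 ≤ quarticDensity μ κ cv u θ := by
  have := quarticWeight_pos hμ hκ hcv
  unfold quarticDensity; positivity

lemma sq_le_quarticDensity {μ κ cv : ℝ} (hμ : 0 < μ) (hκ : 0 < κ) (hcv : 0 < cv) (u θ : ℝ) :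
    (θ - 1) ^ 2 ≤ (4 + 2 / quarticWeight μ κ cv) / cv ^ 2 * quarticDensity μ κ cv u θ := by
  have hA := quarticWeight_pos hμ hκ hcv
  unfold quarticDensity
  set A := quarticWeight μ κ cv
  set w := cv * (θ - 1) + u ^ 2 / 2 with hw
  have h1 : cv ^ 2 * (θ - 1) ^ 2 ≤ 2 * w ^ 2 + u ^ 4 / 2 := by
    have : cv * (θ - 1) = w - u ^ 2 / 2 := by rw [hw]; ring
    rw [← mul_pow, this]
    nlinarith [sq_nonneg (w + u ^ 2 / 2)]
  have h2 : 2 * w ^ 2 + u ^ 4 / 2 ≤ (4 + 2 / A) * (w ^ 2 / 2 + A * u ^ 4 / 4 + u ^ 2 / 2) := by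
    have e : (4 + 2 / A) * (w ^ 2 / 2 + A * u ^ 4 / 4 + u ^ 2 / 2)
        = 2 * w ^ 2 + u ^ 4 / 2 + (A * u ^ 4 + 2 * u ^ 2 + (w ^ 2 + u ^ 2) / A) := by
      field_simp; ring
    have : 0 ≤ A * u ^ 4 + 2 * u ^ 2 + (w ^ 2 + u ^ 2) / A := by positivity
    linarith
  rw [div_mul_eq_mul_div, le_div_iff₀ (by positivity)]
  linarith

set_option maxHeartbeats 1000000 in
/-- Pointwise form of the dissipation estimate for `quarticDensity`. -/
lemma quartic_pointwise {μ κ R cv K v u θ ux θx G q : ℝ} (hμ : 0 < μ) (hκ : 0 < κ)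
    (hcv : 0 < cv) (hK : 1 ≤ K) (hv : 0 < v) (hvi : v⁻¹ ≤ K) (hiv : K⁻¹ ≤ v⁻¹) (hvK : v ≤ K)
    (eG : v * G = μ * ux - R * (θ - v)) (eq : v * q = κ * θx) :
    -((cv * θx + u * ux) * (q + u * G - R * u)
        + 3 * quarticWeight μ κ cv * u ^ 2 * ux * G + ux * G)
      ≤ -(cv * κ / (2 * K)) * θx ^ 2 - μ / (2 * K) * ux ^ 2
        + K * ((R ^ 2 * cv / κ + R ^ 2 / (4 * μ) + quarticWeight μ κ cv * (9 * R ^ 2 / (4 * μ)))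
              * (u * θ) ^ 2
            + quarticWeight μ κ cv * (9 * R ^ 2 / (4 * μ)) * K ^ 2 * u ^ 2
            + R ^ 2 / μ * ((θ - 1) ^ 2 + (v - 1) ^ 2)) := by
  have hA := quarticWeight_pos hμ hκ hcv
  have hAe : quarticWeight μ κ cv * μ = (cv * μ + κ) ^ 2 / (cv * κ) := by
    unfold quarticWeight; field_simp
  set A := quarticWeight μ κ cv
  set X := -((cv * θx + u * ux) * (q + u * G - R * u) + 3 * A * u ^ 2 * ux * G + ux * G)
  set M := (R ^ 2 * cv / κ + R ^ 2 / (4 * μ) + A * (9 * R ^ 2 / (4 * μ))) * (u * θ) ^ 2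
            + A * (9 * R ^ 2 / (4 * μ)) * K ^ 2 * u ^ 2
            + R ^ 2 / μ * ((θ - 1) ^ 2 + (v - 1) ^ 2) with hM
  have hM0 : 0 ≤ M := by positivity
  set a := θx
  set b := u * ux with hb
  set c := u * θ with hc
  have e1 : v * X = -((cv * a + b) * (κ * a + μ * b - R * c))
      + A * (-3 * μ * b ^ 2 + 3 * R * b * c - 3 * R * b * (u * v))
      + (-μ * ux ^ 2 + R * ux * (θ - v)) := by
    have : v * X = -((cv * a + b) * (v * q + u * (v * G) - R * u * v)
        + 3 * A * u ^ 2 * ux * (v * G) + ux * (v * G)) := by simp only [X, b]; ring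
    rw [this, eG, eq, hb, hc]; ring
  have t1 : -((cv * a + b) * (κ * a + μ * b - R * c)) ≤ -(cv * κ / 2) * a ^ 2
      + A * μ * b ^ 2 + (R ^ 2 * cv / κ + R ^ 2 / (4 * μ)) * c ^ 2 := by
    have e : -(cv * κ / 2) * a ^ 2 + (cv * μ + κ) ^ 2 / (cv * κ) * b ^ 2
        + (R ^ 2 * cv / κ + R ^ 2 / (4 * μ)) * c ^ 2 + ((cv * a + b) * (κ * a + μ * b - R * c))
        = cv * κ / 4 * (a + 2 * (cv * μ + κ) / (cv * κ) * b) ^ 2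
          + cv * κ / 4 * (a - 2 * R / κ * c) ^ 2 + μ * (b - R * c / (2 * μ)) ^ 2 := by
      field_simp; ring
    have : 0 ≤ cv * κ / 4 * (a + 2 * (cv * μ + κ) / (cv * κ) * b) ^ 2
          + cv * κ / 4 * (a - 2 * R / κ * c) ^ 2 + μ * (b - R * c / (2 * μ)) ^ 2 := by positivity
    rw [hAe]; linarith
  have t2 : A * (-3 * μ * b ^ 2 + 3 * R * b * c - 3 * R * b * (u * v))
      ≤ A * (-μ * b ^ 2 + 9 * R ^ 2 / (4 * μ) * (c ^ 2 + K ^ 2 * u ^ 2)) := by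
    refine mul_le_mul_of_nonneg_left ?_ hA.le
    have e : -μ * b ^ 2 + 9 * R ^ 2 / (4 * μ) * (c ^ 2 + (u * v) ^ 2)
        - (-3 * μ * b ^ 2 + 3 * R * b * c - 3 * R * b * (u * v))
        = μ * (b - 3 * R / (2 * μ) * c) ^ 2 + μ * (b + 3 * R / (2 * μ) * (u * v)) ^ 2 := by
      field_simp; ring
    have h0 : 0 ≤ μ * (b - 3 * R / (2 * μ) * c) ^ 2 + μ * (b + 3 * R / (2 * μ) * (u * v)) ^ 2 := by
      positivity
    have h1 : (u * v) ^ 2 ≤ K ^ 2 * u ^ 2 := by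
      rw [mul_pow, mul_comm]
      exact mul_le_mul_of_nonneg_right (pow_le_pow_left₀ hv.le hvK 2) (sq_nonneg _)
    have h2 : 9 * R ^ 2 / (4 * μ) * (c ^ 2 + (u * v) ^ 2)
        ≤ 9 * R ^ 2 / (4 * μ) * (c ^ 2 + K ^ 2 * u ^ 2) :=
      mul_le_mul_of_nonneg_left (by linarith) (by positivity)
    linarith
  have t3 : -μ * ux ^ 2 + R * ux * (θ - v) ≤ -(μ / 2) * ux ^ 2
      + R ^ 2 / μ * ((θ - 1) ^ 2 + (v - 1) ^ 2) := by
    have e : -(μ / 2) * ux ^ 2 + R ^ 2 / (2 * μ) * (θ - v) ^ 2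
        - (-μ * ux ^ 2 + R * ux * (θ - v)) = μ / 2 * (ux - R / μ * (θ - v)) ^ 2 := by
      field_simp; ring
    have h0 : 0 ≤ μ / 2 * (ux - R / μ * (θ - v)) ^ 2 := by positivity
    have h1 : (θ - v) ^ 2 ≤ 2 * ((θ - 1) ^ 2 + (v - 1) ^ 2) := by
      nlinarith [sq_nonneg (θ - 1 + (v - 1))]
    have h2 : R ^ 2 / (2 * μ) * (θ - v) ^ 2
        ≤ R ^ 2 / (2 * μ) * (2 * ((θ - 1) ^ 2 + (v - 1) ^ 2)) :=
      mul_le_mul_of_nonneg_left h1 (by positivity)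
    have h3 : R ^ 2 / (2 * μ) * (2 * ((θ - 1) ^ 2 + (v - 1) ^ 2))
        = R ^ 2 / μ * ((θ - 1) ^ 2 + (v - 1) ^ 2) := by field_simp
    linarith
  have hvX : v * X ≤ -(cv * κ / 2 * a ^ 2 + μ / 2 * ux ^ 2) + M := by
    rw [e1, hM]; linarith
  have hX : X ≤ v⁻¹ * (-(cv * κ / 2 * a ^ 2 + μ / 2 * ux ^ 2) + M) := by
    rw [← div_eq_inv_mul, le_div_iff₀ hv, mul_comm]; exact hvX
  have h1 : K⁻¹ * (cv * κ / 2 * a ^ 2 + μ / 2 * ux ^ 2)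
      ≤ v⁻¹ * (cv * κ / 2 * a ^ 2 + μ / 2 * ux ^ 2) :=
    mul_le_mul_of_nonneg_right hiv (by positivity)
  have h2 : v⁻¹ * M ≤ K * M := mul_le_mul_of_nonneg_right hvi hM0
  have h3 : K⁻¹ * (cv * κ / 2 * a ^ 2 + μ / 2 * ux ^ 2)
      = cv * κ / (2 * K) * a ^ 2 + μ / (2 * K) * ux ^ 2 := by field_simp
  have h4 : v⁻¹ * (-(cv * κ / 2 * a ^ 2 + μ / 2 * ux ^ 2) + M)
      = - (v⁻¹ * (cv * κ / 2 * a ^ 2 + μ / 2 * ux ^ 2)) + v⁻¹ * M := by ring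
  rw [h4] at hX
  linarith

namespace Slice

variable {μ κ R cv K : ℝ}

set_option maxHeartbeats 1600000 in
/-- The rate of change of `∫ quarticDensity`, and its dissipation. -/
lemma quartic (hμ : 0 < μ) (hκ : 0 < κ) (hR : 0 < R) (hcv : 0 < cv) (hK : 1 ≤ K) {E : ℝ} (hE : 0 < E) :
    ∃ C > 0, ∃ c > 0, ∀ v u θ ux θx G Gx q qx : ℝ → ℝ, Slice μ κ R K v u θ ux θx G Gx q qx →
      (∫ x, u x ^ 2) ≤ E → (∫ x, (v x - 1) ^ 2) ≤ E →
      (∫ x, ((cv * (θ x - 1) + u x ^ 2 / 2) * (qx x + (G x - R) * ux x + u x * Gx x)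
        + quarticWeight μ κ cv * u x ^ 3 * Gx x + u x * Gx x))
        + c * ((∫ x, θx x ^ 2) + ∫ x, ux x ^ 2)
        ≤ C * (1 + ∫ x, quarticDensity μ κ cv (u x) (θ x)) := by
  have hK0 : 0 < K := by linarith
  have hA := quarticWeight_pos hμ hκ hcv
  set A := quarticWeight μ κ cv with hAdef
  set C₂ := R ^ 2 * cv / κ + R ^ 2 / (4 * μ) + A * (9 * R ^ 2 / (4 * μ)) with hC₂
  set C₃ := A * (9 * R ^ 2 / (4 * μ)) * K ^ 2 with hC₃
  have hC₂0 : 0 < C₂ := by positivity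
  have hC₃0 : 0 < C₃ := by positivity
  -- the parameter in the Sobolev inequality for `θ - 1`, small enough to absorb `∫ θₓ²`
  set ε := cv * κ / (8 * K ^ 2 * C₂ * E) with hε
  have hε0 : 0 < ε := by positivity
  set C₄ := (4 + 2 / A) / cv ^ 2 with hC₄
  have hC₄0 : 0 < C₄ := by positivity
  set B := K * (2 * C₂ * E + C₃ * E + R ^ 2 / μ * E) with hB
  set B' := K * (2 * C₂ * E * ε⁻¹ + R ^ 2 / μ) * C₄ with hB'
  have hB0 : 0 < B := by positivity
  have hB'0 : 0 < B' := by positivity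
  refine ⟨B + B', by positivity, min (cv * κ / (4 * K)) (μ / (2 * K)),
    lt_min (by positivity) (by positivity), ?_⟩
  intro v u θ ux θx G Gx q qx S hu hv
  have hcv' := S.cont_v
  have hcθ := S.cont_θ
  have hcu := S.su.1
  obtain ⟨Cu, hCu⟩ := S.bdd_u
  obtain ⟨Cθ, hCθ⟩ := S.bdd_θ
  have hCu0 : 0 ≤ Cu := (abs_nonneg _).trans (hCu 0)
  have su2 : Sq (fun x => u x ^ 2 / 2) :=
    ((S.su.bdd_mul hcu hCu).const_mul (1 / 2)).congr fun x => by ring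
  have su3 : Sq (fun x => u x ^ 3) :=
    (S.su.bdd_mul (g := fun x => u x ^ 2) (C := Cu ^ 2) (by fun_prop) fun x => by
      rw [abs_pow]; exact pow_le_pow_left₀ (abs_nonneg _) (hCu x) 2).congr fun x => by ring
  have suux : Sq (fun x => u x * ux x) := S.sux.bdd_mul hcu hCu
  have suGx : Sq (fun x => u x * Gx x) := S.sGx.bdd_mul hcu hCu
  have suG : Sq (fun x => u x * G x) := S.sG.bdd_mul hcu hCu
  have su2ux : Sq (fun x => 3 * u x ^ 2 * ux x) :=
    ((suux.bdd_mul hcu hCu).const_mul 3).congr fun x => by ring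
  have suxG : Sq (fun x => ux x * G x) := by
    refine (S.sGu.add (S.sux.const_mul R)).congr fun x => by ring
  have suθ : Sq (fun x => u x * θ x) := by
    refine ((S.su.bdd_mul S.sθ.1 hCθ).add S.su).congr fun x => by ring
  have sw : Sq (fun x => cv * (θ x - 1) + u x ^ 2 / 2) := (S.sθ.const_mul cv).add su2
  have sw' : Sq (fun x => cv * θx x + u x * ux x) := (S.sθx.const_mul cv).add suux
  have dw : ∀ x, HasDerivAt (fun x => cv * (θ x - 1) + u x ^ 2 / 2) (cv * θx x + u x * ux x) x := by
    intro x
    have h1 := ((S.dθ x).sub_const 1).const_mul cv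
    have h2 := ((S.du x).pow 2).div_const 2
    convert! h1.add h2 using 1
    simp; ring
  have sg : Sq (fun x => q x + u x * G x - R * u x) := (S.sq.add suG).sub (S.su.const_mul R)
  have sg' : Sq (fun x => qx x + (ux x * G x + u x * Gx x) - R * ux x) :=
    (S.sqx.add (suxG.add suGx)).sub (S.sux.const_mul R)
  have dg : ∀ x, HasDerivAt (fun x => q x + u x * G x - R * u x)
      (qx x + (ux x * G x + u x * Gx x) - R * ux x) x := fun x =>
    ((S.dq x).add ((S.du x).mul (S.dG x))).sub ((S.du x).const_mul R)
  have du3 : ∀ x, HasDerivAt (fun x => u x ^ 3) (3 * u x ^ 2 * ux x) x := fun x => by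
    convert! (S.du x).pow 3 using 1
  obtain ⟨i1, h1⟩ := ibp_zero dw dg sw sw' sg sg'
  obtain ⟨i2, h2⟩ := ibp_zero du3 S.dG su3 su2ux S.sG S.sGx
  obtain ⟨i3, h3⟩ := ibp_zero S.du S.dG S.su S.sux S.sG S.sGx
  have iF : Integrable (fun x => (cv * (θ x - 1) + u x ^ 2 / 2)
      * (qx x + (G x - R) * ux x + u x * Gx x) + A * u x ^ 3 * Gx x + u x * Gx x) :=
    ((sw.mul_int ((S.sqx.add S.sGu).add suGx)).add ((su3.const_mul A).mul_int S.sGx)).add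
      (S.su.mul_int S.sGx)
  have j1 := S.sθx.2.const_mul (-(cv * κ / (2 * K)))
  have j2 := S.sux.2.const_mul (μ / (2 * K))
  have j3 : Integrable (fun x => C₂ * (u x * θ x) ^ 2) := suθ.2.const_mul C₂
  have j4 := S.su.2.const_mul C₃
  have j5 : Integrable (fun x => R ^ 2 / μ * ((θ x - 1) ^ 2 + (v x - 1) ^ 2)) :=
    (S.sθ.2.add S.sv.2).const_mul (R ^ 2 / μ)
  have key := integral_le_of_le_add iF
    (H := fun x => -(cv * κ / (2 * K)) * θx x ^ 2 - μ / (2 * K) * ux x ^ 2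
        + K * (C₂ * (u x * θ x) ^ 2 + C₃ * u x ^ 2
            + R ^ 2 / μ * ((θ x - 1) ^ 2 + (v x - 1) ^ 2)))
    ((j1.sub j2).add (((j3.add j4).add j5).const_mul K))
    ((i1.add (i2.const_mul A)).add i3) ?_ fun x => ?_
  rotate_left
  · have hi : Integrable (fun x => ((cv * (θ x - 1) + u x ^ 2 / 2)
        * (qx x + (ux x * G x + u x * Gx x) - R * ux x)
        + (cv * θx x + u x * ux x) * (q x + u x * G x - R * u x))
        + A * (u x ^ 3 * Gx x + 3 * u x ^ 2 * ux x * G x)) := i1.add (i2.const_mul A)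
    simp only [Pi.add_apply]
    rw [integral_add hi i3, integral_add i1 (i2.const_mul A), integral_const_mul, h1, h2, h3]
    ring
  · have := quartic_pointwise (u := u x) hμ hκ hcv hK (S.vpos hK x) (S.inv_v_le hK x) (S.le_inv_v hK x)
      (S.vhi x) (S.eG x) (S.eq x)
    simp only [Pi.add_apply]
    rw [← hAdef, ← hC₂, ← hC₃] at this
    refine le_trans (le_of_eq ?_) (add_le_add_left this _)
    ring
  have hH : ∫ x, (-(cv * κ / (2 * K)) * θx x ^ 2 - μ / (2 * K) * ux x ^ 2
        + K * (C₂ * (u x * θ x) ^ 2 + C₃ * u x ^ 2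
            + R ^ 2 / μ * ((θ x - 1) ^ 2 + (v x - 1) ^ 2)))
      = -(cv * κ / (2 * K)) * (∫ x, θx x ^ 2) - μ / (2 * K) * (∫ x, ux x ^ 2)
        + K * (C₂ * (∫ x, (u x * θ x) ^ 2) + C₃ * (∫ x, u x ^ 2)
            + R ^ 2 / μ * ((∫ x, (θ x - 1) ^ 2) + ∫ x, (v x - 1) ^ 2)) := by
    have k1 : Integrable (fun x => -(cv * κ / (2 * K)) * θx x ^ 2 - μ / (2 * K) * ux x ^ 2) :=
      j1.sub j2
    have k34 : Integrable (fun x => C₂ * (u x * θ x) ^ 2 + C₃ * u x ^ 2) := j3.add j4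
    have k2 : Integrable (fun x => C₂ * (u x * θ x) ^ 2 + C₃ * u x ^ 2
            + R ^ 2 / μ * ((θ x - 1) ^ 2 + (v x - 1) ^ 2)) := k34.add j5
    rw [integral_add k1 (k2.const_mul K), integral_sub j1 j2, integral_const_mul,
      integral_const_mul, integral_const_mul, integral_add k34 j5, integral_add j3 j4,
      integral_const_mul, integral_const_mul, integral_const_mul, integral_add S.sθ.2 S.sv.2]
  rw [hH] at key
  set Nx := ∫ x, θx x ^ 2
  set Ux := ∫ x, ux x ^ 2
  set N := ∫ x, (θ x - 1) ^ 2
  set Y := ∫ x, quarticDensity μ κ cv (u x) (θ x)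
  have hNx : 0 ≤ Nx := integral_nonneg fun x => sq_nonneg _
  have hUx : 0 ≤ Ux := integral_nonneg fun x => sq_nonneg _
  have hN : 0 ≤ N := integral_nonneg fun x => sq_nonneg _
  have hY : 0 ≤ Y := integral_nonneg fun x => quarticDensity_nonneg hμ hκ hcv _ _
  have iY : Integrable (fun x => quarticDensity μ κ cv (u x) (θ x)) := by
    have su4 : Integrable (fun x => A * u x ^ 4 / 4) := by
      refine (su2.2.const_mul A).congr (Eventually.of_forall fun x => ?_)
      simp only; ring
    exact ((sw.2.div_const 2).add su4).add (S.su.2.div_const 2)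
  have hNY : N ≤ C₄ * Y := by
    rw [← integral_const_mul]
    exact integral_mono S.sθ.2 (iY.const_mul _) fun x => sq_le_quarticDensity hμ hκ hcv _ _
  have huθ : ∫ x, (u x * θ x) ^ 2 ≤ (2 + 2 * (ε * Nx + ε⁻¹ * N)) * E := by
    have hM : 0 ≤ 2 + 2 * (ε * Nx + ε⁻¹ * N) := by positivity
    refine le_trans ?_ (mul_le_mul_of_nonneg_left hu hM)
    rw [← integral_const_mul]
    refine integral_mono suθ.2 (S.su.2.const_mul _) fun x => ?_
    have hs := sup_sq_le (f := fun x => θ x - 1) (fun x => (S.dθ x).sub_const 1) S.sθ S.sθx hε0 x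
    have hq : θ x ^ 2 ≤ 2 + 2 * (θ x - 1) ^ 2 := by
      linarith only [sq_nonneg (θ x - 2), show θ x ^ 2 + (θ x - 2) ^ 2 = 2 + 2 * (θ x - 1) ^ 2 by ring]
    have : θ x ^ 2 ≤ 2 + 2 * (ε * Nx + ε⁻¹ * N) := hq.trans (by linarith only [hs])
    simp only [mul_pow]
    rw [mul_comm]
    exact mul_le_mul_of_nonneg_right this (sq_nonneg _)
  have a1 : K * (C₂ * (∫ x, (u x * θ x) ^ 2)) ≤ K * (C₂ * ((2 + 2 * (ε * Nx + ε⁻¹ * N)) * E)) := by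
    gcongr
  have a2 : K * (C₃ * ∫ x, u x ^ 2) ≤ K * (C₃ * E) := by gcongr
  have a3 : K * (R ^ 2 / μ * ∫ x, (v x - 1) ^ 2) ≤ K * (R ^ 2 / μ * E) := by gcongr
  have a4 : K * (C₂ * (2 * (ε * Nx) * E)) = cv * κ / (4 * K) * Nx := by
    rw [hε]; field_simp; ring
  have a5 : K * (2 * C₂ * E * ε⁻¹ + R ^ 2 / μ) * N ≤ B' * Y := by
    rw [hB', mul_assoc _ C₄ Y]; gcongr
  have a6 : cv * κ / (2 * K) * Nx = cv * κ / (4 * K) * Nx + cv * κ / (4 * K) * Nx := by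
    field_simp; ring
  have a7 : min (cv * κ / (4 * K)) (μ / (2 * K)) * Nx ≤ cv * κ / (4 * K) * Nx := by
    gcongr; exact min_le_left _ _
  have a8 : min (cv * κ / (4 * K)) (μ / (2 * K)) * Ux ≤ μ / (2 * K) * Ux := by
    gcongr; exact min_le_right _ _
  have a9 : 0 ≤ B * Y := by positivity
  have e1 : K * (C₂ * ((2 + 2 * (ε * Nx + ε⁻¹ * N)) * E)) = K * (2 * C₂ * E)
      + K * (C₂ * (2 * (ε * Nx) * E)) + K * (2 * C₂ * E * ε⁻¹) * N := by ring
  have e2 : B = K * (2 * C₂ * E) + K * (C₃ * E) + K * (R ^ 2 / μ * E) := by rw [hB]; ring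
  have e3 : K * (2 * C₂ * E * ε⁻¹ + R ^ 2 / μ) * N
      = K * (2 * C₂ * E * ε⁻¹) * N + K * (R ^ 2 / μ * N) := by ring
  linarith

set_option maxHeartbeats 800000 in
/-- The rate of change of `∫ v G² / 2`, for the effective viscous flux `G`. -/
lemma flux (hμ : 0 < μ) (hκ : 0 < κ) (hR : 0 < R) (hcv : 0 < cv) (hK : 1 ≤ K) :
    ∃ C > 0, ∀ v u θ ux θx G Gx q qx : ℝ → ℝ, Slice μ κ R K v u θ ux θx G Gx q qx →
      (∫ x, (-(μ * (Gx x * Gx x)) + G x * (-(R * ((qx x + (G x - R) * ux x) / cv - ux x)))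
          - G x ^ 2 * ux x / 2)) + μ / 2 * (∫ x, Gx x ^ 2)
        ≤ C * (1 + ∫ x, ux x ^ 2) * (∫ x, v x * G x ^ 2 / 2)
          + C * ((∫ x, θx x ^ 2) + ∫ x, ux x ^ 2) := by
  have hK0 : 0 < K := by linarith
  set d := R / cv + 1 / 2 with hd
  have hd0 : 0 < d := by positivity
  set δ := μ / (4 * d) with hδ
  have hδ0 : 0 < δ := by positivity
  set r := R * (R / cv + 1) / 2 with hr
  have hr0 : 0 < r := by positivity
  set c₁ := R ^ 2 / (cv ^ 2 * μ) * (κ ^ 2 * K ^ 2) with hc₁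
  have hc₁0 : 0 < c₁ := by positivity
  set c₂ := 2 * K * (r + μ / 4 + d * (4 * δ)⁻¹) with hc₂
  have hc₂0 : 0 < c₂ := by positivity
  refine ⟨c₁ + r + c₂, by positivity, ?_⟩
  intro v u θ ux θx G Gx q qx S
  have hcv' := S.cont_v
  have hcG := S.sG.1
  obtain ⟨CG, hCG⟩ := S.bdd_G
  have sG2 : Sq (fun x => G x ^ 2) := (S.sG.bdd_mul hcG hCG).congr fun x => by ring
  have sGux : Sq (fun x => G x * ux x) := S.sux.bdd_mul hcG hCG
  obtain ⟨iZ, hZ⟩ := ibp_zero S.dG S.dq S.sG S.sGx S.sq S.sqx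
  have cub := cubic_le S.dG S.sG S.sGx S.sux hδ0
  have iF : Integrable (fun x => -(μ * (Gx x * Gx x))
      + G x * (-(R * ((qx x + (G x - R) * ux x) / cv - ux x))) - G x ^ 2 * ux x / 2) := by
    have s1 : Sq (fun x => -(R * ((qx x + (G x - R) * ux x) / cv - ux x))) :=
      ((((S.sqx.add S.sGu).const_mul cv⁻¹).sub S.sux).const_mul (-R)).congr fun x => by ring
    exact (((S.sGx.mul_int S.sGx).const_mul μ).neg.add (S.sG.mul_int s1)).sub
      ((sG2.mul_int S.sux).div_const 2)
  have j1 := S.sGx.2.const_mul (-(3 * μ / 4))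
  have j2 := S.sθx.2.const_mul c₁
  have j3 : Integrable (fun x => r * (G x ^ 2 + ux x ^ 2)) := (S.sG.2.add S.sux.2).const_mul r
  have j4 := (sG2.mul_int S.sux).const_mul d
  have key := integral_le_of_le_add iF
    (H := fun x => -(3 * μ / 4) * Gx x ^ 2 + c₁ * θx x ^ 2 + r * (G x ^ 2 + ux x ^ 2)
      - d * (G x ^ 2 * ux x)) (((j1.add j2).add j3).sub j4) (iZ.const_mul (-(R / cv)))
    (by rw [integral_const_mul, hZ, mul_zero]) (fun x => by
      have hv := S.vpos hK x
      have e1 : q x ^ 2 ≤ κ ^ 2 * K ^ 2 * θx x ^ 2 := by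
        have : q x = κ * θx x * (v x)⁻¹ := by rw [← S.eq x]; field_simp
        rw [this, mul_pow, mul_pow]
        have := pow_le_pow_left₀ (inv_pos.2 hv).le (S.inv_v_le hK x) 2
        calc κ ^ 2 * θx x ^ 2 * (v x)⁻¹ ^ 2 ≤ κ ^ 2 * θx x ^ 2 * K ^ 2 := by gcongr
          _ = _ := by ring
      have e2 : R / cv * (Gx x * q x) ≤ μ / 4 * Gx x ^ 2 + R ^ 2 / (cv ^ 2 * μ) * q x ^ 2 := by
        have e : μ / 4 * Gx x ^ 2 + R ^ 2 / (cv ^ 2 * μ) * q x ^ 2 - R / cv * (Gx x * q x)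
            = μ / 4 * (Gx x - 2 * R / (cv * μ) * q x) ^ 2 := by field_simp; ring
        have : 0 ≤ μ / 4 * (Gx x - 2 * R / (cv * μ) * q x) ^ 2 := by positivity
        linarith
      have e3 : R ^ 2 / (cv ^ 2 * μ) * q x ^ 2 ≤ c₁ * θx x ^ 2 := by
        rw [hc₁, mul_assoc (R ^ 2 / (cv ^ 2 * μ))]; gcongr
      have e4 : R * (R / cv + 1) * (G x * ux x) ≤ r * (G x ^ 2 + ux x ^ 2) := by
        have : 0 ≤ r * (G x - ux x) ^ 2 := by positivity
        have h2 : R * (R / cv + 1) = 2 * r := by rw [hr]; ring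
        rw [h2]; linarith
      have e5 : -(μ * (Gx x * Gx x)) + G x * (-(R * ((qx x + (G x - R) * ux x) / cv - ux x)))
          - G x ^ 2 * ux x / 2 = -μ * Gx x ^ 2 + R * (R / cv + 1) * (G x * ux x)
            - d * (G x ^ 2 * ux x) + R / cv * (Gx x * q x)
            + -(R / cv) * (G x * qx x + Gx x * q x) := by
        rw [hd]; ring
      rw [e5]; linarith)
  have k12 : Integrable (fun x => -(3 * μ / 4) * Gx x ^ 2 + c₁ * θx x ^ 2) := j1.add j2
  have k123 : Integrable (fun x => -(3 * μ / 4) * Gx x ^ 2 + c₁ * θx x ^ 2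
    + r * (G x ^ 2 + ux x ^ 2)) := k12.add j3
  rw [integral_sub k123 j4, integral_add k12 j3, integral_add j1 j2, integral_const_mul,
    integral_const_mul, integral_const_mul, integral_const_mul, integral_add S.sG.2 S.sux.2] at key
  have sGV : ∫ x, G x ^ 2 ≤ 2 * K * ∫ x, v x * G x ^ 2 / 2 := by
    rw [← integral_const_mul]
    have iv : Integrable (fun x => v x * G x ^ 2 / 2) := by
      have s1 : Sq (fun x => v x * G x) := S.sG.bdd_mul hcv' (C := K) fun x => by
        rw [abs_of_pos (S.vpos hK x)]; exact S.vhi x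
      refine ((s1.mul_int S.sG).div_const 2).congr (Eventually.of_forall fun x => ?_)
      simp only; ring
    refine integral_mono S.sG.2 (iv.const_mul _) fun x => ?_
    have h1 : 1 ≤ K * v x := by
      have := mul_le_mul_of_nonneg_left (S.vlo x) hK0.le
      rwa [mul_inv_cancel₀ hK0.ne'] at this
    simp only
    nlinarith [sq_nonneg (G x)]
  set g := ∫ x, G x ^ 2
  set gx := ∫ x, Gx x ^ 2
  set Z := ∫ x, v x * G x ^ 2 / 2
  set Ux := ∫ x, ux x ^ 2
  set Nx := ∫ x, θx x ^ 2
  have hUx : 0 ≤ Ux := integral_nonneg fun x => sq_nonneg _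
  have hNx : 0 ≤ Nx := integral_nonneg fun x => sq_nonneg _
  have hg : 0 ≤ g := integral_nonneg fun x => sq_nonneg _
  have hgx : 0 ≤ gx := integral_nonneg fun x => sq_nonneg _
  have hZ0 : 0 ≤ Z := by nlinarith
  have b1 : -(d * ∫ x, G x ^ 2 * ux x) ≤ μ / 4 * (g + gx) + d * (4 * δ)⁻¹ * (g * Ux) := by
    have h1 := neg_abs_le (∫ x, G x ^ 2 * ux x)
    have h2 : d * |∫ x, G x ^ 2 * ux x| ≤ d * (δ * (g + gx) + (4 * δ)⁻¹ * (g * Ux)) := by gcongr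
    have h3 : d * δ = μ / 4 := by rw [hδ]; field_simp
    have h4 : d * (δ * (g + gx) + (4 * δ)⁻¹ * (g * Ux))
        = d * δ * (g + gx) + d * (4 * δ)⁻¹ * (g * Ux) := by ring
    rw [h4, h3] at h2
    nlinarith
  have b2 : (r + μ / 4) * g + d * (4 * δ)⁻¹ * (g * Ux) ≤ c₂ * (1 + Ux) * Z := by
    have h1 : (r + μ / 4) * g + d * (4 * δ)⁻¹ * (g * Ux)
        ≤ (r + μ / 4 + d * (4 * δ)⁻¹) * (1 + Ux) * g := by
      have e : (r + μ / 4 + d * (4 * δ)⁻¹) * (1 + Ux) * g = (r + μ / 4) * g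
        + d * (4 * δ)⁻¹ * (g * Ux) + (d * (4 * δ)⁻¹ * g + (r + μ / 4) * Ux * g) := by ring
      have : 0 ≤ d * (4 * δ)⁻¹ * g + (r + μ / 4) * Ux * g := by positivity
      linarith
    have h2 : (r + μ / 4 + d * (4 * δ)⁻¹) * (1 + Ux) * g
        ≤ (r + μ / 4 + d * (4 * δ)⁻¹) * (1 + Ux) * (2 * K * Z) := by gcongr
    have h3 : (r + μ / 4 + d * (4 * δ)⁻¹) * (1 + Ux) * (2 * K * Z) = c₂ * (1 + Ux) * Z := by
      rw [hc₂]; ring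
    linarith
  have b3 : 0 ≤ (c₁ + r) * (1 + Ux) * Z := by positivity
  have b4 : 0 ≤ (r + c₂) * Nx := by positivity
  have b5 : 0 ≤ (c₁ + c₂) * Ux := by positivity
  linarith

set_option maxHeartbeats 800000 in
/-- The rate of change of `∫ v q² / 2`, for the heat flux `q`. -/
lemma heat (hκ : 0 < κ) (hR : 0 < R) (hcv : 0 < cv) (hK : 1 ≤ K) :
    ∃ C > 0, ∀ v u θ ux θx G Gx q qx : ℝ → ℝ, Slice μ κ R K v u θ ux θx G Gx q qx →
      (∫ x, (-(κ * (qx x * ((qx x + (G x - R) * ux x) / cv))) + q x * 0 - q x ^ 2 * ux x / 2))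
        ≤ C * (1 + ∫ x, ux x ^ 2) * (∫ x, v x * q x ^ 2 / 2)
          + C * (1 + (∫ x, G x ^ 2) + ∫ x, Gx x ^ 2) * ∫ x, ux x ^ 2 := by
  have hK0 : 0 < K := by linarith
  set δ := κ / cv with hδ
  have hδ0 : 0 < δ := by positivity
  set c₁ := δ * (R ^ 2 + 1) with hc₁
  have hc₁0 : 0 < c₁ := by positivity
  set c₂ := 2 * K * (δ / 2 + (4 * δ)⁻¹ / 2) with hc₂
  have hc₂0 : 0 < c₂ := by positivity
  refine ⟨c₁ + c₂, by positivity, ?_⟩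
  intro v u θ ux θx G Gx q qx S
  have hcv' := S.cont_v
  have hcG := S.sG.1
  have hcq := S.sq.1
  have hbq : ∀ x, |q x| ≤ √((∫ x, q x ^ 2) + ∫ x, qx x ^ 2) :=
    fun x => Real.abs_le_sqrt (sup_sq_le' S.dq S.sq S.sqx x)
  have sq2 : Sq (fun x => q x ^ 2) := (S.sq.bdd_mul hcq hbq).congr fun x => by ring
  have cub := cubic_le S.dq S.sq S.sqx S.sux hδ0
  have iF : Integrable (fun x => -(κ * (qx x * ((qx x + (G x - R) * ux x) / cv))) + q x * 0
      - q x ^ 2 * ux x / 2) := by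
    have s1 : Sq (fun x => (qx x + (G x - R) * ux x) / cv) :=
      ((S.sqx.add S.sGu).const_mul cv⁻¹).congr fun x => by ring
    have h0 : Integrable (fun x => q x * (0 : ℝ)) := by simp
    exact (((S.sqx.mul_int s1).const_mul κ).neg.add h0).sub ((sq2.mul_int S.sux).div_const 2)
  have hsG := sup_sq_le' S.dG S.sG S.sGx
  have sqV : ∫ x, q x ^ 2 ≤ 2 * K * ∫ x, v x * q x ^ 2 / 2 := by
    rw [← integral_const_mul]
    have iv : Integrable (fun x => v x * q x ^ 2 / 2) := by
      have s1 : Sq (fun x => v x * q x) := S.sq.bdd_mul hcv' (C := K) fun x => by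
        rw [abs_of_pos (S.vpos hK x)]; exact S.vhi x
      refine ((s1.mul_int S.sq).div_const 2).congr (Eventually.of_forall fun x => ?_)
      simp only; ring
    refine integral_mono S.sq.2 (iv.const_mul _) fun x => ?_
    have h1 : 1 ≤ K * v x := by
      have := mul_le_mul_of_nonneg_left (S.vlo x) hK0.le
      rwa [mul_inv_cancel₀ hK0.ne'] at this
    simp only
    nlinarith [sq_nonneg (q x)]
  set g := ∫ x, G x ^ 2
  set gx := ∫ x, Gx x ^ 2
  set Q := ∫ x, v x * q x ^ 2 / 2
  have hg : 0 ≤ g := integral_nonneg fun x => sq_nonneg _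
  have hgx : 0 ≤ gx := integral_nonneg fun x => sq_nonneg _
  set W := δ / 2 * (2 * R ^ 2 + 2 * (g + gx)) with hW
  have j1 := S.sqx.2.const_mul (-(δ / 2))
  have j2 := S.sux.2.const_mul W
  have j4 := (sq2.mul_int S.sux).const_mul (1 / 2)
  have k12 : Integrable (fun x => -(δ / 2) * qx x ^ 2 + W * ux x ^ 2) := j1.add j2
  have h0 : Integrable (fun _ : ℝ => (0 : ℝ)) := integrable_zero _ _ _
  have key := integral_le_of_le_add iF
    (H := fun x => -(δ / 2) * qx x ^ 2 + W * ux x ^ 2 - 1 / 2 * (q x ^ 2 * ux x))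
    (k12.sub j4) h0 (by simp) (fun x => by
      have e1 : (G x - R) ^ 2 ≤ 2 * R ^ 2 + 2 * (g + gx) := by
        have := hsG x
        nlinarith [sq_nonneg (G x + R)]
      have e2 : δ / 2 * ((G x - R) ^ 2 * ux x ^ 2) ≤ W * ux x ^ 2 := by
        rw [hW, mul_assoc]; gcongr
      have e3 : -(δ * (qx x * (qx x + (G x - R) * ux x)))
          ≤ -(δ / 2) * qx x ^ 2 + δ / 2 * ((G x - R) ^ 2 * ux x ^ 2) := by
        have e : -(δ / 2) * qx x ^ 2 + δ / 2 * ((G x - R) ^ 2 * ux x ^ 2)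
            + (δ * (qx x * (qx x + (G x - R) * ux x)))
            = δ / 2 * (qx x + (G x - R) * ux x) ^ 2 := by ring
        have : 0 ≤ δ / 2 * (qx x + (G x - R) * ux x) ^ 2 := by positivity
        linarith
      have e4 : κ * (qx x * ((qx x + (G x - R) * ux x) / cv))
          = δ * (qx x * (qx x + (G x - R) * ux x)) := by rw [hδ]; ring
      rw [e4]; linarith)
  rw [integral_sub k12 j4, integral_add j1 j2, integral_const_mul,
    integral_const_mul, integral_const_mul] at key
  set Ux := ∫ x, ux x ^ 2
  set Nq := ∫ x, q x ^ 2
  set Nqx := ∫ x, qx x ^ 2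
  have hUx : 0 ≤ Ux := integral_nonneg fun x => sq_nonneg _
  have hNq : 0 ≤ Nq := integral_nonneg fun x => sq_nonneg _
  have hNqx : 0 ≤ Nqx := integral_nonneg fun x => sq_nonneg _
  have hQ0 : 0 ≤ Q := by nlinarith
  have b1 := neg_abs_le (∫ x, q x ^ 2 * ux x)
  have b2 : δ / 2 * Nq + (4 * δ)⁻¹ / 2 * (Nq * Ux) ≤ c₂ * (1 + Ux) * Q := by
    have h1 : δ / 2 * Nq + (4 * δ)⁻¹ / 2 * (Nq * Ux) ≤ (δ / 2 + (4 * δ)⁻¹ / 2) * (1 + Ux) * Nq := by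
      have e : (δ / 2 + (4 * δ)⁻¹ / 2) * (1 + Ux) * Nq = δ / 2 * Nq + (4 * δ)⁻¹ / 2 * (Nq * Ux)
        + ((4 * δ)⁻¹ / 2 * Nq + δ / 2 * Ux * Nq) := by ring
      have : 0 ≤ (4 * δ)⁻¹ / 2 * Nq + δ / 2 * Ux * Nq := by positivity
      linarith
    have h2 : (δ / 2 + (4 * δ)⁻¹ / 2) * (1 + Ux) * Nq
        ≤ (δ / 2 + (4 * δ)⁻¹ / 2) * (1 + Ux) * (2 * K * Q) := by gcongr
    have h3 : (δ / 2 + (4 * δ)⁻¹ / 2) * (1 + Ux) * (2 * K * Q) = c₂ * (1 + Ux) * Q := by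
      rw [hc₂]; ring
    linarith
  have b3 : 0 ≤ c₁ * (1 + Ux) * Q := by positivity
  have b4 : 0 ≤ c₂ * (1 + g + gx) * Ux := by positivity
  have b5 : W * Ux ≤ c₁ * (1 + g + gx) * Ux := by
    have : W ≤ c₁ * (1 + g + gx) := by
      rw [hW, hc₁]
      have : 0 ≤ δ * (1 + R ^ 2 * (g + gx)) := by positivity
      linarith
    gcongr
  linarith

end Slice

/-! ### Integration in time -/

/-- The measure `dx dt` on the strip `ℝ × [0, T]`. -/
noncomputable abbrev strip (T : ℝ) : Measure (ℝ × ℝ) :=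
  (volume : Measure ℝ).prod (volume.restrict (Icc 0 T))

lemma strip_mono {s t T : ℝ} (hs : 0 ≤ s) (ht : t ≤ T) :
    (volume : Measure ℝ).prod (volume.restrict (Ioc s t)) ≤ strip T := by
  have h1 : (volume : Measure ℝ) = volume.restrict univ := Measure.restrict_univ.symm
  have h2 : Ioc s t ⊆ Icc 0 T := fun x hx => ⟨hs.trans hx.1.le, hx.2.trans ht⟩
  unfold strip
  rw [h1, Measure.prod_restrict, Measure.prod_restrict]
  refine Measure.restrict_mono (Set.prod_mono le_rfl ?_) le_rfl
  exact h2

/-- Conservation form: if `Φ_t = Ψ` pointwise and `Ψ ∈ L¹(dx dt)`, the spatial integral of `Φ`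
is an indefinite integral in time. Only differentiability of `Φ` in time is required. -/
lemma time_ftc {Φ Ψ : ℝ → ℝ → ℝ} {T s t : ℝ} (hs : 0 ≤ s) (hst : s ≤ t) (ht : t ≤ T)
    (hd : ∀ x, ∀ τ ∈ Icc 0 T, HasDerivAt (Φ x) (Ψ x τ) τ)
    (hΨ : Integrable (Function.uncurry Ψ) (strip T)) (h0 : Integrable (fun x => Φ x s)) :
    Integrable (fun x => Φ x t) ∧
      ∫ x, Φ x t = (∫ x, Φ x s) + ∫ τ in s..t, ∫ x, Ψ x τ := by
  have hswap := hΨ.mono_measure (strip_mono hs ht)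
  have h1 : ∀ᵐ x, Φ x t = Φ x s + ∫ τ in s..t, Ψ x τ := by
    filter_upwards [hswap.prod_right_ae] with x hx
    rw [intervalIntegral.integral_eq_sub_of_hasDerivAt (f := Φ x)]
    · ring
    · intro τ hτ
      rw [uIcc_of_le hst] at hτ
      exact hd x τ ⟨hs.trans hτ.1, hτ.2.trans ht⟩
    · rw [intervalIntegrable_iff_integrableOn_Ioc_of_le hst]
      exact hx
  have h2 : Integrable (fun x => ∫ τ in s..t, Ψ x τ) := by
    simp only [intervalIntegral.integral_of_le hst]
    exact hswap.integral_prod_left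
  refine ⟨(h0.add h2).congr (h1.mono fun x hx => hx.symm), ?_⟩
  rw [integral_congr_ae h1, integral_add h0 h2]
  congr 1
  simp only [intervalIntegral.integral_of_le hst]
  exact integral_integral_swap hswap

/-- Gronwall's inequality in integrated form, with an integrable coefficient. -/
lemma gronwall_integral {Y J a b d : ℝ → ℝ} {s T A B : ℝ} (hsT : s ≤ T)
    (iJ : IntegrableOn J (Icc s T)) (ia : IntegrableOn a (Icc s T)) (ib : IntegrableOn b (Icc s T))
    (id : IntegrableOn d (Icc s T))
    (hY : ∀ t ∈ Icc s T, Y t = Y s + ∫ τ in s..t, J τ) (Y0 : ∀ t ∈ Icc s T, 0 ≤ Y t)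
    (a0 : ∀ t, 0 ≤ a t) (b0 : ∀ t, 0 ≤ b t) (d0 : ∀ t, 0 ≤ d t)
    (hJ : ∀ᵐ t ∂volume.restrict (Icc s T), J t + d t ≤ a t * Y t + b t)
    (hA : ∫ τ in s..T, a τ ≤ A) (hB : ∫ τ in s..T, b τ ≤ B) :
    ∀ t ∈ Icc s T, Y t + (∫ τ in s..t, d τ) ≤ (Y s + B) * 2 ^ ⌈2 * A⌉₊ := by
  have ii : ∀ {f : ℝ → ℝ}, IntegrableOn f (Icc s T) → ∀ {p q : ℝ}, p ∈ Icc s T → q ∈ Icc s T →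
      IntervalIntegrable f volume p q := fun hf p q hp hq =>
    (hf.mono_set (uIcc_subset_Icc hp hq)).intervalIntegrable
  have hs : s ∈ Icc s T := ⟨le_rfl, hsT⟩
  have cY : ContinuousOn Y (Icc s T) := by
    have h1 : ContinuousOn (fun t => Y s + ∫ τ in s..t, J τ) (Icc s T) :=
      continuousOn_const.add (intervalIntegral.continuousOn_primitive_interval'
        (ii iJ hs ⟨hsT, le_rfl⟩) (by simp) |>.mono (by rw [uIcc_of_le hsT]))
    exact h1.congr hY
  have iaY : IntegrableOn (fun t => a t * Y t) (Icc s T) := by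
    exact ia.mul_continuousOn cY isCompact_Icc
  have hB0 : ∀ t ∈ Icc s T, ∫ τ in s..t, b τ ≤ B := fun t ht => by
    refine le_trans ?_ hB
    rw [← intervalIntegral.integral_add_adjacent_intervals (ii ib hs ht) (ii ib ht ⟨hsT, le_rfl⟩)]
    have := intervalIntegral.integral_nonneg (μ := volume) ht.2 fun τ _ => b0 τ
    linarith
  have hA0 : ∀ t ∈ Icc s T, ∫ τ in s..t, a τ ≤ A := fun t ht => by
    refine le_trans ?_ hA
    rw [← intervalIntegral.integral_add_adjacent_intervals (ii ia hs ht) (ii ia ht ⟨hsT, le_rfl⟩)]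
    have := intervalIntegral.integral_nonneg (μ := volume) ht.2 fun τ _ => a0 τ
    linarith
  set F : ℝ → ℝ := fun t => Y s + B + ∫ τ in s..t, a τ * Y τ with hF
  have h1 : ∀ t ∈ Icc s T, Y t + (∫ τ in s..t, d τ) ≤ F t := fun t ht => by
    have e : Y t + (∫ τ in s..t, d τ) = Y s + ∫ τ in s..t, (J τ + d τ) := by
      rw [intervalIntegral.integral_add (ii iJ hs ht) (ii id hs ht), hY t ht]; ring
    have h2 : ∫ τ in s..t, (J τ + d τ) ≤ ∫ τ in s..t, (a τ * Y τ + b τ) := by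
      refine intervalIntegral.integral_mono_ae_restrict ht.1 ((ii iJ hs ht).add (ii id hs ht))
        ((ii iaY hs ht).add (ii ib hs ht)) ?_
      exact ae_restrict_of_ae_restrict_of_subset (Icc_subset_Icc le_rfl ht.2) hJ
    rw [intervalIntegral.integral_add (ii iaY hs ht) (ii ib hs ht)] at h2
    have := hB0 t ht
    simp only [hF]; linarith
  have hYF : ∀ t ∈ Icc s T, Y t ≤ F t := fun t ht => by
    have := intervalIntegral.integral_nonneg (μ := volume) ht.1 fun τ _ => d0 τ
    linarith [h1 t ht]
  have hFF : ∀ p ∈ Icc s T, ∀ q ∈ Icc s T, p ≤ q → F q = F p + ∫ τ in p..q, a τ * Y τ :=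
    fun p hp q hq hpq => by
      simp only [hF]
      rw [← intervalIntegral.integral_add_adjacent_intervals (ii iaY hs hp) (ii iaY hp hq)]
      ring
  have hFm : ∀ p ∈ Icc s T, ∀ q ∈ Icc s T, p ≤ q → F p ≤ F q := fun p hp q hq hpq => by
    rw [hFF p hp q hq hpq]
    have : 0 ≤ ∫ τ in p..q, a τ * Y τ := intervalIntegral.integral_nonneg hpq fun τ hτ =>
      mul_nonneg (a0 τ) (Y0 τ ⟨hp.1.trans hτ.1, hτ.2.trans hq.2⟩)
    linarith
  -- the main point: `F` at most doubles while `∫ a` grows by at most `1 / 2`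
  have hdouble : ∀ p ∈ Icc s T, ∀ q ∈ Icc s T, p ≤ q → ∫ τ in p..q, a τ ≤ 1 / 2 →
      F q ≤ 2 * F p := fun p hp q hq hpq ha => by
    have h2 : ∫ τ in p..q, a τ * Y τ ≤ ∫ τ in p..q, a τ * F q := by
      refine intervalIntegral.integral_mono_on hpq (ii iaY hp hq) ((ii ia hp hq).mul_const _) ?_
      intro τ hτ
      have hτ' : τ ∈ Icc s T := ⟨hp.1.trans hτ.1, hτ.2.trans hq.2⟩
      exact mul_le_mul_of_nonneg_left ((hYF τ hτ').trans (hFm τ hτ' q hq hτ.2)) (a0 τ)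
    rw [intervalIntegral.integral_mul_const] at h2
    have h3 := hFF p hp q hq hpq
    have h4 : 0 ≤ F q := (Y0 q hq).trans (hYF q hq)
    nlinarith
  have ind : ∀ n : ℕ, ∀ t ∈ Icc s T, ∫ τ in s..t, a τ ≤ n / 2 → F t ≤ (Y s + B) * 2 ^ n := by
    intro n
    induction n with
    | zero =>
      intro t ht ha
      have h2 : ∫ τ in s..t, a τ * Y τ ≤ ∫ τ in s..t, a τ * F t := by
        refine intervalIntegral.integral_mono_on ht.1 (ii iaY hs ht) ((ii ia hs ht).mul_const _) ?_
        intro τ hτ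
        have hτ' : τ ∈ Icc s T := ⟨hτ.1, hτ.2.trans ht.2⟩
        exact mul_le_mul_of_nonneg_left ((hYF τ hτ').trans (hFm τ hτ' t ht hτ.2)) (a0 τ)
      rw [intervalIntegral.integral_mul_const] at h2
      have h3 := hFF s hs t ht ht.1
      have h5 : F s = Y s + B := by simp [hF]
      have h4 : 0 ≤ F t := (Y0 t ht).trans (hYF t ht)
      simp at ha
      have := mul_nonneg_of_nonpos_of_nonpos ha (neg_nonpos.2 h4)
      simp only [pow_zero, mul_one]
      nlinarith
    | succ n ih =>
      intro t ht ha
      have ca : ContinuousOn (fun t => ∫ τ in s..t, a τ) (Icc s t) :=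
        (intervalIntegral.continuousOn_primitive_interval'
          (ii ia hs ht) (by simp) |>.mono (by rw [uIcc_of_le ht.1]))
      rcases le_total (∫ τ in s..t, a τ) (n / 2 : ℝ) with h | h
      · refine (ih t ht h).trans ?_
        have : 0 ≤ Y s + B := by
          have h6 := intervalIntegral.integral_nonneg (μ := volume) hsT fun τ _ => b0 τ
          linarith [Y0 s hs]
        gcongr <;> norm_num
      · have h0 : (n / 2 : ℝ) ∈ Icc (∫ τ in s..s, a τ) (∫ τ in s..t, a τ) :=
          ⟨by simp; positivity, h⟩
        obtain ⟨p, hp, hpa⟩ := intermediate_value_Icc ht.1 ca h0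
        simp only at hpa
        have hp' : p ∈ Icc s T := ⟨hp.1, hp.2.trans ht.2⟩
        have h7 := hdouble p hp' t ht hp.2 (by
          have := intervalIntegral.integral_add_adjacent_intervals (ii ia hs hp') (ii ia hp' ht)
          push_cast at ha
          linarith)
        have h8 := ih p hp' hpa.le
        rw [pow_succ]
        linarith
  intro t ht
  refine (h1 t ht).trans (ind _ t ht ?_)
  have := Nat.le_ceil (2 * A)
  linarith [hA0 t ht]

/-! ### Square integrability on strips -/

/-- Joint measurability on `t ≥ 0`: the extension of `F`, constant in time for `t ≤ 0`, is
measurable. -/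
def Meas (F : ℝ → ℝ → ℝ) : Prop := Measurable (Function.uncurry fun x t => F x (max t 0))

/-- `F ∈ L²(ℝ × [0, T])`, with joint measurability in the sense of `Meas`. -/
def StripL2 (T : ℝ) (F : ℝ → ℝ → ℝ) : Prop :=
  Meas F ∧ Integrable (Function.uncurry fun x t => F x t ^ 2) (strip T)

lemma ae_strip {T : ℝ} {p : ℝ × ℝ → Prop} (h : ∀ x, ∀ t ∈ Icc 0 T, p (x, t)) :
    ∀ᵐ z ∂strip T, p z := by
  have h1 : (volume : Measure ℝ) = volume.restrict univ := Measure.restrict_univ.symm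
  unfold strip
  rw [h1, Measure.prod_restrict]
  exact (ae_restrict_iff' (MeasurableSet.univ.prod measurableSet_Icc)).2
    (Eventually.of_forall fun z hz => h z.1 z.2 hz.2)

lemma strip_int_add {T : ℝ} {F H : ℝ → ℝ → ℝ} (hF : Integrable (Function.uncurry F) (strip T))
    (hH : Integrable (Function.uncurry H) (strip T)) :
    Integrable (Function.uncurry fun x t => F x t + H x t) (strip T) :=
  (hF.add hH).congr (Eventually.of_forall fun _ => rfl)

lemma strip_int_sub {T : ℝ} {F H : ℝ → ℝ → ℝ} (hF : Integrable (Function.uncurry F) (strip T))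
    (hH : Integrable (Function.uncurry H) (strip T)) :
    Integrable (Function.uncurry fun x t => F x t - H x t) (strip T) :=
  (hF.sub hH).congr (Eventually.of_forall fun _ => rfl)

lemma strip_int_const_mul {T : ℝ} {F : ℝ → ℝ → ℝ} (hF : Integrable (Function.uncurry F) (strip T))
    (c : ℝ) : Integrable (Function.uncurry fun x t => c * F x t) (strip T) :=
  (hF.const_mul c).congr (Eventually.of_forall fun _ => rfl)

namespace Meas

variable {F H : ℝ → ℝ → ℝ}

lemma aesm (hF : Meas F) (T : ℝ) : AEStronglyMeasurable (Function.uncurry F) (strip T) := by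
  refine (Measurable.aestronglyMeasurable (hF)).congr (ae_strip fun x t ht => ?_)
  simp [Function.uncurry, max_eq_left ht.1]

lemma add (hF : Meas F) (hH : Meas H) : Meas fun x t => F x t + H x t := Measurable.add hF hH
lemma sub (hF : Meas F) (hH : Meas H) : Meas fun x t => F x t - H x t := Measurable.sub hF hH
lemma mul (hF : Meas F) (hH : Meas H) : Meas fun x t => F x t * H x t := Measurable.mul hF hH
lemma div (hF : Meas F) (hH : Meas H) : Meas fun x t => F x t / H x t := Measurable.div hF hH
lemma pow (hF : Meas F) (n : ℕ) : Meas fun x t => F x t ^ n := Measurable.pow_const hF n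
lemma const (c : ℝ) : Meas fun _ _ => c := measurable_const
lemma comp (hF : Meas F) {g : ℝ → ℝ} (hg : Measurable g) : Meas fun x t => g (F x t) :=
  hg.comp hF
lemma neg (hF : Meas F) : Meas fun x t => -F x t := Measurable.neg hF
lemma shift (hF : Meas F) (h : ℝ) : Meas fun x t => F (x + h) t :=
  Measurable.comp hF (g := Function.uncurry fun x t => F x (max t 0))
    (f := fun z : ℝ × ℝ => (z.1 + h, z.2)) (by fun_prop)
lemma time {k : ℝ → ℝ} (hk : Measurable fun t => k (max t 0)) : Meas fun _ t => k t :=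
  hk.comp measurable_snd
lemma congr (hF : Meas F) (h : ∀ x t, 0 ≤ t → F x t = H x t) : Meas H := by
  have : (Function.uncurry fun x t => F x (max t 0)) = Function.uncurry fun x t => H x (max t 0) := by
    ext z; exact h _ _ (le_max_right _ _)
  unfold Meas; rw [← this]; exact hF

/-- The spatial derivative is a limit of difference quotients, hence jointly measurable. -/
lemma deriv_x (hF : Meas F) {F' : ℝ → ℝ → ℝ}
    (hd : ∀ t, 0 ≤ t → ∀ x, HasDerivAt (fun y => F y t) (F' x t) x) : Meas F' := by
  refine measurable_of_tendsto_metrizable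
    (f := fun (n : ℕ) (z : ℝ × ℝ) => Function.uncurry (fun x t =>
      ((n : ℝ) + 1) * (F (x + 1 / ((n : ℝ) + 1)) (max t 0) - F x (max t 0))) z)
    (fun n => (((hF.shift (1 / ((n : ℝ) + 1))).sub hF).const_mul ((n : ℝ) + 1) : Measurable _)) ?_
  rw [tendsto_pi_nhds]
  rintro ⟨x, t⟩
  have h1 := hasDerivAt_iff_tendsto_slope_zero.1 (hd (max t 0) (le_max_right _ _) x)
  have h2 : Tendsto (fun n : ℕ => 1 / ((n : ℝ) + 1)) atTop (nhdsWithin 0 {0}ᶜ) := by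
    refine tendsto_nhdsWithin_iff.2 ⟨tendsto_one_div_add_atTop_nhds_zero_nat, ?_⟩
    refine Eventually.of_forall fun n => ?_
    simp only [mem_compl_iff, mem_singleton_iff]
    positivity
  refine (h1.comp h2).congr fun n => ?_
  simp [Function.uncurry]

/-- Carathéodory functions are jointly measurable. -/
lemma of_cont (hx : ∀ t, 0 ≤ t → Continuous fun x => F x t)
    (ht : ∀ x, ∀ t, 0 ≤ t → ContinuousAt (F x) t) : Meas F := by
  have h1 : Measurable (Function.uncurry fun t x => F x (max t 0)) := by
    refine measurable_uncurry_of_continuous_of_measurable (ι := ℝ)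
      (u := fun x t => F x (max t 0)) ?_ ?_ |>.comp measurable_swap
    · intro t
      exact hx _ (le_max_right _ _)
    · intro x
      refine Continuous.measurable (continuous_iff_continuousAt.2 fun t => ?_)
      have := (ht x (max t 0) (le_max_right _ _))
      exact ContinuousAt.comp (f := fun t => max t 0) this (by fun_prop)
  exact h1.comp measurable_swap

end Meas

namespace StripL2

variable {T : ℝ} {F H : ℝ → ℝ → ℝ}

lemma of_le (hF : Meas F) {b : ℝ → ℝ → ℝ} (hb : Integrable (Function.uncurry b) (strip T))
    (h : ∀ x, ∀ t ∈ Icc 0 T, F x t ^ 2 ≤ b x t) : StripL2 T F := by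
  refine ⟨hF, hb.mono' ((hF.pow 2).aesm T) (ae_strip fun x t ht => ?_)⟩
  simp only [Function.uncurry, Real.norm_eq_abs]
  rw [abs_of_nonneg (sq_nonneg _)]
  exact h x t ht

lemma mul_int (hF : StripL2 T F) (hH : StripL2 T H) :
    Integrable (Function.uncurry fun x t => F x t * H x t) (strip T) := by
  refine (hF.2.add hH.2).mono' ((hF.1.mul hH.1).aesm T) (ae_strip fun x t ht => ?_)
  simp only [Function.uncurry, Pi.add_apply, Real.norm_eq_abs]
  rw [abs_le]
  constructor <;> nlinarith [sq_nonneg (F x t + H x t), sq_nonneg (F x t - H x t)]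

lemma add (hF : StripL2 T F) (hH : StripL2 T H) : StripL2 T fun x t => F x t + H x t := by
  refine of_le (b := fun x t => 2 * F x t ^ 2 + 2 * H x t ^ 2) (hF.1.add hH.1)
    (((hF.2.const_mul 2).add (hH.2.const_mul 2)).congr (Eventually.of_forall fun z => rfl))
    fun x t _ => ?_
  nlinarith [sq_nonneg (F x t - H x t)]

/-- Multiplication by a bounded function. -/
lemma bdd_mul (hF : StripL2 T F) (hH : Meas H) {C : ℝ} (hC : ∀ x, ∀ t ∈ Icc 0 T, |H x t| ≤ C) :
    StripL2 T fun x t => H x t * F x t := by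
  refine of_le (b := fun x t => C ^ 2 * F x t ^ 2) (hH.mul hF.1) (hF.2.const_mul (C ^ 2))
    fun x t ht => ?_
  rw [mul_pow]
  have : H x t ^ 2 ≤ C ^ 2 := by
    rw [← sq_abs]; exact pow_le_pow_left₀ (abs_nonneg _) (hC x t ht) 2
  gcongr

lemma const_mul (hF : StripL2 T F) (c : ℝ) : StripL2 T fun x t => c * F x t :=
  hF.bdd_mul (Meas.const c) (C := |c|) fun _ _ _ => le_rfl

lemma neg (hF : StripL2 T F) : StripL2 T fun x t => -F x t := by
  simpa using hF.const_mul (-1)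

lemma sub (hF : StripL2 T F) (hH : StripL2 T H) : StripL2 T fun x t => F x t - H x t := by
  simpa [sub_eq_add_neg] using hF.add hH.neg

lemma congr (hF : StripL2 T F) (h : ∀ x t, F x t = H x t) : StripL2 T H := by
  have : F = H := by ext x t; exact h x t
  exact this ▸ hF

lemma shift (hF : StripL2 T F) (h : ℝ) : StripL2 T fun x t => F (x + h) t := by
  refine ⟨hF.1.shift h, ?_⟩
  have mp : MeasurePreserving (Prod.map (fun x : ℝ => x + h) (id : ℝ → ℝ)) (strip T) (strip T) :=
    (measurePreserving_add_right volume h).prod (MeasurePreserving.id _)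
  exact (mp.integrable_comp hF.2.1).2 hF.2

lemma dq (hF : StripL2 T F) (h : ℝ) : StripL2 T fun x t => dq h (fun y => F y t) x := by
  refine (((hF.shift h).sub hF).const_mul h⁻¹).congr fun x t => ?_
  unfold _root_.dq; ring

/-- `L²` on the strip, from integrability of the slice norms. -/
lemma of_slice (hF : Meas F) {g : ℝ → ℝ} (hg : IntegrableOn g (Icc 0 T))
    (h1 : ∀ᵐ t ∂volume.restrict (Icc 0 T), Integrable (fun x => F x t ^ 2))
    (h2 : ∀ᵐ t ∂volume.restrict (Icc 0 T), ∫ x, F x t ^ 2 ≤ g t) : StripL2 T F := by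
  have hm := (hF.pow 2).aesm T
  refine ⟨hF, (integrable_prod_iff' hm).2 ⟨h1, ?_⟩⟩
  refine Integrable.mono' hg ?_ (h2.mono fun t ht => ?_)
  · exact hm.norm.prod_swap.integral_prod_right'
  · simp only [Function.uncurry, Real.norm_eq_abs, abs_pow, sq_abs]
    rw [abs_of_nonneg (integral_nonneg fun x => sq_nonneg _)]
    exact ht

lemma slice_int (hF : StripL2 T F) : IntegrableOn (fun t => ∫ x, F x t ^ 2) (Icc 0 T) :=
  hF.2.integral_prod_right

lemma slice_ae (hF : StripL2 T F) :
    ∀ᵐ t ∂volume.restrict (Icc 0 T), Integrable (fun x => F x t ^ 2) :=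
  hF.2.prod_left_ae

end StripL2

/-! ### From the hypotheses on a solution to slices and strips -/

lemma L2_sq (g : ℝ → ℝ) : L2 g ^ 2 = ∫⁻ x, ENNReal.ofReal (g x ^ 2) := by
  have h := eLpNorm_nnreal_pow_eq_lintegral (f := g) (p := 2) (μ := volume) (by norm_num)
  unfold L2
  have e : ((2 : NNReal) : ENNReal) = 2 := rfl
  rw [e] at h
  have e2 : (((2 : NNReal)) : ℝ) = ((2 : ℕ) : ℝ) := by simp
  rw [e2] at h
  simp only [ENNReal.rpow_natCast] at h
  rw [h]
  refine lintegral_congr fun x => ?_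
  rw [← sq_abs, ENNReal.ofReal_pow (abs_nonneg _), ← Real.norm_eq_abs, ofReal_norm]

lemma sq_of_L2 {g : ℝ → ℝ} (hg : Continuous g) {B : ℝ} (hB : 0 ≤ B) (h : L2 g ≤ ENNReal.ofReal B) :
    Sq g ∧ ∫ x, g x ^ 2 ≤ B ^ 2 := by
  have h1 : ∫⁻ x, ENNReal.ofReal (g x ^ 2) ≤ ENNReal.ofReal (B ^ 2) := by
    rw [← L2_sq, ENNReal.ofReal_pow hB]; gcongr
  have hi : Integrable (fun x => g x ^ 2) := by
    refine ⟨by fun_prop, ?_⟩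
    rw [hasFiniteIntegral_iff_ofReal (Eventually.of_forall fun x => sq_nonneg _)]
    exact h1.trans_lt ENNReal.ofReal_lt_top
  refine ⟨⟨hg, hi⟩, ?_⟩
  rw [← ofReal_integral_eq_lintegral_ofReal hi (Eventually.of_forall fun x => sq_nonneg _)] at h1
  exact (ENNReal.ofReal_le_ofReal_iff (by positivity)).1 h1

lemma StripL2.of_L2 {T : ℝ} {F : ℝ → ℝ → ℝ} (hF : Meas F)
    (h : ∫⁻ t in Icc (0 : ℝ) T, L2 (fun x => F x t) ^ 2 < ⊤) : StripL2 T F := by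
  have hm := (hF.pow 2).aesm T
  refine ⟨hF, hm, ?_⟩
  rw [hasFiniteIntegral_iff_ofReal (f := Function.uncurry fun x t => F x t ^ 2)
    (Eventually.of_forall fun z => sq_nonneg (F z.1 z.2))]
  rw [lintegral_prod_symm _ hm.aemeasurable.ennreal_ofReal]
  simp only [L2_sq] at h
  exact h

/-- The flux `P = (α f' + g) / v` and its spatial derivative are square integrable on the strip,
when `f'` and its derivative `f''` are square integrable on the strip. The product `f' vₓ` is
handled by the Sobolev inequality for `f'`. -/
lemma flux_reg {T K B Cg α : ℝ} (hK : 1 ≤ K) {v vx f' f'' g gx : ℝ → ℝ → ℝ}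
    (mv : Meas v) (vlo : ∀ x, ∀ t ∈ Icc 0 T, K⁻¹ ≤ v x t)
    (dv : ∀ t ∈ Icc 0 T, ∀ x, HasDerivAt (fun y => v y t) (vx x t) x)
    (svx : ∀ t ∈ Icc 0 T, Sq fun x => vx x t) (bvx : ∀ t ∈ Icc 0 T, ∫ x, vx x t ^ 2 ≤ B)
    (lvx : StripL2 T vx)
    (df : ∀ t ∈ Icc 0 T, ∀ x, HasDerivAt (fun y => f' y t) (f'' x t) x)
    (sf : ∀ t ∈ Icc 0 T, Sq fun x => f' x t) (cf : ∀ t ∈ Icc 0 T, Continuous fun x => f'' x t)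
    (lf : StripL2 T f') (lf' : StripL2 T f'')
    (dg : ∀ t ∈ Icc 0 T, ∀ x, HasDerivAt (fun y => g y t) (gx x t) x)
    (sg : ∀ t ∈ Icc 0 T, Sq fun x => g x t) (sgx : ∀ t ∈ Icc 0 T, Sq fun x => gx x t)
    (bg : ∀ x, ∀ t ∈ Icc 0 T, |g x t| ≤ Cg) (lg : StripL2 T g) (lgx : StripL2 T gx)
    {P Px : ℝ → ℝ → ℝ} (hP : ∀ x, ∀ t, P x t = (α * f' x t + g x t) / v x t)
    (hPx : ∀ t ∈ Icc 0 T, ∀ x, HasDerivAt (fun y => P y t) (Px x t) x) (mPx : Meas Px) :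
    StripL2 T P ∧ StripL2 T Px ∧ (∀ t ∈ Icc 0 T, Sq fun x => P x t) ∧
      ∀ᵐ t ∂volume.restrict (Icc 0 T), Sq fun x => Px x t := by
  have hK0 : 0 < K := by linarith
  have vpos : ∀ x, ∀ t ∈ Icc 0 T, 0 < v x t := fun x t ht => (inv_pos.2 hK0).trans_le (vlo x t ht)
  have bi : ∀ x, ∀ t ∈ Icc 0 T, |(v x t)⁻¹| ≤ K := fun x t ht => by
    rw [abs_of_pos (inv_pos.2 (vpos x t ht)), inv_le_comm₀ (vpos x t ht) hK0]
    exact vlo x t ht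
  have mi : Meas fun x t => (v x t)⁻¹ := mv.comp measurable_inv
  have cv : ∀ t ∈ Icc 0 T, Continuous fun x => v x t := fun t ht =>
    continuous_iff_continuousAt.2 fun x => (dv t ht x).continuousAt
  have ci : ∀ t ∈ Icc 0 T, Continuous fun x => (v x t)⁻¹ := fun t ht =>
    (cv t ht).inv₀ fun x => (vpos x t ht).ne'
  have ePx : ∀ t ∈ Icc 0 T, ∀ x, Px x t = (v x t)⁻¹ * (α * f'' x t + gx x t
      - (v x t)⁻¹ * (α * (f' x t * vx x t) + g x t * vx x t)) := fun t ht x => by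
    have h1 : HasDerivAt (fun y => P y t) (((α * f'' x t + gx x t) * v x t
        - (α * f' x t + g x t) * vx x t) / v x t ^ 2) x := by
      have := (((df t ht x).const_mul α).add (dg t ht x)).div (dv t ht x) (vpos x t ht).ne'
      refine this.congr_of_eventuallyEq (Eventually.of_forall fun y => ?_)
      simp [hP]
    rw [(hPx t ht x).unique h1]
    have := vpos x t ht
    field_simp
  have lP : StripL2 T P := (((lf.const_mul α).add lg).bdd_mul mi bi).congr fun x t => by
    rw [hP]; field_simp
  have sP : ∀ t ∈ Icc 0 T, Sq fun x => P x t := fun t ht =>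
    ((((sf t ht).const_mul α).add (sg t ht)).bdd_mul (ci t ht) fun x => bi x t ht).congr
      fun x => by rw [hP]; field_simp
  have lprod : StripL2 T fun x t => f' x t * vx x t := by
    refine StripL2.of_slice (lf.1.mul lvx.1)
      (g := fun t => B * ((∫ x, f' x t ^ 2) + ∫ x, f'' x t ^ 2))
      ((lf.slice_int.add lf'.slice_int).const_mul B) ?_ ?_
    · filter_upwards [lf'.slice_ae, ae_restrict_mem measurableSet_Icc] with t h1 ht
      have hs : Sq fun x => f'' x t := ⟨cf t ht, h1⟩
      exact ((svx t ht).bdd_mul (sf t ht).1 fun x => Real.abs_le_sqrt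
        (sup_sq_le' (df t ht) (sf t ht) hs x)).2
    · filter_upwards [lf'.slice_ae, ae_restrict_mem measurableSet_Icc] with t h1 ht
      have hs : Sq fun x => f'' x t := ⟨cf t ht, h1⟩
      have hi := ((svx t ht).bdd_mul (sf t ht).1 fun x => Real.abs_le_sqrt
        (sup_sq_le' (df t ht) (sf t ht) hs x)).2
      set S := (∫ x, f' x t ^ 2) + ∫ x, f'' x t ^ 2
      have hS : 0 ≤ S := add_nonneg (integral_nonneg fun x => sq_nonneg _)
        (integral_nonneg fun x => sq_nonneg _)
      have h2 : ∫ x, (f' x t * vx x t) ^ 2 ≤ ∫ x, S * vx x t ^ 2 := by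
        refine integral_mono hi ((svx t ht).2.const_mul S) fun x => ?_
        simp only [mul_pow]
        exact mul_le_mul_of_nonneg_right (sup_sq_le' (df t ht) (sf t ht) hs x) (sq_nonneg _)
      rw [integral_const_mul] at h2
      have := mul_le_mul_of_nonneg_left (bvx t ht) hS
      linarith
  have lPx' : StripL2 T fun x t => (v x t)⁻¹ * (α * f'' x t + gx x t
      - (v x t)⁻¹ * (α * (f' x t * vx x t) + g x t * vx x t)) := by
    refine StripL2.bdd_mul ?_ mi bi
    exact ((lf'.const_mul α).add lgx).sub
      (((lprod.const_mul α).add (lvx.bdd_mul lg.1 bg)).bdd_mul mi bi)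
  have lPx : StripL2 T Px := by
    refine ⟨mPx, lPx'.2.congr (ae_strip fun x t ht => ?_)⟩
    simp only [Function.uncurry]
    rw [ePx t ht x]
  refine ⟨lP, lPx, sP, ?_⟩
  filter_upwards [lPx.slice_ae, ae_restrict_mem measurableSet_Icc] with t h1 ht
  refine ⟨?_, h1⟩
  have e : (fun x => Px x t) = fun x => (v x t)⁻¹ * (α * f'' x t + gx x t
      - (v x t)⁻¹ * (α * (f' x t * vx x t) + g x t * vx x t)) := funext fun x => ePx t ht x
  rw [e]
  have c1 := ci t ht
  have c2 := cf t ht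
  have c3 := (sf t ht).1
  have c4 := (svx t ht).1
  have c5 := (sg t ht).1
  have c6 := (sgx t ht).1
  fun_prop

/-- A solution on `[0, T]`, with the quantities `uₓ`, `θₓ`, `G`, `q` and their derivatives, and with
the qualitative regularity used in the estimates: `H¹` bounds at every time, square integrability of
`Gₓ = u_t` and `qₓ` on the strip, and the slice structure at almost every time. -/
structure NSFlow (μ κ R cv K T B : ℝ) (v u θ vx ux θx G Gx q qx : ℝ → ℝ → ℝ) : Prop where
  dtv : ∀ x, ∀ t ∈ Icc 0 T, HasDerivAt (v x) (ux x t) t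
  dtu : ∀ x, ∀ t ∈ Icc 0 T, HasDerivAt (u x) (Gx x t) t
  dtθ : ∀ x, ∀ t ∈ Icc 0 T, HasDerivAt (θ x) ((qx x t + (G x t - R) * ux x t) / cv) t
  dv : ∀ t ∈ Icc 0 T, ∀ x, HasDerivAt (fun y => v y t) (vx x t) x
  du : ∀ t ∈ Icc 0 T, ∀ x, HasDerivAt (fun y => u y t) (ux x t) x
  dθ : ∀ t ∈ Icc 0 T, ∀ x, HasDerivAt (fun y => θ y t) (θx x t) x
  sv : ∀ t ∈ Icc 0 T, Sq fun x => v x t - 1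
  svx : ∀ t ∈ Icc 0 T, Sq fun x => vx x t
  su : ∀ t ∈ Icc 0 T, Sq fun x => u x t
  sux : ∀ t ∈ Icc 0 T, Sq fun x => ux x t
  sθ : ∀ t ∈ Icc 0 T, Sq fun x => θ x t - 1
  sθx : ∀ t ∈ Icc 0 T, Sq fun x => θx x t
  bv : ∀ t ∈ Icc 0 T, ∫ x, (v x t - 1) ^ 2 ≤ B
  bvx : ∀ t ∈ Icc 0 T, ∫ x, vx x t ^ 2 ≤ B
  bu : ∀ t ∈ Icc 0 T, ∫ x, u x t ^ 2 ≤ B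
  bux : ∀ t ∈ Icc 0 T, ∫ x, ux x t ^ 2 ≤ B
  bθ : ∀ t ∈ Icc 0 T, ∫ x, (θ x t - 1) ^ 2 ≤ B
  bθx : ∀ t ∈ Icc 0 T, ∫ x, θx x t ^ 2 ≤ B
  vlo : ∀ x, ∀ t ∈ Icc 0 T, K⁻¹ ≤ v x t
  vhi : ∀ x, ∀ t ∈ Icc 0 T, v x t ≤ K
  θpos : ∀ x, ∀ t ∈ Icc 0 T, 0 < θ x t
  eG : ∀ x t, G x t = (μ * ux x t - R * (θ x t - v x t)) / v x t
  eq : ∀ x t, q x t = κ * θx x t / v x t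
  lv : StripL2 T fun x t => v x t - 1
  lu : StripL2 T u
  lθ : StripL2 T fun x t => θ x t - 1
  lux : StripL2 T ux
  lθx : StripL2 T θx
  lG : StripL2 T G
  lGx : StripL2 T Gx
  lq : StripL2 T q
  lqx : StripL2 T qx
  sl : ∀ᵐ t ∂volume.restrict (Icc 0 T), Slice μ κ R K (fun x => v x t) (fun x => u x t)
    (fun x => θ x t) (fun x => ux x t) (fun x => θx x t) (fun x => G x t) (fun x => Gx x t)
    (fun x => q x t) (fun x => qx x t)

namespace IsClassicalSolution

variable {μ κ R cv K : ℝ} {v u θ : ℝ → ℝ → ℝ}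

lemma hasDerivAt_pdx {f : ℝ → ℝ → ℝ} {t : ℝ} (hf : ContDiff ℝ 2 fun x => f x t) (x : ℝ) :
    HasDerivAt (fun y => f y t) (pdx f x t) x :=
  (hf.differentiable (by norm_num) x).hasDerivAt

lemma contDiff_pdx {f : ℝ → ℝ → ℝ} {t : ℝ} (hf : ContDiff ℝ 2 fun x => f x t) :
    ContDiff ℝ 1 fun x => pdx f x t := by
  have h : ContDiff ℝ (1 + 1) fun x => f x t := hf
  exact (contDiff_succ_iff_deriv.1 h).2.2

lemma hasDerivAt_pdx_pdx {f : ℝ → ℝ → ℝ} {t : ℝ} (hf : ContDiff ℝ 2 fun x => f x t) (x : ℝ) :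
    HasDerivAt (fun y => pdx f y t) (pdx (pdx f) x t) x :=
  ((contDiff_pdx hf).differentiable (by norm_num) x).hasDerivAt

lemma continuous_pdx_pdx {f : ℝ → ℝ → ℝ} {t : ℝ} (hf : ContDiff ℝ 2 fun x => f x t) :
    Continuous fun x => pdx (pdx f) x t :=
  (contDiff_pdx hf).continuous_deriv (by norm_num)

/-- The effective viscous flux of a solution. -/
noncomputable def viscFlux (μ R : ℝ) (v u θ : ℝ → ℝ → ℝ) (x t : ℝ) : ℝ :=
  (μ * pdx u x t - R * (θ x t - v x t)) / v x t

/-- The heat flux of a solution. -/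
noncomputable def heatFlux (κ : ℝ) (v θ : ℝ → ℝ → ℝ) (x t : ℝ) : ℝ := κ * pdx θ x t / v x t

set_option maxHeartbeats 1000000 in
/-- A volume-bounded classical solution, with its fluxes, is an `NSFlow` on every `[0, T]`. -/
theorem flow (h : IsClassicalSolution μ κ R cv v u θ) (hV : VolBounded K v) (hcv : 0 < cv)
    (hK : 1 ≤ K) {T : ℝ} (hT : 0 < T) : ∃ B, 0 ≤ B ∧ NSFlow μ κ R cv K T B v u θ (pdx v) (pdx u) (pdx θ)
      (viscFlux μ R v u θ) (pdt u) (heatFlux κ v θ) (pdx (heatFlux κ v θ)) := by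
  obtain ⟨B₀, hB₀⟩ := h.reg_H1 T hT.le
  set B₁ := max B₀ 0 with hB₁
  have hB₁0 : 0 ≤ B₁ := le_max_right _ _
  have hL : ∀ t ∈ Icc 0 T, L2 (fun x => v x t - 1) + L2 (fun x => pdx v x t)
      + (L2 (fun x => u x t) + L2 (fun x => pdx u x t))
      + (L2 (fun x => θ x t - 1) + L2 (fun x => pdx θ x t)) ≤ ENNReal.ofReal B₁ := fun t ht => by
    have h1 := (hB₀ t ht).trans (ENNReal.ofReal_le_ofReal (le_max_left B₀ 0))
    have e1 : (fun x => pdx v x t) = deriv (fun x => v x t - 1) := by ext x; simp [pdx]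
    have e2 : (fun x => pdx u x t) = deriv (fun x => u x t) := rfl
    have e3 : (fun x => pdx θ x t) = deriv (fun x => θ x t - 1) := by ext x; simp [pdx]
    rw [e1, e2, e3]
    exact h1
  have le_of : ∀ {a b c d e f X : ENNReal}, a + b + (c + d) + (e + f) ≤ X →
      a ≤ X ∧ b ≤ X ∧ c ≤ X ∧ d ≤ X ∧ e ≤ X ∧ f ≤ X := by
    intro a b c d e f X hX
    refine ⟨le_trans ?_ hX, le_trans ?_ hX, le_trans ?_ hX, le_trans ?_ hX, le_trans ?_ hX,
      le_trans ?_ hX⟩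
    · exact le_self_add.trans (le_self_add.trans le_self_add)
    · exact le_add_self.trans (le_self_add.trans le_self_add)
    · exact le_self_add.trans (le_add_self.trans le_self_add)
    · exact le_add_self.trans (le_add_self.trans le_self_add)
    · exact le_self_add.trans le_add_self
    · exact le_add_self.trans le_add_self
  have cv' : ∀ t, 0 ≤ t → Continuous fun x => v x t := fun t ht => (h.smooth_x_v t ht).continuous
  have cu' : ∀ t, 0 ≤ t → Continuous fun x => u x t := fun t ht => (h.smooth_x_u t ht).continuous
  have cθ' : ∀ t, 0 ≤ t → Continuous fun x => θ x t := fun t ht => (h.smooth_x_θ t ht).continuous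
  have kv : ∀ t ∈ Icc 0 T, Sq (fun x => v x t - 1) ∧ ∫ x, (v x t - 1) ^ 2 ≤ B₁ ^ 2 := fun t ht =>
    sq_of_L2 ((cv' t ht.1).sub continuous_const) hB₁0 (le_of (hL t ht)).1
  have kvx : ∀ t ∈ Icc 0 T, _ := fun t ht =>
    sq_of_L2 (contDiff_pdx (h.smooth_x_v t ht.1)).continuous hB₁0 (le_of (hL t ht)).2.1
  have ku : ∀ t ∈ Icc 0 T, _ := fun t ht => sq_of_L2 (cu' t ht.1) hB₁0 (le_of (hL t ht)).2.2.1
  have kux : ∀ t ∈ Icc 0 T, _ := fun t ht =>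
    sq_of_L2 (contDiff_pdx (h.smooth_x_u t ht.1)).continuous hB₁0 (le_of (hL t ht)).2.2.2.1
  have kθ : ∀ t ∈ Icc 0 T, Sq (fun x => θ x t - 1) ∧ ∫ x, (θ x t - 1) ^ 2 ≤ B₁ ^ 2 := fun t ht =>
    sq_of_L2 ((cθ' t ht.1).sub continuous_const) hB₁0 (le_of (hL t ht)).2.2.2.2.1
  have kθx : ∀ t ∈ Icc 0 T, _ := fun t ht =>
    sq_of_L2 (contDiff_pdx (h.smooth_x_θ t ht.1)).continuous hB₁0 (le_of (hL t ht)).2.2.2.2.2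
  have mv : Meas v := Meas.of_cont cv' fun x t ht => (h.smooth_t_v x t ht).continuousAt
  have mu : Meas u := Meas.of_cont cu' fun x t ht => (h.smooth_t_u x t ht).continuousAt
  have mθ : Meas θ := Meas.of_cont cθ' fun x t ht => (h.smooth_t_θ x t ht).continuousAt
  have mvx : Meas (pdx v) := mv.deriv_x fun t ht => hasDerivAt_pdx (h.smooth_x_v t ht)
  have mux : Meas (pdx u) := mu.deriv_x fun t ht => hasDerivAt_pdx (h.smooth_x_u t ht)
  have mθx : Meas (pdx θ) := mθ.deriv_x fun t ht => hasDerivAt_pdx (h.smooth_x_θ t ht)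
  have muxx : Meas (pdx (pdx u)) := mux.deriv_x fun t ht => hasDerivAt_pdx_pdx (h.smooth_x_u t ht)
  have mθxx : Meas (pdx (pdx θ)) := mθx.deriv_x fun t ht => hasDerivAt_pdx_pdx (h.smooth_x_θ t ht)
  have slab : ∀ {F : ℝ → ℝ → ℝ}, Meas F → (∀ t ∈ Icc 0 T, Sq (fun x => F x t) ∧
      ∫ x, F x t ^ 2 ≤ B₁ ^ 2) → StripL2 T F := fun hF hk =>
    StripL2.of_slice hF (g := fun _ => B₁ ^ 2) (by simp)
      ((ae_restrict_mem measurableSet_Icc).mono fun t ht => (hk t ht).1.2)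
      ((ae_restrict_mem measurableSet_Icc).mono fun t ht => (hk t ht).2)
  have lv : StripL2 T fun x t => v x t - 1 := slab (mv.sub (Meas.const 1)) kv
  have lvx := slab mvx kvx
  have lu := slab mu ku
  have lux := slab mux kux
  have lθ : StripL2 T fun x t => θ x t - 1 := slab (mθ.sub (Meas.const 1)) kθ
  have lθx := slab mθx kθx
  have luxx : StripL2 T (pdx (pdx u)) := by
    refine StripL2.of_L2 muxx (lt_of_le_of_lt (lintegral_mono fun t => ?_) (h.reg_H2 T hT))
    refine le_trans ?_ le_self_add
    gcongr
    exact le_add_self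
  have lθxx : StripL2 T (pdx (pdx θ)) := by
    refine StripL2.of_L2 mθxx (lt_of_le_of_lt (lintegral_mono fun t => ?_) (h.reg_H2 T hT))
    refine le_trans ?_ le_add_self
    gcongr
    refine le_trans (le_of_eq ?_) le_add_self
    congr 1
    ext x
    simp [pdx]
  have vpos := h.v_pos
  have dq' : ∀ t ∈ Icc 0 T, ∀ x, HasDerivAt (fun y => heatFlux κ v θ y t)
      (pdx (heatFlux κ v θ) x t) x := fun t ht x => by
    have h1 := ((hasDerivAt_pdx_pdx (h.smooth_x_θ t ht.1) x).const_mul κ).div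
      (hasDerivAt_pdx (h.smooth_x_v t ht.1) x) (vpos x t ht.1).ne'
    exact h1.differentiableAt.hasDerivAt
  have hGe : ∀ x t, 0 ≤ t → viscFlux μ R v u θ x t
      = μ * (pdx u x t / v x t) - R * θ x t / v x t + R := fun x t ht => by
    have := vpos x t ht
    unfold viscFlux
    field_simp
    ring
  have dG' : ∀ t, 0 ≤ t → ∀ x, HasDerivAt (fun y => viscFlux μ R v u θ y t)
      (pdt u x t) x := fun t ht x => by
    have h1 := (hasDerivAt_pdx_pdx (h.smooth_x_u t ht) x).div
      (hasDerivAt_pdx (h.smooth_x_v t ht) x) (vpos x t ht).ne'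
    have h2 := ((hasDerivAt_pdx (h.smooth_x_θ t ht) x).const_mul R).div
      (hasDerivAt_pdx (h.smooth_x_v t ht) x) (vpos x t ht).ne'
    have h1' : HasDerivAt (fun y => pdx u y t / v y t)
      (pdx (fun y s => pdx u y s / v y s) x t) x := h1.differentiableAt.hasDerivAt
    have h2' : HasDerivAt (fun y => R * θ y t / v y t)
      (pdx (fun y s => R * θ y s / v y s) x t) x := h2.differentiableAt.hasDerivAt
    have h3 := ((h1'.const_mul μ).sub h2').add_const R
    have e : pdt u x t = μ * pdx (fun y s => pdx u y s / v y s) x t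
        - pdx (fun y s => R * θ y s / v y s) x t := by
      linarith [h.eq_momentum x t ht]
    rw [e]
    exact h3.congr_of_eventuallyEq (Eventually.of_forall fun y => hGe y t ht)
  have mG : Meas (viscFlux μ R v u θ) :=
    (((Meas.const μ).mul mux).sub ((Meas.const R).mul (mθ.sub mv))).div mv
  have mq : Meas (heatFlux κ v θ) := ((Meas.const κ).mul mθx).div mv
  have vlo : ∀ x, ∀ t ∈ Icc 0 T, K⁻¹ ≤ v x t := fun x t ht => (hV x t ht.1).1
  have dv : ∀ t ∈ Icc 0 T, ∀ x, HasDerivAt (fun y => v y t) (pdx v x t) x :=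
    fun t ht => hasDerivAt_pdx (h.smooth_x_v t ht.1)
  have du : ∀ t ∈ Icc 0 T, ∀ x, HasDerivAt (fun y => u y t) (pdx u x t) x :=
    fun t ht => hasDerivAt_pdx (h.smooth_x_u t ht.1)
  have dθ : ∀ t ∈ Icc 0 T, ∀ x, HasDerivAt (fun y => θ y t) (pdx θ x t) x :=
    fun t ht => hasDerivAt_pdx (h.smooth_x_θ t ht.1)
  have sgG : ∀ t ∈ Icc 0 T, Sq fun x => -R * (θ x t - v x t) := fun t ht =>
    (((kθ t ht).1.sub (kv t ht).1).const_mul (-R)).congr fun x => by ring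
  have sgxG : ∀ t ∈ Icc 0 T, Sq fun x => -R * (pdx θ x t - pdx v x t) := fun t ht =>
    ((kθx t ht).1.sub (kvx t ht).1).const_mul (-R)
  have hbd : ∀ x, ∀ t ∈ Icc 0 T, |-R * (θ x t - v x t)| ≤ |R| * (2 * √(2 * B₁ ^ 2)) := by
    intro x t ht
    have a1 : |θ x t - 1| ≤ √(2 * B₁ ^ 2) := Real.abs_le_sqrt
      ((sup_sq_le' (fun x => (dθ t ht x).sub_const 1) (kθ t ht).1 (kθx t ht).1 x).trans
        (by linarith [(kθ t ht).2, (kθx t ht).2]))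
    have a2 : |v x t - 1| ≤ √(2 * B₁ ^ 2) := Real.abs_le_sqrt
      ((sup_sq_le' (fun x => (dv t ht x).sub_const 1) (kv t ht).1 (kvx t ht).1 x).trans
        (by linarith [(kv t ht).2, (kvx t ht).2]))
    rw [abs_mul, abs_neg]
    have a3 : |θ x t - v x t| ≤ |θ x t - 1| + |v x t - 1| := by
      have := abs_sub (θ x t - 1) (v x t - 1)
      simpa using this
    gcongr
    linarith
  obtain ⟨lG, lGx, sG, sGx⟩ := flux_reg (α := μ) (B := B₁ ^ 2) (P := viscFlux μ R v u θ)
    (Px := pdt u) (g := fun x t => -R * (θ x t - v x t))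
    (gx := fun x t => -R * (pdx θ x t - pdx v x t)) hK mv vlo dv (fun t ht => (kvx t ht).1)
    (fun t ht => (kvx t ht).2) lvx
    (fun t ht => hasDerivAt_pdx_pdx (h.smooth_x_u t ht.1)) (fun t ht => (kux t ht).1)
    (fun t ht => continuous_pdx_pdx (h.smooth_x_u t ht.1)) lux luxx
    (fun t ht x => ((dθ t ht x).sub (dv t ht x)).const_mul (-R)) sgG sgxG hbd
    (((lθ.sub lv).const_mul (-R)).congr fun x t => by ring) ((lθx.sub lvx).const_mul (-R))
    (fun x t => by unfold viscFlux; congr 1; ring)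
    (fun t ht => dG' t ht.1) (mG.deriv_x dG')
  obtain ⟨lq, lqx, sq', sqx⟩ := flux_reg (α := κ) (B := B₁ ^ 2) (P := heatFlux κ v θ)
    (Px := pdx (heatFlux κ v θ)) (g := fun x t => 0) (Cg := 0)
    (gx := fun x t => 0) hK mv vlo dv (fun t ht => (kvx t ht).1)
    (fun t ht => (kvx t ht).2) lvx
    (fun t ht => hasDerivAt_pdx_pdx (h.smooth_x_θ t ht.1)) (fun t ht => (kθx t ht).1)
    (fun t ht => continuous_pdx_pdx (h.smooth_x_θ t ht.1)) lθx lθxx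
    (fun t ht x => hasDerivAt_const _ _) (fun t ht => ⟨continuous_const, by simp⟩)
    (fun t ht => ⟨continuous_const, by simp⟩) (by simp)
    ⟨Meas.const 0, by simp [Function.uncurry_def]⟩ ⟨Meas.const 0, by simp [Function.uncurry_def]⟩
    (fun x t => by unfold heatFlux; simp) dq' (by
      refine mq.deriv_x fun t ht x => ?_
      have h1 := ((hasDerivAt_pdx_pdx (h.smooth_x_θ t ht) x).const_mul κ).div
        (hasDerivAt_pdx (h.smooth_x_v t ht) x) (vpos x t ht).ne'
      exact h1.differentiableAt.hasDerivAt)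
  refine ⟨B₁ ^ 2, by positivity, ?_⟩
  exact
  { dtv := fun x t ht => by
      rw [← h.eq_mass x t ht.1]
      exact (h.smooth_t_v x t ht.1).hasDerivAt
    dtu := fun x t ht => (h.smooth_t_u x t ht.1).hasDerivAt
    dtθ := fun x t ht => by
      have e : (pdx (heatFlux κ v θ) x t + (viscFlux μ R v u θ x t - R) * pdx u x t) / cv
          = pdt θ x t := by
        have e1 : pdx (heatFlux κ v θ) x t = κ * pdx (fun y s => pdx θ y s / v y s) x t := by
          have h1 := (hasDerivAt_pdx_pdx (h.smooth_x_θ t ht.1) x).div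
            (hasDerivAt_pdx (h.smooth_x_v t ht.1) x) (vpos x t ht.1).ne'
          have h1' : HasDerivAt (fun y => pdx θ y t / v y t)
            (pdx (fun y s => pdx θ y s / v y s) x t) x := h1.differentiableAt.hasDerivAt
          refine (dq' t ht x).unique ((h1'.const_mul κ).congr_of_eventuallyEq
            (Eventually.of_forall fun y => ?_))
          simp only [heatFlux]; ring
        rw [div_eq_iff hcv.ne', e1, hGe x t ht.1]
        have h2 := h.eq_energy x t ht.1
        have := vpos x t ht.1
        have e3 : (μ * (pdx u x t / v x t) - R * θ x t / v x t + R - R) * pdx u x t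
          = μ * (pdx u x t) ^ 2 / v x t - (R * θ x t / v x t) * pdx u x t := by ring
        rw [e3]
        linarith
      rw [e]
      exact (h.smooth_t_θ x t ht.1).hasDerivAt
    dv := dv
    du := du
    dθ := dθ
    sv := fun t ht => (kv t ht).1
    svx := fun t ht => (kvx t ht).1
    su := fun t ht => (ku t ht).1
    sux := fun t ht => (kux t ht).1
    sθ := fun t ht => (kθ t ht).1
    sθx := fun t ht => (kθx t ht).1
    bv := fun t ht => (kv t ht).2
    bvx := fun t ht => (kvx t ht).2
    bu := fun t ht => (ku t ht).2
    bux := fun t ht => (kux t ht).2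
    bθ := fun t ht => (kθ t ht).2
    bθx := fun t ht => (kθx t ht).2
    vlo := vlo
    vhi := fun x t ht => (hV x t ht.1).2
    θpos := fun x t ht => h.θ_pos x t ht.1
    eG := fun x t => rfl
    eq := fun x t => rfl
    lv := lv
    lu := lu
    lθ := lθ
    lux := lux
    lθx := lθx
    lG := lG
    lGx := lGx
    lq := lq
    lqx := lqx
    sl := by
      filter_upwards [sGx, sqx, ae_restrict_mem measurableSet_Icc] with t h1 h2 ht
      exact
      { du := du t ht
        dθ := dθ t ht
        dG := dG' t ht.1
        dq := dq' t ht
        sv := (kv t ht).1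
        su := (ku t ht).1
        sux := (kux t ht).1
        sθ := (kθ t ht).1
        sθx := (kθx t ht).1
        sG := sG t ht
        sGx := h1
        sq := sq' t ht
        sqx := h2
        vlo := fun x => vlo x t ht
        vhi := fun x => (hV x t ht.1).2
        θpos := fun x => h.θ_pos x t ht.1
        eG := fun x => by
          have := vpos x t ht.1
          simp only [viscFlux]; field_simp
        eq := fun x => by
          have := vpos x t ht.1
          simp only [heatFlux]; field_simp } }

end IsClassicalSolution

/-! ### The balance law for the squared fluxes, at a fixed time -/

lemma integral_sq_nonneg (a : ℝ → ℝ) : 0 ≤ ∫ x, a x ^ 2 := integral_nonneg fun _ => sq_nonneg _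

lemma integral_lin3 {F f₁ f₂ f₃ : ℝ → ℝ} (i₁ : Integrable f₁) (i₂ : Integrable f₂)
    (i₃ : Integrable f₃) (a b c : ℝ) (h : ∀ x, F x = a * f₁ x + b * f₂ x + c * f₃ x) :
    ∫ x, F x = a * (∫ x, f₁ x) + b * (∫ x, f₂ x) + c * ∫ x, f₃ x := by
  have i12 : Integrable fun x => a * f₁ x + b * f₂ x := (i₁.const_mul a).add (i₂.const_mul b)
  simp only [h]
  rw [integral_add i12 (i₃.const_mul c), integral_add (i₁.const_mul a) (i₂.const_mul b),
    integral_const_mul, integral_const_mul, integral_const_mul]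

lemma integral_const_mul_sq (c : ℝ) (a : ℝ → ℝ) : ∫ x, (c * a x) ^ 2 = c ^ 2 * ∫ x, a x ^ 2 := by
  rw [← integral_const_mul]; exact integral_congr_ae (Eventually.of_forall fun x => mul_pow _ _ _)

lemma integral_add_sq_le {a b : ℝ → ℝ} (sa : Sq a) (sb : Sq b) :
    ∫ x, (a x + b x) ^ 2 ≤ 2 * (∫ x, a x ^ 2) + 2 * ∫ x, b x ^ 2 := by
  rw [← integral_const_mul, ← integral_const_mul,
    ← integral_add (sa.2.const_mul 2) (sb.2.const_mul 2)]
  refine integral_mono (sa.add sb).2 ((sa.2.const_mul 2).add (sb.2.const_mul 2)) fun x => ?_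
  simp only
  nlinarith [sq_nonneg (a x - b x)]

lemma integral_sub_sq_le {a b : ℝ → ℝ} (sa : Sq a) (sb : Sq b) :
    ∫ x, (a x - b x) ^ 2 ≤ 2 * (∫ x, a x ^ 2) + 2 * ∫ x, b x ^ 2 := by
  have := integral_add_sq_le sa sb.neg
  simpa [sub_eq_add_neg] using this

lemma integral_mul_sq_le {a b : ℝ → ℝ} (ca : Continuous a) (sb : Sq b) {S : ℝ}
    (hS : ∀ x, a x ^ 2 ≤ S) : Sq (fun x => a x * b x) ∧ ∫ x, (a x * b x) ^ 2 ≤ S * ∫ x, b x ^ 2 := by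
  have h1 := sb.bdd_mul ca fun x => Real.abs_le_sqrt (hS x)
  refine ⟨h1, ?_⟩
  rw [← integral_const_mul]
  refine integral_mono h1.2 (sb.2.const_mul S) fun x => ?_
  simp only [mul_pow]
  exact mul_le_mul_of_nonneg_right (hS x) (sq_nonneg _)

lemma tendsto_integral_mul {a : ℕ → ℝ → ℝ} {b : ℝ → ℝ} (sa : ∀ n, Sq (a n)) (sb : Sq b)
    (h : Tendsto (fun n => ∫ x, a n x ^ 2) atTop (nhds 0)) :
    Tendsto (fun n => ∫ x, a n x * b x) atTop (nhds 0) := by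
  have h1 : Tendsto (fun n => √((∫ x, a n x ^ 2) * ∫ x, b x ^ 2)) atTop (nhds 0) := by
    have := (h.mul_const (∫ x, b x ^ 2)).sqrt
    simpa using this
  exact squeeze_zero_norm (fun n => Real.abs_le_sqrt (cauchy_schwarz (sa n) sb)) h1

/-- Division by the specific volume is bounded on `H¹`. -/
lemma div_H1 {K B : ℝ} (hK : 1 ≤ K) {v vx F F' : ℝ → ℝ} (vlo : ∀ x, K⁻¹ ≤ v x)
    (dv : ∀ x, HasDerivAt v (vx x) x) (svx : Sq vx) (bvx : ∫ x, vx x ^ 2 ≤ B)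
    (dF : ∀ x, HasDerivAt F (F' x) x) (sF : Sq F) (sF' : Sq F') :
    ∃ W' : ℝ → ℝ, (∀ x, HasDerivAt (fun y => F y / v y) (W' x) x) ∧ Sq (fun y => F y / v y) ∧ Sq W'
      ∧ ∫ x, (F x / v x) ^ 2 ≤ K ^ 2 * ∫ x, F x ^ 2
      ∧ ∫ x, W' x ^ 2 ≤ (2 * K ^ 2 + 2 * K ^ 4 * B) * ((∫ x, F x ^ 2) + ∫ x, F' x ^ 2) := by
  have hK0 : 0 < K := by linarith
  have vpos : ∀ x, 0 < v x := fun x => (inv_pos.2 hK0).trans_le (vlo x)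
  have bi : ∀ x, ((v x)⁻¹) ^ 2 ≤ K ^ 2 := fun x => by
    have : (v x)⁻¹ ≤ K := by rw [inv_le_comm₀ (vpos x) hK0]; exact vlo x
    have h0 := (inv_pos.2 (vpos x)).le
    gcongr
  have cv : Continuous v := continuous_iff_continuousAt.2 fun x => (dv x).continuousAt
  have ci : Continuous fun x => (v x)⁻¹ := cv.inv₀ fun x => (vpos x).ne'
  have h1 := integral_mul_sq_le ci sF bi
  have h2 := integral_mul_sq_le ci sF' bi
  have h3 := integral_mul_sq_le sF.1 svx (sup_sq_le' dF sF sF')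
  have h4 := integral_mul_sq_le (a := fun x => (v x)⁻¹ ^ 2) (ci.pow 2) h3.1 (S := K ^ 4) fun x => by
    calc ((v x)⁻¹ ^ 2) ^ 2 ≤ (K ^ 2) ^ 2 := by gcongr ?_ ^ 2; exact bi x
      _ = K ^ 4 := by ring
  have e : ∀ x, (v x)⁻¹ * F x = F x / v x := fun x => by field_simp
  refine ⟨fun x => (v x)⁻¹ * F' x - (v x)⁻¹ ^ 2 * (F x * vx x), fun x => ?_, h1.1.congr e,
    h2.1.sub h4.1, ?_, ?_⟩
  · have := (dF x).div (dv x) (vpos x).ne'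
    convert! this using 1
    have := vpos x
    field_simp
  · have := h1.2
    simpa only [e] using this
  · have h5 := integral_sub_sq_le h2.1 h4.1
    have a := integral_sq_nonneg F
    have b := integral_sq_nonneg F'
    have h6 := mul_le_mul_of_nonneg_left bvx (add_nonneg a b)
    have h7 : K ^ 4 * (∫ x, (F x * vx x) ^ 2)
        ≤ K ^ 4 * (((∫ x, F x ^ 2) + ∫ x, F' x ^ 2) * B) := by
      gcongr; exact h3.2.trans h6
    have h8 := mul_nonneg (sq_nonneg K) a
    linarith [h2.2, h4.2]

/-- A flux `P = (α fₓ + g) / v` at a fixed time, with the time derivatives `φ = f_t`, `γ = g_t`,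
`uₓ = v_t`, and an a priori bound `B` for the norms that are controlled at every time. -/
structure FluxSlice (α K B : ℝ) (v vx ux f fx g gx P Px φ γ : ℝ → ℝ) : Prop where
  dv : ∀ x, HasDerivAt v (vx x) x
  df : ∀ x, HasDerivAt f (fx x) x
  dg : ∀ x, HasDerivAt g (gx x) x
  dP : ∀ x, HasDerivAt P (Px x) x
  svx : Sq vx
  sux : Sq ux
  sfx : Sq fx
  sg : Sq g
  sgx : Sq gx
  sPx : Sq Px
  sφ : Sq φ
  sγ : Sq γ
  bvx : ∫ x, vx x ^ 2 ≤ B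
  bux : ∫ x, ux x ^ 2 ≤ B
  bfx : ∫ x, fx x ^ 2 ≤ B
  bg : ∫ x, g x ^ 2 ≤ B
  bgx : ∫ x, gx x ^ 2 ≤ B
  vlo : ∀ x, K⁻¹ ≤ v x
  vhi : ∀ x, v x ≤ K
  eP : ∀ x, P x = (α * fx x + g x) / v x

/-- The rate of change of `∫ v W² / 2` for the discrete flux `W = (α D_h f + g) / v`. -/
noncomputable def dqRate (α h : ℝ) (v ux f g φ γ : ℝ → ℝ) : ℝ :=
  ∫ x, ((α * dq h f x + g x) / v x * (α * dq h φ x + γ x)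
    - ((α * dq h f x + g x) / v x) ^ 2 * ux x / 2)

/-- The rate of change of `∫ v P² / 2`. -/
noncomputable def fluxRate (α : ℝ) (ux P Px φ γ : ℝ → ℝ) : ℝ :=
  ∫ x, (-(α * (Px x * φ x)) + P x * γ x - P x ^ 2 * ux x / 2)

namespace FluxSlice

variable {α K B : ℝ} {v vx ux f fx g gx P Px φ γ : ℝ → ℝ}

lemma cont_v (S : FluxSlice α K B v vx ux f fx g gx P Px φ γ) : Continuous v :=
  continuous_iff_continuousAt.2 fun x => (S.dv x).continuousAt

lemma vpos (hK : 1 ≤ K) (S : FluxSlice α K B v vx ux f fx g gx P Px φ γ) (x : ℝ) : 0 < v x :=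
  (inv_pos.2 (by linarith)).trans_le (S.vlo x)

lemma nonneg (S : FluxSlice α K B v vx ux f fx g gx P Px φ γ) : 0 ≤ B :=
  (integral_sq_nonneg _).trans S.bvx

lemma flux_sq (hK : 1 ≤ K) (S : FluxSlice α K B v vx ux f fx g gx P Px φ γ) :
    Sq P ∧ ∫ x, P x ^ 2 ≤ K ^ 2 * (2 * α ^ 2 * B + 2 * B) := by
  have ci : Continuous fun x => (v x)⁻¹ := S.cont_v.inv₀ fun x => (S.vpos hK x).ne'
  have hK0 : 0 < K := by linarith
  have h1 := integral_mul_sq_le ci ((S.sfx.const_mul α).add S.sg) (S := K ^ 2) fun x => by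
    have : (v x)⁻¹ ≤ K := by rw [inv_le_comm₀ (S.vpos hK x) hK0]; exact S.vlo x
    have h0 := (inv_pos.2 (S.vpos hK x)).le
    gcongr
  have e : (fun x => (v x)⁻¹ * (α * fx x + g x)) = P := by
    ext x; rw [S.eP]; field_simp
  have e' : ∀ x, (v x)⁻¹ * (α * fx x + g x) = P x := congrFun e
  simp only [e'] at h1
  refine ⟨h1.1, h1.2.trans ?_⟩
  have h2 := integral_add_sq_le (S.sfx.const_mul α) S.sg
  rw [integral_const_mul_sq] at h2
  gcongr
  have h3 := mul_le_mul_of_nonneg_left S.bfx (sq_nonneg α)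
  linarith [S.bg]

/-- The second derivative of `f`, recovered from the flux. -/
lemma second (hα : 0 < α) (hK : 1 ≤ K) (S : FluxSlice α K B v vx ux f fx g gx P Px φ γ) :
    ∃ fxx : ℝ → ℝ, (∀ x, HasDerivAt fx (fxx x) x) ∧ Sq fxx ∧
      ∫ x, fxx x ^ 2 ≤ (α⁻¹) ^ 2 * (4 * B * (K ^ 2 * (2 * α ^ 2 * B + 2 * B) + ∫ x, Px x ^ 2)
        + 4 * K ^ 2 * (∫ x, Px x ^ 2) + 2 * B) := by
  obtain ⟨sP, bP⟩ := S.flux_sq hK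
  have hB := S.nonneg
  have h1 := integral_mul_sq_le sP.1 S.svx (sup_sq_le' S.dP sP S.sPx)
  have h2 := integral_mul_sq_le S.cont_v S.sPx (S := K ^ 2) fun x => by
    have := S.vpos hK x
    have := S.vhi x
    gcongr
  have h3 := (h1.1.add h2.1).sub S.sgx
  refine ⟨fun x => α⁻¹ * (P x * vx x + v x * Px x - gx x), fun x => ?_, h3.const_mul _, ?_⟩
  · have h4 := ((((S.dP x).mul (S.dv x)).sub (S.dg x)).const_mul α⁻¹)
    have e : fx = fun x => α⁻¹ * (P x * v x - g x) := by
      ext y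
      rw [S.eP]
      have := S.vpos hK y
      field_simp
      ring
    rw [e]
    convert! h4 using 1
    ring
  · rw [integral_const_mul_sq]
    have h4 := integral_sub_sq_le (h1.1.add h2.1) S.sgx
    have h5 := integral_add_sq_le h1.1 h2.1
    have hN := integral_sq_nonneg Px
    have h6 : (∫ x, (P x * vx x) ^ 2) ≤ (K ^ 2 * (2 * α ^ 2 * B + 2 * B) + ∫ x, Px x ^ 2) * B := by
      refine h1.2.trans ?_
      gcongr
      exact S.bvx
    gcongr
    linarith [h2.2, S.bgx]

/-- `H¹` convergence of the discrete flux to the flux. -/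
lemma tendsto_dq (hα : 0 < α) (hK : 1 ≤ K) (S : FluxSlice α K B v vx ux f fx g gx P Px φ γ)
    {h : ℕ → ℝ} (hh : ∀ n, h n ≠ 0) (hlim : Tendsto h atTop (nhds 0)) :
    ∃ E' : ℕ → ℝ → ℝ, (∀ n x, HasDerivAt (fun y => (α * dq (h n) f y + g y) / v y - P y) (E' n x) x)
      ∧ (∀ n, Sq fun y => (α * dq (h n) f y + g y) / v y - P y) ∧ (∀ n, Sq (E' n))
      ∧ Tendsto (fun n => ∫ x, ((α * dq (h n) f x + g x) / v x - P x) ^ 2) atTop (nhds 0)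
      ∧ Tendsto (fun n => ∫ x, E' n x ^ 2) atTop (nhds 0) := by
  obtain ⟨fxx, dfx, sfxx, -⟩ := S.second hα hK
  have hB := S.nonneg
  have key : ∀ n, _ := fun n => div_H1 hK S.vlo S.dv S.svx S.bvx
    (F := fun x => α * (dq (h n) f x - fx x)) (F' := fun x => α * (dq (h n) fx x - fxx x))
    (fun x => ((dq_hasDerivAt (h n) S.df x).sub (dfx x)).const_mul α)
    (((dq_sq' (hh n) S.df S.sfx).sub S.sfx).const_mul α)
    (((dq_sq' (hh n) dfx sfxx).sub sfxx).const_mul α)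
  choose E' h1 h2 h3 h4 h5 using key
  have e : ∀ n x, α * (dq (h n) f x - fx x) / v x = (α * dq (h n) f x + g x) / v x - P x :=
    fun n x => by rw [S.eP]; ring
  simp only [e, integral_const_mul_sq] at h1 h2 h4 h5
  have l1 := dq_tendsto hh hlim S.df S.sfx
  have l2 := dq_tendsto hh hlim dfx sfxx
  refine ⟨E', h1, h2, h3, ?_, ?_⟩
  · refine squeeze_zero (fun n => integral_sq_nonneg _) h4 ?_
    simpa using ((l1.const_mul (α ^ 2)).const_mul (K ^ 2))
  · refine squeeze_zero (fun n => integral_sq_nonneg _) h5 ?_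
    simpa using (((l1.const_mul (α ^ 2)).add (l2.const_mul (α ^ 2))).const_mul
      (2 * K ^ 2 + 2 * K ^ 4 * B))

/-- Splitting of `dqRate` into a flux part, after moving the difference quotient off `φ`. -/
lemma dqRate_eq {W W' : ℝ → ℝ} {h : ℝ} (dW : ∀ x, HasDerivAt W (W' x) x) (sW : Sq W) (sW' : Sq W')
    (eW : ∀ x, W x = (α * dq h f x + g x) / v x) (sux : Sq ux) (sφ : Sq φ) (sγ : Sq γ) :
    dqRate α h v ux f g φ γ
      = -(α * ∫ x, dq (-h) W x * φ x) + (∫ x, W x * γ x) - (∫ x, W x ^ 2 * ux x) / 2 := by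
  have i3 : Integrable fun x => W x ^ 2 * ux x := by
    have h1 := (sux.bdd_mul sW.1 fun x => Real.abs_le_sqrt (sup_sq_le' dW sW sW' x))
    exact (sW.mul_int h1).congr (Eventually.of_forall fun x => by simp only; ring)
  have i1 := sW.mul_int (dq_sq h sφ)
  have i2 := sW.mul_int sγ
  have h1 := dq_ibp h sW sφ
  unfold dqRate
  simp only [← eW]
  rw [integral_lin3 i1 i2 i3 α 1 (-1 / 2) fun x => by ring, h1]
  ring

lemma dqRate_tendsto (hα : 0 < α) (hK : 1 ≤ K) (S : FluxSlice α K B v vx ux f fx g gx P Px φ γ)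
    {h : ℕ → ℝ} (hh : ∀ n, h n ≠ 0) (hlim : Tendsto h atTop (nhds 0)) :
    Tendsto (fun n => dqRate α (h n) v ux f g φ γ) atTop (nhds (fluxRate α ux P Px φ γ)) := by
  obtain ⟨E', dE, sE, sE', lE, lE'⟩ := S.tendsto_dq hα hK hh hlim
  obtain ⟨sP, -⟩ := S.flux_sq hK
  set E : ℕ → ℝ → ℝ := fun n y => (α * dq (h n) f y + g y) / v y - P y with hE
  have hh' : ∀ n, -h n ≠ 0 := fun n => neg_ne_zero.2 (hh n)
  have hlim' : Tendsto (fun n => -h n) atTop (nhds 0) := by simpa using hlim.neg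
  have sPu : Sq fun x => P x * ux x :=
    S.sux.bdd_mul sP.1 fun x => Real.abs_le_sqrt (sup_sq_le' S.dP sP S.sPx x)
  have iE2 : ∀ n, Integrable fun x => E n x ^ 2 * ux x := fun n => by
    have h1 := S.sux.bdd_mul (sE n).1 fun x =>
      Real.abs_le_sqrt (sup_sq_le' (dE n) (sE n) (sE' n) x)
    exact ((sE n).mul_int h1).congr (Eventually.of_forall fun x => by simp only; ring)
  have iP2 : Integrable fun x => P x ^ 2 * ux x :=
    (sP.mul_int sPu).congr (Eventually.of_forall fun x => by simp only; ring)
  have sdP : ∀ n, Sq (dq (-h n) P) := fun n => dq_sq _ sP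
  have eq1 : ∀ n, dqRate α (h n) v ux f g φ γ = fluxRate α ux P Px φ γ
      + (-(α * ((∫ x, (dq (-h n) P x - Px x) * φ x) + ∫ x, dq (-h n) (E n) x * φ x))
        + (∫ x, E n x * γ x) - (∫ x, E n x ^ 2 * ux x) / 2 - ∫ x, E n x * (P x * ux x)) := fun n => by
    rw [dqRate_eq (W := fun y => E n y + P y) (W' := fun y => E' n y + Px y)
      (fun x => (dE n x).add (S.dP x)) ((sE n).add sP) ((sE' n).add S.sPx)
      (fun x => by simp [hE]) S.sux S.sφ S.sγ]
    have a1 : ∫ x, dq (-h n) (fun y => E n y + P y) x * φ x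
        = (∫ x, Px x * φ x) + (∫ x, (dq (-h n) P x - Px x) * φ x)
          + ∫ x, dq (-h n) (E n) x * φ x := by
      rw [integral_lin3 (S.sPx.mul_int S.sφ) (((sdP n).sub S.sPx).mul_int S.sφ)
        ((dq_sq (-h n) (sE n)).mul_int S.sφ) 1 1 1 fun x => by simp only [dq, hE]; ring]
      simp only [one_mul, hE]
    have a2 : ∫ x, (E n x + P x) * γ x = (∫ x, P x * γ x) + ∫ x, E n x * γ x := by
      rw [← integral_add (sP.mul_int S.sγ) ((sE n).mul_int S.sγ)]
      refine integral_congr_ae (Eventually.of_forall fun x => ?_)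
      simp only; ring
    have a3 : ∫ x, (E n x + P x) ^ 2 * ux x = (∫ x, P x ^ 2 * ux x) + (∫ x, E n x ^ 2 * ux x)
        + 2 * ∫ x, E n x * (P x * ux x) := by
      rw [integral_lin3 iP2 (iE2 n) ((sE n).mul_int sPu) 1 1 2 fun x => by simp only [hE]; ring]
      simp only [one_mul, hE]
    have a4 : fluxRate α ux P Px φ γ = -(α * ∫ x, Px x * φ x) + (∫ x, P x * γ x)
        - (∫ x, P x ^ 2 * ux x) / 2 := by
      unfold fluxRate
      rw [integral_lin3 (S.sPx.mul_int S.sφ) (sP.mul_int S.sγ) iP2 (-α) 1 (-1 / 2) fun x => by ring]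
      ring
    rw [a1, a2, a3, a4]
    ring
  have t1 := tendsto_integral_mul (fun n => (sdP n).sub S.sPx) S.sφ
    (dq_tendsto hh' hlim' S.dP S.sPx)
  have t2 := tendsto_integral_mul (fun n => dq_sq (-h n) (sE n)) S.sφ
    (squeeze_zero (fun n => integral_sq_nonneg _)
      (fun n => dq_integral_le (hh' n) (dE n) (sE' n)) lE')
  have t3 := tendsto_integral_mul sE S.sγ lE
  have t4 := tendsto_integral_mul sE sPu lE
  have t5 : Tendsto (fun n => ∫ x, E n x ^ 2 * ux x) atTop (nhds 0) := by
    refine squeeze_zero_norm (fun n => cubic_le (dE n) (sE n) (sE' n) S.sux one_pos) ?_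
    have := ((lE.add lE').const_mul 1).add ((lE.mul_const (∫ x, ux x ^ 2)).const_mul (4 * 1)⁻¹)
    rwa [add_zero, mul_zero, zero_mul, mul_zero, add_zero] at this
  simp only [eq1]
  have := ((((t1.add t2).const_mul α).neg.add t3).sub (t5.div_const 2)).sub t4
  simpa using this.const_add (fluxRate α ux P Px φ γ)

lemma rate_arith {α c0 c2 b N Φ Γ I1 I2 I3 : ℝ} (hα : 0 ≤ α) (hc0 : 0 ≤ c0) (hc2 : 0 ≤ c2)
    (hb : 0 ≤ b) (hN : 0 ≤ N) (hΦ : 0 ≤ Φ) (hΓ : 0 ≤ Γ) (l1 : |I1| ≤ c2 * (1 + N) + Φ)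
    (l2 : |I2| ≤ c0 + Γ) (l3 : |I3| ≤ c0 + c2 * (1 + N) + b) :
    |-(α * I1) + I2 - I3 / 2| ≤ (α * c2 + α + c0 + 1 + c2 + b + c0) * (1 + N + Φ + Γ) := by
  have j1 : |-(α * I1) + I2 - I3 / 2| ≤ α * |I1| + |I2| + |I3| / 2 := by
    have e : |α * I1| = α * |I1| := by rw [abs_mul, abs_of_nonneg hα]
    have e2 : |I3 / 2| = |I3| / 2 := by rw [abs_div]; norm_num
    have := abs_sub (-(α * I1) + I2) (I3 / 2)
    have := abs_add_le (-(α * I1)) I2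
    rw [abs_neg] at this
    linarith
  have l4 := mul_le_mul_of_nonneg_left l1 hα
  have m1 : 0 ≤ α * c2 * (Φ + Γ) := by positivity
  have m2 : 0 ≤ α * (1 + N + Γ) := by positivity
  have m3 : 0 ≤ c0 * (N + Φ + Γ) := by positivity
  have m4 : 0 ≤ c2 * (1 + N) := by positivity
  have m5 : 0 ≤ b * (N + Φ + Γ) := by positivity
  have m6 : 0 ≤ c2 * (Φ + Γ) := by positivity
  linarith [abs_nonneg I3]

set_option maxHeartbeats 800000 in
/-- A bound for `dqRate` that is uniform in `h`. -/
lemma dqRate_le (hα : 0 < α) (hK : 1 ≤ K) (hB : 0 ≤ B) :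
    ∃ C, 0 ≤ C ∧ ∀ v vx ux f fx g gx P Px φ γ : ℝ → ℝ, FluxSlice α K B v vx ux f fx g gx P Px φ γ →
      ∀ h ≠ 0, |dqRate α h v ux f g φ γ|
        ≤ C * (1 + (∫ x, Px x ^ 2) + (∫ x, φ x ^ 2) + ∫ x, γ x ^ 2) := by
  set c0 := K ^ 2 * (2 * α ^ 2 * B + 2 * B) with hc0
  have hc00 : 0 ≤ c0 := by positivity
  set c1 := (α⁻¹) ^ 2 * (4 * B * (c0 + 1) + 4 * K ^ 2 + 2 * B) with hc1
  have hc10 : 0 ≤ c1 := by positivity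
  set c2 := (2 * K ^ 2 + 2 * K ^ 4 * B) * (2 * α ^ 2 * B + 2 * B + 2 * α ^ 2 * c1 + 2 * B) with hc2
  have hc20 : 0 ≤ c2 := by positivity
  refine ⟨α * c2 + α + c0 + 1 + c2 + c0 * B + c0, by positivity, ?_⟩
  intro v vx ux f fx g gx P Px φ γ S h hh
  obtain ⟨fxx, dfx, sfxx, bfxx⟩ := S.second hα hK
  set N := ∫ x, Px x ^ 2 with hN
  have hN0 : 0 ≤ N := integral_sq_nonneg Px
  have b1 : ∫ x, fxx x ^ 2 ≤ c1 * (1 + N) := by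
    have h1 : 4 * B * (c0 + N) + 4 * K ^ 2 * N + 2 * B
        ≤ (4 * B * (c0 + 1) + 4 * K ^ 2 + 2 * B) * (1 + N) := by
      have : 0 ≤ B * c0 * N := by positivity
      have : 0 ≤ K ^ 2 := by positivity
      have : 0 ≤ B * N := by positivity
      nlinarith
    exact bfxx.trans ((mul_le_mul_of_nonneg_left h1 (by positivity)).trans_eq (by rw [hc1]; ring))
  have sF := ((dq_sq' hh S.df S.sfx).const_mul α).add S.sg
  have sF' := ((dq_sq' hh dfx sfxx).const_mul α).add S.sgx
  obtain ⟨W', dW, sW, sW', bW, bW'⟩ := div_H1 hK S.vlo S.dv S.svx S.bvx (F := fun x => α * dq h f x + g x)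
    (fun x => ((dq_hasDerivAt h S.df x).const_mul α).add (S.dg x)) sF sF'
  have d1 := integral_add_sq_le ((dq_sq' hh S.df S.sfx).const_mul α) S.sg
  have d2 := integral_add_sq_le ((dq_sq' hh dfx sfxx).const_mul α) S.sgx
  rw [integral_const_mul_sq] at d1 d2
  have d3 : ∫ x, (α * dq h f x + g x) ^ 2 ≤ 2 * α ^ 2 * B + 2 * B := by
    have := mul_le_mul_of_nonneg_left ((dq_integral_le hh S.df S.sfx).trans S.bfx) (sq_nonneg α)
    linarith [S.bg]
  have d4 : ∫ x, (α * dq h fx x + gx x) ^ 2 ≤ 2 * α ^ 2 * (c1 * (1 + N)) + 2 * B := by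
    have := mul_le_mul_of_nonneg_left ((dq_integral_le hh dfx sfxx).trans b1) (sq_nonneg α)
    linarith [S.bgx]
  have eW : ∫ x, ((α * dq h f x + g x) / v x) ^ 2 ≤ c0 := bW.trans (by rw [hc0]; gcongr)
  have eW' : ∫ x, W' x ^ 2 ≤ c2 * (1 + N) := by
    have h1 : (∫ x, (α * dq h f x + g x) ^ 2) + (∫ x, (α * dq h fx x + gx x) ^ 2)
        ≤ (2 * α ^ 2 * B + 2 * B + 2 * α ^ 2 * c1 + 2 * B) * (1 + N) := by
      have : 0 ≤ α ^ 2 * B * N := by positivity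
      have : 0 ≤ B * N := by positivity
      linarith
    exact bW'.trans ((mul_le_mul_of_nonneg_left h1 (by positivity)).trans_eq (by rw [hc2]; ring))
  rw [dqRate_eq dW sW sW' (fun x => rfl) S.sux S.sφ S.sγ]
  have hh' : -h ≠ 0 := neg_ne_zero.2 hh
  have k1 := two_mul_integral_le (dq_sq (-h) sW) S.sφ one_pos
  have k2 := two_mul_integral_le sW S.sγ one_pos
  have k3 := cubic_le dW sW sW' S.sux one_pos
  have k4 := dq_integral_le hh' dW sW'
  simp only [inv_one, one_mul] at k1 k2
  set Φ := ∫ x, φ x ^ 2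
  set Γ := ∫ x, γ x ^ 2
  have hΦ : 0 ≤ Φ := integral_sq_nonneg φ
  have hΓ : 0 ≤ Γ := integral_sq_nonneg γ
  have k5 : (∫ x, ((α * dq h f x + g x) / v x) ^ 2) * (∫ x, ux x ^ 2) ≤ c0 * B := by
    have := integral_sq_nonneg ux
    gcongr
    exact S.bux
  have hB0 : 0 ≤ c0 * B := by positivity
  refine rate_arith hα.le hc00 hc20 hB0 hN0 hΦ hΓ ?_ ?_ ?_
  · linarith [abs_nonneg (∫ x, dq (-h) (fun y => (α * dq h f y + g y) / v y) x * φ x)]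
  · linarith [abs_nonneg (∫ x, (α * dq h f x + g x) / v x * γ x)]
  · norm_num at k3
    linarith

end FluxSlice

/-! ### The balance law for the squared fluxes, integrated in time -/

/-- A flux `P = (α fₓ + g) / v` on the strip `[0, T]`, where `f`, `g`, `v` are differentiable in
time with derivatives `φ`, `γ`, `uₓ`, while `P` itself need not be. -/
structure FluxFlow (α K T B : ℝ) (v vx ux f fx g gx P Px φ γ : ℝ → ℝ → ℝ) : Prop where
  dtv : ∀ x, ∀ t ∈ Icc 0 T, HasDerivAt (v x) (ux x t) t
  dtf : ∀ x, ∀ t ∈ Icc 0 T, HasDerivAt (f x) (φ x t) t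
  dtg : ∀ x, ∀ t ∈ Icc 0 T, HasDerivAt (g x) (γ x t) t
  mv : Meas v
  lux : StripL2 T ux
  lf : StripL2 T f
  lg : StripL2 T g
  lφ : StripL2 T φ
  lγ : StripL2 T γ
  lPx : StripL2 T Px
  dv : ∀ t ∈ Icc 0 T, ∀ x, HasDerivAt (fun y => v y t) (vx x t) x
  df : ∀ t ∈ Icc 0 T, ∀ x, HasDerivAt (fun y => f y t) (fx x t) x
  dg : ∀ t ∈ Icc 0 T, ∀ x, HasDerivAt (fun y => g y t) (gx x t) x
  sf : ∀ t ∈ Icc 0 T, Sq fun x => f x t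
  sfx : ∀ t ∈ Icc 0 T, Sq fun x => fx x t
  sg : ∀ t ∈ Icc 0 T, Sq fun x => g x t
  sgx : ∀ t ∈ Icc 0 T, Sq fun x => gx x t
  bf : ∀ t ∈ Icc 0 T, ∫ x, f x t ^ 2 ≤ B
  bfx : ∀ t ∈ Icc 0 T, ∫ x, fx x t ^ 2 ≤ B
  bg : ∀ t ∈ Icc 0 T, ∫ x, g x t ^ 2 ≤ B
  bgx : ∀ t ∈ Icc 0 T, ∫ x, gx x t ^ 2 ≤ B
  vlo : ∀ x, ∀ t ∈ Icc 0 T, K⁻¹ ≤ v x t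
  vhi : ∀ x, ∀ t ∈ Icc 0 T, v x t ≤ K
  eP : ∀ x, ∀ t ∈ Icc 0 T, P x t = (α * fx x t + g x t) / v x t
  sl : ∀ᵐ t ∂volume.restrict (Icc 0 T), FluxSlice α K B (fun x => v x t) (fun x => vx x t)
    (fun x => ux x t) (fun x => f x t) (fun x => fx x t) (fun x => g x t) (fun x => gx x t)
    (fun x => P x t) (fun x => Px x t) (fun x => φ x t) (fun x => γ x t)

namespace FluxFlow

variable {α K T B : ℝ} {v vx ux f fx g gx P Px φ γ : ℝ → ℝ → ℝ}

lemma vpos (hK : 1 ≤ K) (S : FluxFlow α K T B v vx ux f fx g gx P Px φ γ) (x : ℝ) {t : ℝ}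
    (ht : t ∈ Icc 0 T) : 0 < v x t :=
  (inv_pos.2 (by linarith)).trans_le (S.vlo x t ht)

lemma inv_bdd (hK : 1 ≤ K) (S : FluxFlow α K T B v vx ux f fx g gx P Px φ γ) (x : ℝ) {t : ℝ}
    (ht : t ∈ Icc 0 T) : |(v x t)⁻¹| ≤ K := by
  have := S.vpos hK x ht
  rw [abs_of_pos (inv_pos.2 this), inv_le_comm₀ this (by linarith)]
  exact S.vlo x t ht

lemma cont_v (S : FluxFlow α K T B v vx ux f fx g gx P Px φ γ) {t : ℝ} (ht : t ∈ Icc 0 T) :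
    Continuous fun x => v x t :=
  continuous_iff_continuousAt.2 fun x => (S.dv t ht x).continuousAt

/-- The balance law for the discrete flux. -/
lemma dq_balance (hK : 1 ≤ K) (S : FluxFlow α K T B v vx ux f fx g gx P Px φ γ) (h : ℝ) :
    IntegrableOn (fun t => dqRate α h (fun x => v x t) (fun x => ux x t) (fun x => f x t)
      (fun x => g x t) (fun x => φ x t) (fun x => γ x t)) (Icc 0 T) ∧
    ∀ s t, 0 ≤ s → s ≤ t → t ≤ T →
      ∫ x, (α * dq h (fun y => f y t) x + g x t) ^ 2 / (2 * v x t)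
        = (∫ x, (α * dq h (fun y => f y s) x + g x s) ^ 2 / (2 * v x s))
          + ∫ τ in s..t, dqRate α h (fun x => v x τ) (fun x => ux x τ) (fun x => f x τ)
      (fun x => g x τ) (fun x => φ x τ) (fun x => γ x τ) := by
  have lF : StripL2 T fun x t => α * dq h (fun y => f y t) x + g x t :=
    ((S.lf.dq h).const_mul α).add S.lg
  have lW : StripL2 T fun x t => (α * dq h (fun y => f y t) x + g x t) / v x t :=
    (lF.bdd_mul (S.mv.comp measurable_inv) fun x t ht => S.inv_bdd hK x ht).congr
      fun x t => by ring
  have hfb : ∀ x, ∀ t ∈ Icc 0 T, |f x t| ≤ √(2 * B) := fun x t ht => Real.abs_le_sqrt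
    ((sup_sq_le' (S.df t ht) (S.sf t ht) (S.sfx t ht) x).trans
      (by linarith [S.bf t ht, S.bfx t ht]))
  have hgb : ∀ x, ∀ t ∈ Icc 0 T, |g x t| ≤ √(2 * B) := fun x t ht => Real.abs_le_sqrt
    ((sup_sq_le' (S.dg t ht) (S.sg t ht) (S.sgx t ht) x).trans
      (by linarith [S.bg t ht, S.bgx t ht]))
  have hWb : ∀ x, ∀ t ∈ Icc 0 T, |(α * dq h (fun y => f y t) x + g x t) / v x t|
      ≤ (|α| * ((√(2 * B) + √(2 * B)) / |h|) + √(2 * B)) * K := by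
    intro x t ht
    rw [div_eq_mul_inv, abs_mul]
    refine mul_le_mul ?_ (S.inv_bdd hK x ht) (abs_nonneg _) (by positivity)
    refine (abs_add_le _ _).trans ?_
    rw [abs_mul]
    gcongr
    · unfold dq
      rw [abs_div]
      gcongr
      exact (abs_sub _ _).trans (add_le_add (hfb _ t ht) (hfb _ t ht))
    · exact hgb x t ht
  have lΨ : Integrable (Function.uncurry fun x t =>
      (α * dq h (fun y => f y t) x + g x t) / v x t * (α * dq h (fun y => φ y t) x + γ x t)
      - ((α * dq h (fun y => f y t) x + g x t) / v x t) ^ 2 * ux x t / 2) (strip T) := by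
    refine strip_int_sub (lW.mul_int (((S.lφ.dq h).const_mul α).add S.lγ)) ?_
    have := strip_int_const_mul (lW.mul_int (S.lux.bdd_mul lW.1 hWb)) (1 / 2)
    convert! this using 1
    ext z
    simp only [Function.uncurry]; ring
  refine ⟨lΨ.integral_prod_right, fun s t hs hst ht => ?_⟩
  refine (time_ftc (Φ := fun x t => (α * dq h (fun y => f y t) x + g x t) ^ 2 / (2 * v x t)) hs hst
    ht (fun x τ hτ => ?_) lΨ ?_).2
  · have h1 : HasDerivAt (fun t => α * dq h (fun y => f y t) x + g x t)
        (α * dq h (fun y => φ y τ) x + γ x τ) τ :=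
      ((((S.dtf (x + h) τ hτ).sub (S.dtf x τ hτ)).div_const h).const_mul α).add (S.dtg x τ hτ)
    have hv := S.vpos hK x hτ
    have h2 := (h1.pow 2).div ((S.dtv x τ hτ).const_mul 2) (by positivity)
    convert! h2 using 1
    simp only [Pi.pow_apply]
    field_simp
    push_cast
    ring
  · have hs' : s ∈ Icc 0 T := ⟨hs, hst.trans ht⟩
    have ci : Continuous fun x => (v x s)⁻¹ := (S.cont_v hs').inv₀ fun x => (S.vpos hK x hs').ne'
    have s1 := ((dq_sq h (S.sf s hs')).const_mul α).add (S.sg s hs')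
    have := (s1.mul_int (s1.bdd_mul ci fun x => S.inv_bdd hK x hs')).div_const 2
    refine this.congr (Eventually.of_forall fun x => ?_)
    have hv := S.vpos hK x hs'
    simp only
    field_simp

/-- The balance law for the flux, obtained from that of the discrete fluxes by letting `h → 0`. -/
theorem balance (hα : 0 < α) (hK : 1 ≤ K) (hB : 0 ≤ B)
    (S : FluxFlow α K T B v vx ux f fx g gx P Px φ γ) :
    IntegrableOn (fun t => fluxRate α (fun x => ux x t) (fun x => P x t) (fun x => Px x t)
      (fun x => φ x t) (fun x => γ x t)) (Icc 0 T) ∧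
    ∀ s t, 0 ≤ s → s ≤ t → t ≤ T → ∫ x, v x t * P x t ^ 2 / 2 = (∫ x, v x s * P x s ^ 2 / 2)
      + ∫ τ in s..t, fluxRate α (fun x => ux x τ) (fun x => P x τ) (fun x => Px x τ)
      (fun x => φ x τ) (fun x => γ x τ) := by
  set h : ℕ → ℝ := fun n => 1 / ((n : ℝ) + 1) with hdef
  have hh : ∀ n, h n ≠ 0 := fun n => by simp only [hdef]; positivity
  have hlim : Tendsto h atTop (nhds 0) := tendsto_one_div_add_atTop_nhds_zero_nat
  obtain ⟨C, hC, hbd⟩ := FluxSlice.dqRate_le hα hK hB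
  set bd : ℝ → ℝ := fun t => C * (1 + (∫ x, Px x t ^ 2) + (∫ x, φ x t ^ 2) + ∫ x, γ x t ^ 2)
  set J : ℕ → ℝ → ℝ := fun n t => dqRate α (h n) (fun x => v x t) (fun x => ux x t)
    (fun x => f x t) (fun x => g x t) (fun x => φ x t) (fun x => γ x t) with hJ
  set J' : ℝ → ℝ := fun t => fluxRate α (fun x => ux x t) (fun x => P x t) (fun x => Px x t)
      (fun x => φ x t) (fun x => γ x t) with hJ'
  have ibd : IntegrableOn bd (Icc 0 T) := by
    have h0 : IntegrableOn (fun _ : ℝ => (1 : ℝ)) (Icc 0 T) := by simp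
    exact (((h0.add S.lPx.slice_int).add S.lφ.slice_int).add S.lγ.slice_int).const_mul C
  have hle : ∀ᵐ t ∂volume.restrict (Icc 0 T), ∀ n, ‖J n t‖ ≤ bd t :=
    S.sl.mono fun t ht n => hbd _ _ _ _ _ _ _ _ _ _ _ ht (h n) (hh n)
  have hto : ∀ᵐ t ∂volume.restrict (Icc 0 T), Tendsto (fun n => J n t) atTop (nhds (J' t)) :=
    S.sl.mono fun t ht => ht.dqRate_tendsto hα hK hh hlim
  have iJ' : IntegrableOn J' (Icc 0 T) := by
    refine ibd.mono' (aestronglyMeasurable_of_tendsto_ae atTop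
      (fun n => ((S.dq_balance hK (h n)).1).1) hto) ?_
    filter_upwards [hle, hto] with t h1 h2
    exact le_of_tendsto h2.norm (Eventually.of_forall fun n => h1 n)
  refine ⟨iJ', fun s t hs hst ht => ?_⟩
  have hsub : Ioc s t ⊆ Icc 0 T := fun τ hτ => ⟨hs.trans hτ.1.le, hτ.2.trans ht⟩
  have t1 : Tendsto (fun n => ∫ τ in s..t, J n τ) atTop (nhds (∫ τ in s..t, J' τ)) := by
    refine intervalIntegral.tendsto_integral_filter_of_dominated_convergence bd
      (Eventually.of_forall fun n => ?_) (Eventually.of_forall fun n => ?_) ?_ ?_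
    · rw [uIoc_of_le hst]
      exact (((S.dq_balance hK (h n)).1).mono_set hsub).1
    · rw [uIoc_of_le hst, ← ae_restrict_iff' measurableSet_Ioc]
      exact ae_restrict_of_ae_restrict_of_subset hsub (hle.mono fun t ht => ht n)
    · rw [intervalIntegrable_iff_integrableOn_Ioc_of_le hst]
      exact ibd.mono_set hsub
    · rw [uIoc_of_le hst, ← ae_restrict_iff' measurableSet_Ioc]
      exact ae_restrict_of_ae_restrict_of_subset hsub hto
  have t2 : ∀ τ ∈ Icc 0 T, Tendsto (fun n => ∫ x, (α * dq (h n) (fun y => f y τ) x + g x τ) ^ 2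
      / (2 * v x τ)) atTop (nhds (∫ x, v x τ * P x τ ^ 2 / 2)) := by
    intro τ hτ
    have hv := fun x => S.vpos hK x hτ
    have ci : Continuous fun x => (v x τ)⁻¹ := (S.cont_v hτ).inv₀ fun x => (hv x).ne'
    have bi := fun x => S.inv_bdd hK x hτ
    set e : ℕ → ℝ → ℝ := fun n x => dq (h n) (fun y => f y τ) x - fx x τ
    have se : ∀ n, Sq (e n) := fun n => (dq_sq (h n) (S.sf τ hτ)).sub (S.sfx τ hτ)
    have le : Tendsto (fun n => ∫ x, e n x ^ 2) atTop (nhds 0) :=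
      dq_tendsto hh hlim (S.df τ hτ) (S.sfx τ hτ)
    have sF := ((S.sfx τ hτ).const_mul α).add (S.sg τ hτ)
    have sFv := sF.bdd_mul ci bi
    have sev : ∀ n, Sq fun x => (v x τ)⁻¹ * e n x := fun n => (se n).bdd_mul ci bi
    have i1 := sF.mul_int sFv
    have eq : ∀ n, ∫ x, (α * dq (h n) (fun y => f y τ) x + g x τ) ^ 2 / (2 * v x τ)
        = (∫ x, v x τ * P x τ ^ 2 / 2) + α * (∫ x, e n x * ((v x τ)⁻¹ * (α * fx x τ + g x τ)))
          + α ^ 2 / 2 * ∫ x, e n x * ((v x τ)⁻¹ * e n x) := fun n => by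
      have i0 : Integrable fun x => v x τ * P x τ ^ 2 / 2 := by
        refine (i1.div_const 2).congr (Eventually.of_forall fun x => ?_)
        have := hv x
        simp only [S.eP x τ hτ]
        field_simp
      rw [integral_lin3 i0 ((se n).mul_int sFv) ((se n).mul_int (sev n)) 1 α (α ^ 2 / 2) fun x => ?_]
      · ring
      · have := hv x
        simp only [S.eP x τ hτ, e]
        field_simp
        ring
    simp only [eq]
    have l1 := tendsto_integral_mul se sFv le
    have l2 : Tendsto (fun n => ∫ x, e n x * ((v x τ)⁻¹ * e n x)) atTop (nhds 0) := by
      refine squeeze_zero (fun n => integral_nonneg fun x => ?_) (fun n => ?_)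
        (g := fun n => K * ∫ x, e n x ^ 2) (by simpa using le.const_mul K)
      · have := hv x
        have e1 : e n x * ((v x τ)⁻¹ * e n x) = (v x τ)⁻¹ * e n x ^ 2 := by ring
        simp only [e1, Pi.zero_apply]; positivity
      · rw [← integral_const_mul]
        refine integral_mono ((se n).mul_int (sev n)) ((se n).2.const_mul K) fun x => ?_
        have e1 : e n x * ((v x τ)⁻¹ * e n x) = (v x τ)⁻¹ * e n x ^ 2 := by ring
        simp only [e1]
        exact mul_le_mul_of_nonneg_right ((le_abs_self _).trans (bi x)) (sq_nonneg _)
    have := ((tendsto_const_nhds (x := ∫ x, v x τ * P x τ ^ 2 / 2)).add (l1.const_mul α)).add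
      (l2.const_mul (α ^ 2 / 2))
    simpa using this
  have t3 := (t2 s ⟨hs, hst.trans ht⟩).add t1
  refine tendsto_nhds_unique (t2 t ⟨hs.trans hst, ht⟩) (t3.congr fun n => ?_)
  exact ((S.dq_balance hK (h n)).2 s t hs hst ht).symm

end FluxFlow

namespace NSFlow

variable {μ κ R cv K T B : ℝ} {v u θ vx ux θx G Gx q qx : ℝ → ℝ → ℝ}

lemma vpos (hK : 1 ≤ K) (S : NSFlow μ κ R cv K T B v u θ vx ux θx G Gx q qx) (x : ℝ) {t : ℝ}
    (ht : t ∈ Icc 0 T) : 0 < v x t :=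
  (inv_pos.2 (by linarith)).trans_le (S.vlo x t ht)

lemma mv (S : NSFlow μ κ R cv K T B v u θ vx ux θx G Gx q qx) : Meas v :=
  (S.lv.1.add (Meas.const 1)).congr fun x t _ => by ring

lemma mθ (S : NSFlow μ κ R cv K T B v u θ vx ux θx G Gx q qx) : Meas θ :=
  (S.lθ.1.add (Meas.const 1)).congr fun x t _ => by ring

lemma sq_θt (S : NSFlow μ κ R cv K T B v u θ vx ux θx G Gx q qx) :
    ∀ᵐ t ∂volume.restrict (Icc 0 T), Sq fun x => (qx x t + (G x t - R) * ux x t) / cv := by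
  filter_upwards [S.sl] with t h
  have h1 := h.sux.bdd_mul h.sG.1 fun x => Real.abs_le_sqrt (sup_sq_le' h.dG h.sG h.sGx x)
  exact ((h.sqx.add (h1.sub (h.sux.const_mul R))).const_mul cv⁻¹).congr fun x => by ring

/-- The time derivative of the temperature is square integrable on the strip. -/
lemma lθt (S : NSFlow μ κ R cv K T B v u θ vx ux θx G Gx q qx) :
    StripL2 T fun x t => (qx x t + (G x t - R) * ux x t) / cv := by
  have h1 : StripL2 T fun x t => G x t * ux x t := by
    refine StripL2.of_slice (S.lG.1.mul S.lux.1)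
      (g := fun t => ((∫ x, G x t ^ 2) + ∫ x, Gx x t ^ 2) * B)
      ((S.lG.slice_int.add S.lGx.slice_int).mul_const B) ?_ ?_
    · filter_upwards [S.sl] with t h
      exact (integral_mul_sq_le h.sG.1 h.sux (sup_sq_le' h.dG h.sG h.sGx)).1.2
    · filter_upwards [S.sl, ae_restrict_mem measurableSet_Icc] with t h ht
      refine (integral_mul_sq_le h.sG.1 h.sux (sup_sq_le' h.dG h.sG h.sGx)).2.trans ?_
      exact mul_le_mul_of_nonneg_left (S.bux t ht)
        (add_nonneg (integral_sq_nonneg _) (integral_sq_nonneg _))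
  exact ((S.lqx.add (h1.sub (S.lux.const_mul R))).const_mul cv⁻¹).congr fun x t => by ring

/-- The effective viscous flux is of the form `(α fₓ + g) / v` with `α = μ`, `f = u` and
`g = -R (θ - v)`. -/
lemma visc_flow (hB : 0 ≤ B) (S : NSFlow μ κ R cv K T B v u θ vx ux θx G Gx q qx) :
    FluxFlow μ K T (B + R ^ 2 * (4 * B)) v vx ux u ux (fun x t => -R * (θ x t - v x t))
      (fun x t => -R * (θx x t - vx x t)) G Gx Gx
      (fun x t => -(R * ((qx x t + (G x t - R) * ux x t) / cv - ux x t))) := by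
  have hR : 0 ≤ R ^ 2 * (4 * B) := by positivity
  have sg : ∀ t ∈ Icc 0 T, Sq fun x => -R * (θ x t - v x t) := fun t ht =>
    (((S.sθ t ht).sub (S.sv t ht)).const_mul (-R)).congr fun x => by ring
  have sgx : ∀ t ∈ Icc 0 T, Sq fun x => -R * (θx x t - vx x t) := fun t ht =>
    ((S.sθx t ht).sub (S.svx t ht)).const_mul (-R)
  have bg : ∀ t ∈ Icc 0 T, ∫ x, (-R * (θ x t - v x t)) ^ 2 ≤ B + R ^ 2 * (4 * B) := fun t ht => by
    rw [integral_const_mul_sq, neg_sq]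
    have h1 := integral_sub_sq_le (S.sθ t ht) (S.sv t ht)
    simp only [sub_sub_sub_cancel_right] at h1
    have h2 : ∫ x, (θ x t - v x t) ^ 2 ≤ 4 * B := by linarith [S.bθ t ht, S.bv t ht]
    have := mul_le_mul_of_nonneg_left h2 (sq_nonneg R)
    linarith
  have bgx : ∀ t ∈ Icc 0 T, ∫ x, (-R * (θx x t - vx x t)) ^ 2 ≤ B + R ^ 2 * (4 * B) :=
    fun t ht => by
    rw [integral_const_mul_sq, neg_sq]
    have h1 := integral_sub_sq_le (S.sθx t ht) (S.svx t ht)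
    have h2 : ∫ x, (θx x t - vx x t) ^ 2 ≤ 4 * B := by linarith [S.bθx t ht, S.bvx t ht]
    have := mul_le_mul_of_nonneg_left h2 (sq_nonneg R)
    linarith
  have eP : ∀ x t, G x t = (μ * ux x t + -R * (θ x t - v x t)) / v x t := fun x t => by
    rw [S.eG]; ring
  have dg : ∀ t ∈ Icc 0 T, ∀ x, HasDerivAt (fun y => -R * (θ y t - v y t))
      (-R * (θx x t - vx x t)) x := fun t ht x => ((S.dθ t ht x).sub (S.dv t ht x)).const_mul (-R)
  exact
  { dtv := S.dtv
    dtf := S.dtu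
    dtg := fun x t ht => by
      have := ((S.dtθ x t ht).sub (S.dtv x t ht)).const_mul (-R)
      convert! this using 1
      ring
    mv := S.mv
    lux := S.lux
    lf := S.lu
    lg := ((S.lθ.sub S.lv).const_mul (-R)).congr fun x t => by ring
    lφ := S.lGx
    lγ := ((S.lθt.sub S.lux).const_mul R).neg
    lPx := S.lGx
    dv := S.dv
    df := S.du
    dg := dg
    sf := S.su
    sfx := S.sux
    sg := sg
    sgx := sgx
    bf := fun t ht => by linarith [S.bu t ht]
    bfx := fun t ht => by linarith [S.bux t ht]
    bg := bg
    bgx := bgx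
    vlo := S.vlo
    vhi := S.vhi
    eP := fun x t _ => eP x t
    sl := by
      filter_upwards [S.sl, S.sq_θt, ae_restrict_mem measurableSet_Icc] with t h h2 ht
      exact
      { dv := S.dv t ht
        df := S.du t ht
        dg := dg t ht
        dP := h.dG
        svx := S.svx t ht
        sux := S.sux t ht
        sfx := S.sux t ht
        sg := sg t ht
        sgx := sgx t ht
        sPx := h.sGx
        sφ := h.sGx
        sγ := ((h2.sub h.sux).const_mul R).neg
        bvx := by linarith [S.bvx t ht]
        bux := by linarith [S.bux t ht]
        bfx := by linarith [S.bux t ht]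
        bg := bg t ht
        bgx := bgx t ht
        vlo := fun x => S.vlo x t ht
        vhi := fun x => S.vhi x t ht
        eP := fun x => eP x t } }

/-- The heat flux is of the form `(α fₓ + g) / v` with `α = κ`, `f = θ - 1` and `g = 0`. -/
lemma heat_flow (hB : 0 ≤ B) (S : NSFlow μ κ R cv K T B v u θ vx ux θx G Gx q qx) :
    FluxFlow κ K T B v vx ux (fun x t => θ x t - 1) θx (fun _ _ => 0) (fun _ _ => 0) q qx
      (fun x t => (qx x t + (G x t - R) * ux x t) / cv) (fun _ _ => 0) := by
  have s0 : Sq fun _ : ℝ => (0 : ℝ) := ⟨continuous_const, by simp⟩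
  have l0 : StripL2 T fun _ _ => (0 : ℝ) := ⟨Meas.const 0, by simp [Function.uncurry_def]⟩
  have b0 : ∫ _ : ℝ, (0 : ℝ) ^ 2 ≤ B := by simpa using hB
  have eP : ∀ x t, q x t = (κ * θx x t + 0) / v x t := fun x t => by rw [S.eq]; ring
  exact
  { dtv := S.dtv
    dtf := fun x t ht => (S.dtθ x t ht).sub_const 1
    dtg := fun x t ht => hasDerivAt_const _ _
    mv := S.mv
    lux := S.lux
    lf := S.lθ
    lg := l0
    lφ := S.lθt
    lγ := l0
    lPx := S.lqx
    dv := S.dv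
    df := fun t ht x => (S.dθ t ht x).sub_const 1
    dg := fun t ht x => hasDerivAt_const _ _
    sf := S.sθ
    sfx := S.sθx
    sg := fun _ _ => s0
    sgx := fun _ _ => s0
    bf := S.bθ
    bfx := S.bθx
    bg := fun _ _ => b0
    bgx := fun _ _ => b0
    vlo := S.vlo
    vhi := S.vhi
    eP := fun x t _ => eP x t
    sl := by
      filter_upwards [S.sl, S.sq_θt, ae_restrict_mem measurableSet_Icc] with t h h2 ht
      exact
      { dv := S.dv t ht
        df := fun x => (S.dθ t ht x).sub_const 1
        dg := fun x => hasDerivAt_const _ _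
        dP := h.dq
        svx := S.svx t ht
        sux := S.sux t ht
        sfx := S.sθx t ht
        sg := s0
        sgx := s0
        sPx := h.sqx
        sφ := h2
        sγ := s0
        bvx := S.bvx t ht
        bux := S.bux t ht
        bfx := S.bθx t ht
        bg := b0
        bgx := b0
        vlo := fun x => S.vlo x t ht
        vhi := fun x => S.vhi x t ht
        eP := fun x => eP x t } }

end NSFlow

/-! ### Lower bound for the temperature and the entropy estimate -/

lemma eq_zero_of_integral_le_zero {f : ℝ → ℝ} (hc : Continuous f) (h0 : ∀ x, 0 ≤ f x)
    (hi : Integrable f) (h : ∫ x, f x ≤ 0) (x : ℝ) : f x = 0 := by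
  have h1 : f =ᵐ[volume] 0 := (integral_eq_zero_iff_of_nonneg h0 hi).1
    (le_antisymm h (integral_nonneg h0))
  exact congrFun ((hc.ae_eq_iff_eq volume continuous_zero).1 h1) x

lemma intervalIntegral_nonpos_of_ae {f : ℝ → ℝ} {T t : ℝ} (ht : t ∈ Icc 0 T)
    (h : ∀ᵐ τ ∂volume.restrict (Icc 0 T), f τ ≤ 0) : ∫ τ in (0 : ℝ)..t, f τ ≤ 0 := by
  rw [intervalIntegral.integral_of_le ht.1]
  refine setIntegral_nonpos_of_ae_restrict ?_
  exact ae_restrict_of_ae_restrict_of_subset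
    (fun x (hx : x ∈ Ioc 0 t) => (⟨hx.1.le, hx.2.trans ht.2⟩ : x ∈ Icc 0 T)) h

/-- The entropy-type energy density of the system relative to the constant state `(1, 0, 1)`. -/
noncomputable def energyDensity (R cv v u θ : ℝ) : ℝ :=
  u ^ 2 / 2 + R * (v - 1 - Real.log v) + cv * (θ - 1 - Real.log θ)

/-- The dissipation rate of the energy on a time slice. -/
noncomputable def dissip (μ κ : ℝ) (v θ ux θx : ℝ → ℝ) : ℝ :=
  ∫ x, (μ * ux x ^ 2 / (v x * θ x) + κ * θx x ^ 2 / (v x * θ x ^ 2))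

lemma sub_log_nonneg {y : ℝ} (hy : 0 < y) : 0 ≤ y - 1 - Real.log y := by
  linarith [Real.log_le_sub_one_of_pos hy]

lemma sub_log_le {y : ℝ} (hy : 0 < y) : y - 1 - Real.log y ≤ y⁻¹ * (y - 1) ^ 2 := by
  have h := Real.one_sub_inv_le_log_of_pos hy
  have e : y⁻¹ * (y - 1) ^ 2 = y - 1 - (1 - y⁻¹) := by field_simp
  linarith

namespace NSFlow

variable {μ κ R cv K T B : ℝ} {v u θ vx ux θx G Gx q qx : ℝ → ℝ → ℝ}

/-- The temperature cannot decay faster than a solution of `k' = -a k²`: the truncation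
`max (k(t) - θ) 0` vanishes initially and the integral of its cube is nonincreasing. -/
lemma lower_bound (hμ : 0 < μ) (hκ : 0 < κ) (hcv : 0 < cv) (hK : 1 ≤ K)
    (S : NSFlow μ κ R cv K T B v u θ vx ux θx G Gx q qx) {k₀ : ℝ} (hk0 : 0 < k₀) (hk1 : k₀ < 1)
    (h0 : ∀ x, k₀ ≤ θ x 0) {t : ℝ} (ht : t ∈ Icc 0 T) (x : ℝ) :
    (k₀⁻¹ + R ^ 2 * K / (4 * μ * cv) * t)⁻¹ ≤ θ x t := by
  have hK0 : 0 < K := by linarith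
  set a := R ^ 2 * K / (4 * μ * cv) with ha
  have ha0 : 0 ≤ a := by positivity
  set k : ℝ → ℝ := fun t => (k₀⁻¹ + a * t)⁻¹ with hk
  have hkd : ∀ τ, 0 ≤ τ → 0 < k₀⁻¹ + a * τ := fun τ hτ => by positivity
  have hkpos : ∀ τ, 0 ≤ τ → 0 < k τ := fun τ hτ => inv_pos.2 (hkd τ hτ)
  have hk1' : 1 < k₀⁻¹ := (one_lt_inv₀ hk0).2 hk1
  have hklt : ∀ τ, 0 ≤ τ → k τ < 1 := fun τ hτ => by
    refine inv_lt_one_of_one_lt₀ ?_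
    nlinarith [mul_nonneg ha0 hτ]
  have hkder : ∀ τ, 0 ≤ τ → HasDerivAt k (-a * k τ ^ 2) τ := fun τ hτ => by
    have h1 : HasDerivAt (fun t : ℝ => k₀⁻¹ + a * t) a τ := by
      simpa using ((hasDerivAt_id τ).const_mul a).const_add k₀⁻¹
    have h2 := h1.inv (hkd τ hτ).ne'
    convert! h2 using 1
    simp only [hk]; field_simp
  have mk : Meas fun _ t => k t := Meas.time (by
    simp only [hk]; exact (by fun_prop : Measurable fun t : ℝ => k₀⁻¹ + a * max t 0).inv)
  have mθ := S.mθ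
  set W : ℝ → ℝ → ℝ := fun x t => max (k t - θ x t) 0 with hW
  have mW : Meas W := (mk.sub mθ).comp (g := fun y => max y 0) (by fun_prop)
  have W0 : ∀ x t, 0 ≤ W x t := fun x t => le_max_right _ _
  have W1 : ∀ x, ∀ t ∈ Icc 0 T, W x t ≤ 1 := fun x t ht =>
    max_le (by linarith [hklt t ht.1, S.θpos x t ht]) zero_le_one
  have Wle : ∀ x, ∀ t ∈ Icc 0 T, W x t ^ 2 ≤ (θ x t - 1) ^ 2 := fun x t ht => by
    have h1 := hklt t ht.1
    rcases max_cases (k t - θ x t) 0 with ⟨h, h'⟩ | ⟨h, h'⟩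
    · simp only [hW, h]; nlinarith
    · simp only [hW, h]; nlinarith [sq_nonneg (θ x t - 1)]
  have lW : StripL2 T W := StripL2.of_le mW S.lθ.2 Wle
  have lWk : StripL2 T fun x t => (-a * k t ^ 2) * W x t :=
    lW.bdd_mul ((Meas.const (-a)).mul (mk.pow 2)) (C := a) fun x t ht => by
      rw [abs_mul, abs_neg, abs_of_nonneg ha0, abs_of_nonneg (sq_nonneg _)]
      have h1 := hklt t ht.1
      have h2 := hkpos t ht.1
      have : k t ^ 2 ≤ 1 := by nlinarith
      nlinarith
  have lWθ : StripL2 T fun x t => W x t * ((qx x t + (G x t - R) * ux x t) / cv) :=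
    S.lθt.bdd_mul mW (C := 1) fun x t ht => by
      rw [abs_of_nonneg (W0 x t)]; exact W1 x t ht
  have hΨ := strip_int_sub (lWk.mul_int lW) (lWθ.mul_int lW)
  have hd : ∀ x, ∀ τ ∈ Icc 0 T, HasDerivAt (fun τ => max (k τ - θ x τ) 0 ^ 3 / 3)
      ((-a * k τ ^ 2) * W x τ * W x τ
        - W x τ * ((qx x τ + (G x τ - R) * ux x τ) / cv) * W x τ) τ := fun x τ hτ => by
    have h1 := (hkder τ hτ.1).sub (S.dtθ x τ hτ)
    have h2 := (hasDerivAt_max_cube (k τ - θ x τ)).comp τ h1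
    convert! h2 using 1
    simp only [hW]; ring
  have T0 : (0 : ℝ) ∈ Icc 0 T := ⟨le_rfl, ht.1.trans ht.2⟩
  have hz : ∀ x, max (k 0 - θ x 0) 0 ^ 3 / 3 = 0 := fun x => by
    have : k 0 - θ x 0 ≤ 0 := by
      have := h0 x
      simp only [hk, mul_zero, add_zero, inv_inv]; linarith
    rw [max_eq_right this]; simp
  obtain ⟨hi, he⟩ := time_ftc (Φ := fun x τ => max (k τ - θ x τ) 0 ^ 3 / 3) le_rfl ht.1 ht.2 hd hΨ
    (by simp only [hz]; exact integrable_zero _ _ _)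
  have hJ : ∀ᵐ τ ∂volume.restrict (Icc 0 T), ∫ x, ((-a * k τ ^ 2) * W x τ * W x τ
        - W x τ * ((qx x τ + (G x τ - R) * ux x τ) / cv) * W x τ) ≤ 0 := by
    filter_upwards [S.sl, ae_restrict_mem measurableSet_Icc] with τ hs hτ
    have h := hs.lower hμ hκ hcv hK (hkpos τ hτ.1) (hklt τ hτ.1) (k' := -a * k τ ^ 2) le_rfl
    refine le_of_eq_of_le (integral_congr_ae (Eventually.of_forall fun x => ?_)) h
    simp only [hW]; ring
  have hle : ∫ x, max (k t - θ x t) 0 ^ 3 / 3 ≤ 0 := by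
    rw [he]
    simp only [hz, integral_zero, zero_add]
    exact intervalIntegral_nonpos_of_ae ht hJ
  have cθ : Continuous fun x => θ x t := by
    have := (S.sθ t ht).1.add_const 1
    simpa using this
  have := eq_zero_of_integral_le_zero (f := fun x => max (k t - θ x t) 0 ^ 3 / 3)
    (by fun_prop) (fun x => by positivity) hi hle x
  have h3 : max (k t - θ x t) 0 = 0 := by
    have : max (k t - θ x t) 0 ^ 3 = 0 := by linarith
    exact pow_eq_zero_iff (by norm_num) |>.1 this
  have := le_max_left (k t - θ x t) 0
  rw [h3] at this
  linarith

/-- The entropy estimate, for a temperature bounded away from zero. -/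
lemma entropy (hcv : 0 < cv) (hK : 1 ≤ K)
    (S : NSFlow μ κ R cv K T B v u θ vx ux θx G Gx q qx) {k : ℝ} (hk0 : 0 < k)
    (hk : ∀ x, ∀ t ∈ Icc 0 T, k ≤ θ x t) :
    IntegrableOn (fun t => dissip μ κ (fun x => v x t) (fun x => θ x t) (fun x => ux x t)
      fun x => θx x t) (Icc 0 T) ∧
    ∀ t ∈ Icc 0 T, Integrable (fun x => energyDensity R cv (v x t) (u x t) (θ x t)) ∧
      (∫ x, energyDensity R cv (v x t) (u x t) (θ x t))
        + (∫ τ in (0 : ℝ)..t, dissip μ κ (fun x => v x τ) (fun x => θ x τ) (fun x => ux x τ)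
            fun x => θx x τ)
        = ∫ x, energyDensity R cv (v x 0) (u x 0) (θ x 0) := by
  have hK0 : 0 < K := by linarith
  have vpos := fun x t (ht : t ∈ Icc 0 T) => S.vpos hK x ht
  have hvi : ∀ x, ∀ t ∈ Icc 0 T, (v x t)⁻¹ ≤ K := fun x t ht =>
    inv_le_of_inv_le₀ hK0 (S.vlo x t ht)
  have hθi : ∀ x, ∀ t ∈ Icc 0 T, (θ x t)⁻¹ ≤ k⁻¹ := fun x t ht => inv_anti₀ hk0 (hk x t ht)
  have mvi : Meas fun x t => (v x t)⁻¹ := S.mv.comp measurable_inv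
  have mθi : Meas fun x t => (θ x t)⁻¹ := S.mθ.comp measurable_inv
  have avi : ∀ x, ∀ t ∈ Icc 0 T, |(v x t)⁻¹| ≤ K := fun x t ht => by
    rw [abs_of_pos (inv_pos.2 (vpos x t ht))]; exact hvi x t ht
  have aθi : ∀ x, ∀ t ∈ Icc 0 T, |(θ x t)⁻¹| ≤ k⁻¹ := fun x t ht => by
    rw [abs_of_pos (inv_pos.2 (S.θpos x t ht))]; exact hθi x t ht
  have l1 := S.lv.bdd_mul mvi avi
  have l2 := S.lθ.bdd_mul mθi aθi
  have hΨ := strip_int_add (strip_int_add (S.lu.mul_int S.lGx)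
    (strip_int_const_mul (l1.mul_int S.lux) R)) (strip_int_const_mul (l2.mul_int S.lθt) cv)
  have l3 := S.lux.bdd_mul (mvi.mul mθi) (C := K * k⁻¹) fun x t ht => by
    rw [abs_mul]
    exact mul_le_mul (avi x t ht) (aθi x t ht) (abs_nonneg _) hK0.le
  have l4 := S.lθx.bdd_mul ((mvi.mul mθi).mul mθi) (C := K * k⁻¹ * k⁻¹) fun x t ht => by
    rw [abs_mul, abs_mul]
    exact mul_le_mul (mul_le_mul (avi x t ht) (aθi x t ht) (abs_nonneg _) hK0.le) (aθi x t ht)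
      (abs_nonneg _) (by positivity)
  have hD := strip_int_add (strip_int_const_mul (l3.mul_int S.lux) μ)
    (strip_int_const_mul (l4.mul_int S.lθx) κ)
  have eD : ∀ t, dissip μ κ (fun x => v x t) (fun x => θ x t) (fun x => ux x t)
      (fun x => θx x t) = ∫ x, (μ * ((v x t)⁻¹ * (θ x t)⁻¹ * ux x t * ux x t)
        + κ * ((v x t)⁻¹ * (θ x t)⁻¹ * (θ x t)⁻¹ * θx x t * θx x t)) := fun t => by
    unfold dissip
    refine integral_congr_ae (Eventually.of_forall fun x => ?_)
    simp only [div_eq_mul_inv, mul_inv, sq]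
    ring
  refine ⟨?_, fun t ht => ?_⟩
  · simp only [eD]
    exact hD.integral_prod_right
  have hd : ∀ x, ∀ τ ∈ Icc 0 T, HasDerivAt (fun τ => energyDensity R cv (v x τ) (u x τ) (θ x τ))
      (u x τ * Gx x τ + R * ((v x τ)⁻¹ * (v x τ - 1) * ux x τ)
        + cv * ((θ x τ)⁻¹ * (θ x τ - 1) * ((qx x τ + (G x τ - R) * ux x τ) / cv))) τ :=
    fun x τ hτ => by
    have hv := (vpos x τ hτ).ne'
    have hθ := (S.θpos x τ hτ).ne'
    have h1 := ((S.dtu x τ hτ).pow 2).div_const 2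
    have h2 := (((S.dtv x τ hτ).sub_const 1).sub ((S.dtv x τ hτ).log hv)).const_mul R
    have h3 := (((S.dtθ x τ hτ).sub_const 1).sub ((S.dtθ x τ hτ).log hθ)).const_mul cv
    have h4 := (h1.add h2).add h3
    unfold energyDensity
    convert! h4 using 1
    simp only [Nat.cast_ofNat]
    field_simp
    ring
  have T0 : (0 : ℝ) ∈ Icc 0 T := ⟨le_rfl, ht.1.trans ht.2⟩
  have h0 : Integrable fun x => energyDensity R cv (v x 0) (u x 0) (θ x 0) := by
    have cu := (S.su 0 T0).1
    have cv' : Continuous fun x => v x 0 := by simpa using (S.sv 0 T0).1.add_const 1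
    have cθ : Continuous fun x => θ x 0 := by simpa using (S.sθ 0 T0).1.add_const 1
    have clv : Continuous fun x => Real.log (v x 0) := cv'.log fun x => (vpos x 0 T0).ne'
    have clθ : Continuous fun x => Real.log (θ x 0) := cθ.log fun x => (S.θpos x 0 T0).ne'
    have i1 : Integrable fun x => v x 0 - 1 - Real.log (v x 0) := by
      refine ((S.sv 0 T0).2.const_mul K).mono' (by fun_prop) (Eventually.of_forall fun x => ?_)
      have hv := vpos x 0 T0
      rw [Real.norm_eq_abs, abs_of_nonneg (sub_log_nonneg hv)]
      exact (sub_log_le hv).trans (mul_le_mul_of_nonneg_right (hvi x 0 T0) (sq_nonneg _))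
    have i2 : Integrable fun x => θ x 0 - 1 - Real.log (θ x 0) := by
      refine ((S.sθ 0 T0).2.const_mul k⁻¹).mono' (by fun_prop) (Eventually.of_forall fun x => ?_)
      have hv := S.θpos x 0 T0
      rw [Real.norm_eq_abs, abs_of_nonneg (sub_log_nonneg hv)]
      exact (sub_log_le hv).trans (mul_le_mul_of_nonneg_right (hθi x 0 T0) (sq_nonneg _))
    exact (((S.su 0 T0).2.div_const 2).add (i1.const_mul R)).add (i2.const_mul cv)
  obtain ⟨hi, he⟩ := time_ftc le_rfl ht.1 ht.2 hd hΨ h0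
  refine ⟨hi, ?_⟩
  rw [he]
  have hJ : ∀ᵐ τ ∂volume.restrict (Icc 0 T), ∫ x, (u x τ * Gx x τ
        + R * ((v x τ)⁻¹ * (v x τ - 1) * ux x τ)
        + cv * ((θ x τ)⁻¹ * (θ x τ - 1) * ((qx x τ + (G x τ - R) * ux x τ) / cv)))
      = - dissip μ κ (fun x => v x τ) (fun x => θ x τ) (fun x => ux x τ)
            fun x => θx x τ := by
    filter_upwards [S.sl, ae_restrict_mem measurableSet_Icc] with τ hs hτ
    have h := hs.energy hK hk0 (fun x => hk x τ hτ)
    unfold dissip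
    rw [← h]
    refine integral_congr_ae (Eventually.of_forall fun x => ?_)
    have hv := (vpos x τ hτ).ne'
    have hθ := (S.θpos x τ hτ).ne'
    simp only
    field_simp
  have hsum : (∫ τ in (0 : ℝ)..t, ∫ x, (u x τ * Gx x τ
        + R * ((v x τ)⁻¹ * (v x τ - 1) * ux x τ)
        + cv * ((θ x τ)⁻¹ * (θ x τ - 1) * ((qx x τ + (G x τ - R) * ux x τ) / cv))))
      = ∫ τ in (0 : ℝ)..t, - dissip μ κ (fun x => v x τ) (fun x => θ x τ) (fun x => ux x τ)
            fun x => θx x τ := by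
    rw [intervalIntegral.integral_of_le ht.1, intervalIntegral.integral_of_le ht.1]
    exact integral_congr_ae (ae_restrict_of_ae_restrict_of_subset
      (fun x (hx : x ∈ Ioc 0 t) => (⟨hx.1.le, hx.2.trans ht.2⟩ : x ∈ Icc 0 T)) hJ)
  rw [hsum, intervalIntegral.integral_neg]
  ring

end NSFlow

/-! ### Upper bounds on a finite time interval -/

namespace NSFlow

variable {μ κ R cv K T B : ℝ} {v u θ vx ux θx G Gx q qx : ℝ → ℝ → ℝ}

lemma cont_v (S : NSFlow μ κ R cv K T B v u θ vx ux θx G Gx q qx) {t : ℝ} (ht : t ∈ Icc 0 T) :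
    Continuous fun x => v x t := by simpa using (S.sv t ht).1.add_const 1

lemma inv_v_le (hK : 1 ≤ K) (S : NSFlow μ κ R cv K T B v u θ vx ux θx G Gx q qx) {t : ℝ}
    (ht : t ∈ Icc 0 T) (x : ℝ) : |(v x t)⁻¹| ≤ K := by
  rw [abs_of_pos (inv_pos.2 (S.vpos hK x ht))]
  exact inv_le_of_inv_le₀ (by linarith) (S.vlo x t ht)

lemma sG (hK : 1 ≤ K) (S : NSFlow μ κ R cv K T B v u θ vx ux θx G Gx q qx) {t : ℝ}
    (ht : t ∈ Icc 0 T) : Sq fun x => G x t := by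
  have h := (((S.sux t ht).const_mul μ).sub (((S.sθ t ht).sub (S.sv t ht)).const_mul R)).bdd_mul
    ((S.cont_v ht).inv₀ fun x => (S.vpos hK x ht).ne') (S.inv_v_le hK ht)
  exact h.congr fun x => by rw [S.eG, Pi.inv_apply]; ring

lemma sq (hK : 1 ≤ K) (S : NSFlow μ κ R cv K T B v u θ vx ux θx G Gx q qx) {t : ℝ}
    (ht : t ∈ Icc 0 T) : Sq fun x => q x t := by
  have h := ((S.sθx t ht).const_mul κ).bdd_mul
    ((S.cont_v ht).inv₀ fun x => (S.vpos hK x ht).ne') (S.inv_v_le hK ht)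
  exact h.congr fun x => by rw [S.eq, Pi.inv_apply]; ring

lemma int_mul_sq (S : NSFlow μ κ R cv K T B v u θ vx ux θx G Gx q qx) {t : ℝ}
    (hK : 1 ≤ K) (ht : t ∈ Icc 0 T) {f : ℝ → ℝ} (sf : Sq f) :
    Integrable fun x => v x t * f x ^ 2 / 2 := by
  have h := ((sf.bdd_mul (S.cont_v ht) (C := K) fun x => by
    rw [abs_of_pos (S.vpos hK x ht)]; exact S.vhi x t ht).mul_int sf).div_const 2
  exact h.congr (Eventually.of_forall fun x => by simp only; ring)

/-- Control of `θ - 1` in `L²` and of the gradients in `L²(dx dt)`, through the quartic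
functional. -/
lemma quartic_bound (hμ : 0 < μ) (hκ : 0 < κ) (hR : 0 < R) (hcv : 0 < cv) (hK : 1 ≤ K)
    {E : ℝ} (hE : 0 < E) (hT : 0 < T) :
    ∃ C > 0, ∀ (B : ℝ) (v u θ vx ux θx G Gx q qx : ℝ → ℝ → ℝ),
      NSFlow μ κ R cv K T B v u θ vx ux θx G Gx q qx →
      (∀ t ∈ Icc 0 T, ∫ x, u x t ^ 2 ≤ E) → (∀ t ∈ Icc 0 T, ∫ x, (v x t - 1) ^ 2 ≤ E) →
      (∫ x, (θ x 0 - 1) ^ 2 ≤ E) → (∫ x, ux x 0 ^ 2 ≤ E) →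
      (∀ t ∈ Icc 0 T, ∫ x, (θ x t - 1) ^ 2 ≤ C) ∧
        ∫ τ in (0 : ℝ)..T, ((∫ x, θx x τ ^ 2) + ∫ x, ux x τ ^ 2) ≤ C := by
  obtain ⟨C₀, hC₀, c, hc, hq⟩ := Slice.quartic hμ hκ hR hcv hK hE
  have hA := quarticWeight_pos hμ hκ hcv
  set A := quarticWeight μ κ cv with hAdef
  set Y₀ := cv ^ 2 * E + (E / 2 + A * E / 2 + 1 / 2) * E with hY₀
  set C₁ := (Y₀ + C₀ * T) * 2 ^ ⌈2 * (C₀ * T)⌉₊ with hC₁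
  have hY₀0 : 0 < Y₀ := by positivity
  have hC₁0 : 0 < C₁ := by positivity
  refine ⟨(4 + 2 / A) / cv ^ 2 * C₁ + C₁ / c, by positivity, ?_⟩
  intro B v u θ vx ux θx G Gx q qx S hu hv hθ₀ hux₀
  have T0 : (0 : ℝ) ∈ Icc 0 T := ⟨le_rfl, hT.le⟩
  have TT : T ∈ Icc 0 T := ⟨hT.le, le_rfl⟩
  have bu : ∀ x, ∀ t ∈ Icc 0 T, u x t ^ 2 ≤ 2 * B := fun x t ht => by
    have := sup_sq_le' (S.du t ht) (S.su t ht) (S.sux t ht) x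
    linarith [S.bu t ht, S.bux t ht]
  have bu' : ∀ x, ∀ t ∈ Icc 0 T, |u x t| ≤ √(2 * B) := fun x t ht =>
    Real.abs_le_sqrt (bu x t ht)
  have bu2 : ∀ x, ∀ t ∈ Icc 0 T, |u x t ^ 2| ≤ 2 * B := fun x t ht => by
    rw [abs_of_nonneg (sq_nonneg _)]; exact bu x t ht
  have luu : StripL2 T fun x t => u x t * u x t := S.lu.bdd_mul S.lu.1 bu'
  have luG : StripL2 T fun x t => u x t * Gx x t := S.lGx.bdd_mul S.lu.1 bu'
  have lw : StripL2 T fun x t => cv * (θ x t - 1) + 1 / 2 * (u x t * u x t) :=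
    (S.lθ.const_mul cv).add (luu.const_mul (1 / 2))
  have lw' := (S.lθt.const_mul cv).add luG
  have l3 := S.lu.bdd_mul (S.lu.1.pow 2) bu2
  have hΨ := strip_int_add (strip_int_add (lw.mul_int lw')
    (strip_int_const_mul (l3.mul_int S.lGx) A)) (S.lu.mul_int S.lGx)
  have hd : ∀ x, ∀ τ ∈ Icc 0 T, HasDerivAt (fun τ => quarticDensity μ κ cv (u x τ) (θ x τ))
      ((cv * (θ x τ - 1) + 1 / 2 * (u x τ * u x τ))
        * (cv * ((qx x τ + (G x τ - R) * ux x τ) / cv) + u x τ * Gx x τ)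
        + A * (u x τ ^ 2 * u x τ * Gx x τ) + u x τ * Gx x τ) τ := fun x τ hτ => by
    have du := S.dtu x τ hτ
    have h1 := (((((S.dtθ x τ hτ).sub_const 1).const_mul cv).add
      ((du.pow 2).div_const 2)).pow 2).div_const 2
    have h2 := ((du.pow 4).const_mul A).div_const 4
    have h4 := (h1.add h2).add ((du.pow 2).div_const 2)
    unfold quarticDensity
    convert! h4 using 1
    simp only [Nat.cast_ofNat, Pi.add_apply, Pi.pow_apply]
    norm_num
    ring
  have hsup : ∀ x, u x 0 ^ 2 ≤ 2 * E := fun x => by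
    have := sup_sq_le' (S.du 0 T0) (S.su 0 T0) (S.sux 0 T0) x
    linarith [hu 0 T0]
  have hpt : ∀ x, quarticDensity μ κ cv (u x 0) (θ x 0)
      ≤ cv ^ 2 * (θ x 0 - 1) ^ 2 + (E / 2 + A * E / 2 + 1 / 2) * u x 0 ^ 2 := fun x => by
    have h1 := hsup x
    have h2 : u x 0 ^ 4 ≤ 2 * E * u x 0 ^ 2 := by nlinarith [sq_nonneg (u x 0)]
    have h3 : (cv * (θ x 0 - 1) + u x 0 ^ 2 / 2) ^ 2
        ≤ 2 * (cv ^ 2 * (θ x 0 - 1) ^ 2) + u x 0 ^ 4 / 2 := by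
      nlinarith [sq_nonneg (cv * (θ x 0 - 1) - u x 0 ^ 2 / 2)]
    unfold quarticDensity
    rw [← hAdef]
    nlinarith [mul_le_mul_of_nonneg_left h2 hA.le]
  have ib : Integrable fun x => cv ^ 2 * (θ x 0 - 1) ^ 2
      + (E / 2 + A * E / 2 + 1 / 2) * u x 0 ^ 2 :=
    ((S.sθ 0 T0).2.const_mul _).add ((S.su 0 T0).2.const_mul _)
  have i0 : Integrable fun x => quarticDensity μ κ cv (u x 0) (θ x 0) := by
    have cu := (S.su 0 T0).1
    have cθ : Continuous fun x => θ x 0 := by simpa using (S.sθ 0 T0).1.add_const 1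
    refine ib.mono' (by unfold quarticDensity; fun_prop) (Eventually.of_forall fun x => ?_)
    rw [Real.norm_eq_abs, abs_of_nonneg (quarticDensity_nonneg hμ hκ hcv _ _)]
    exact hpt x
  have hY0 : ∫ x, quarticDensity μ κ cv (u x 0) (θ x 0) ≤ Y₀ := by
    refine (integral_mono i0 ib hpt).trans ?_
    rw [integral_add ((S.sθ 0 T0).2.const_mul _) ((S.su 0 T0).2.const_mul _), integral_const_mul,
      integral_const_mul, hY₀]
    have := hu 0 T0
    gcongr
  have ftc := fun t (ht : t ∈ Icc 0 T) => time_ftc le_rfl ht.1 ht.2 hd hΨ i0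
  have hJ : ∀ᵐ τ ∂volume.restrict (Icc 0 T),
      (∫ x, ((cv * (θ x τ - 1) + 1 / 2 * (u x τ * u x τ))
        * (cv * ((qx x τ + (G x τ - R) * ux x τ) / cv) + u x τ * Gx x τ)
        + A * (u x τ ^ 2 * u x τ * Gx x τ) + u x τ * Gx x τ))
      + c * ((∫ x, θx x τ ^ 2) + ∫ x, ux x τ ^ 2)
      ≤ C₀ * (∫ x, quarticDensity μ κ cv (u x τ) (θ x τ)) + C₀ := by
    filter_upwards [S.sl, ae_restrict_mem measurableSet_Icc] with τ hs hτ
    have h := hq _ _ _ _ _ _ _ _ _ hs (hu τ hτ) (hv τ hτ)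
    have e : (∫ x, ((cv * (θ x τ - 1) + 1 / 2 * (u x τ * u x τ))
        * (cv * ((qx x τ + (G x τ - R) * ux x τ) / cv) + u x τ * Gx x τ)
        + A * (u x τ ^ 2 * u x τ * Gx x τ) + u x τ * Gx x τ))
        = ∫ x, ((cv * (θ x τ - 1) + u x τ ^ 2 / 2)
          * (qx x τ + (G x τ - R) * ux x τ + u x τ * Gx x τ)
          + A * u x τ ^ 3 * Gx x τ + u x τ * Gx x τ) := by
      refine integral_congr_ae (Eventually.of_forall fun x => ?_)
      simp only
      rw [mul_div_cancel₀ _ hcv.ne']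
      ring
    rw [e]
    linarith
  have iconst : ∀ r : ℝ, IntegrableOn (fun _ : ℝ => r) (Icc 0 T) := fun r =>
    integrableOn_const (by simp)
  have gr := gronwall_integral (s := 0) (T := T)
    (Y := fun t => ∫ x, quarticDensity μ κ cv (u x t) (θ x t)) (a := fun _ => C₀)
    (b := fun _ => C₀) (d := fun τ => c * ((∫ x, θx x τ ^ 2) + ∫ x, ux x τ ^ 2))
    (A := C₀ * T) (B := C₀ * T) hT.le
    hΨ.integral_prod_right (iconst C₀) (iconst C₀)
    ((S.lθx.slice_int.add S.lux.slice_int).const_mul c)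
    (fun t ht => (ftc t ht).2)
    (fun t ht => integral_nonneg fun x => quarticDensity_nonneg hμ hκ hcv _ _)
    (fun _ => hC₀.le) (fun _ => hC₀.le)
    (fun t => mul_nonneg hc.le (add_nonneg (integral_sq_nonneg _) (integral_sq_nonneg _)))
    hJ (by simp [mul_comm]) (by simp [mul_comm])
  have gr' : ∀ t ∈ Icc 0 T, (∫ x, quarticDensity μ κ cv (u x t) (θ x t))
      + (∫ τ in (0 : ℝ)..t, c * ((∫ x, θx x τ ^ 2) + ∫ x, ux x τ ^ 2)) ≤ C₁ := fun t ht => by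
    refine (gr t ht).trans ?_
    rw [hC₁]
    gcongr
  refine ⟨fun t ht => ?_, ?_⟩
  · have h1 := gr' t ht
    have h2 : 0 ≤ ∫ τ in (0 : ℝ)..t, c * ((∫ x, θx x τ ^ 2) + ∫ x, ux x τ ^ 2) :=
      intervalIntegral.integral_nonneg ht.1 fun τ _ =>
        mul_nonneg hc.le (add_nonneg (integral_sq_nonneg _) (integral_sq_nonneg _))
    have h3 := integral_mono (S.sθ t ht).2 ((ftc t ht).1.const_mul ((4 + 2 / A) / cv ^ 2))
      fun x => sq_le_quarticDensity hμ hκ hcv (u x t) (θ x t)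
    rw [integral_const_mul] at h3
    have h4 : (4 + 2 / A) / cv ^ 2 * (∫ x, quarticDensity μ κ cv (u x t) (θ x t))
        ≤ (4 + 2 / A) / cv ^ 2 * C₁ := by
      gcongr; linarith
    have h5 : 0 ≤ C₁ / c := by positivity
    linarith
  · have h1 := gr' T TT
    have h2 : 0 ≤ ∫ x, quarticDensity μ κ cv (u x T) (θ x T) :=
      integral_nonneg fun x => quarticDensity_nonneg hμ hκ hcv _ _
    rw [intervalIntegral.integral_const_mul] at h1
    have h3 : ∫ τ in (0 : ℝ)..T, ((∫ x, θx x τ ^ 2) + ∫ x, ux x τ ^ 2) ≤ C₁ / c := by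
      rw [le_div_iff₀ hc]; linarith
    have h5 : 0 ≤ (4 + 2 / A) / cv ^ 2 * C₁ := by positivity
    linarith

end NSFlow

namespace NSFlow

variable {μ κ R cv K T B : ℝ} {v u θ vx ux θx G Gx q qx : ℝ → ℝ → ℝ}

set_option maxHeartbeats 800000 in
/-- Control of `uₓ` in `L²`, through the effective viscous flux. -/
lemma flux_bound (hμ : 0 < μ) (hκ : 0 < κ) (hR : 0 < R) (hcv : 0 < cv) (hK : 1 ≤ K)
    {E : ℝ} (hE : 0 < E) (hT : 0 < T) :
    ∃ C > 0, ∀ (B : ℝ) (v u θ vx ux θx G Gx q qx : ℝ → ℝ → ℝ), 0 ≤ B →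
      NSFlow μ κ R cv K T B v u θ vx ux θx G Gx q qx →
      (∀ t ∈ Icc 0 T, ∫ x, (v x t - 1) ^ 2 ≤ E) → (∀ t ∈ Icc 0 T, ∫ x, (θ x t - 1) ^ 2 ≤ E) →
      (∫ τ in (0 : ℝ)..T, ((∫ x, θx x τ ^ 2) + ∫ x, ux x τ ^ 2) ≤ E) → (∫ x, ux x 0 ^ 2 ≤ E) →
      (∀ t ∈ Icc 0 T, ∫ x, ux x t ^ 2 ≤ C) ∧ (∀ t ∈ Icc 0 T, ∫ x, G x t ^ 2 ≤ C) ∧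
        ∫ τ in (0 : ℝ)..T, (∫ x, Gx x τ ^ 2) ≤ C := by
  obtain ⟨C₀, hC₀, hq⟩ := Slice.flux hμ hκ hR hcv hK
  have hK0 : 0 < K := by linarith
  set Y₀ := K / 2 * (3 * μ ^ 2 * E + 3 * R ^ 2 * E + 3 * R ^ 2 * E) with hY₀
  set C₁ := (Y₀ + C₀ * E) * 2 ^ ⌈2 * (C₀ * (T + E))⌉₊ with hC₁
  have hY₀0 : 0 < Y₀ := by positivity
  have hC₁0 : 0 < C₁ := by positivity
  refine ⟨3 / μ ^ 2 * (2 * K * C₁ + R ^ 2 * E + R ^ 2 * E) + 2 * K * C₁ + 2 / μ * C₁,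
    by positivity, ?_⟩
  have p1 : 0 < 3 / μ ^ 2 * (2 * K * C₁ + R ^ 2 * E + R ^ 2 * E) := by positivity
  have p2 : 0 < 2 * K * C₁ := by positivity
  have p3 : 0 < 2 / μ * C₁ := by positivity
  intro B v u θ vx ux θx G Gx q qx hB S hv hθ hL hux₀
  have T0 : (0 : ℝ) ∈ Icc 0 T := ⟨le_rfl, hT.le⟩
  have TT : T ∈ Icc 0 T := ⟨hT.le, le_rfl⟩
  have eG : ∀ x, ∀ t ∈ Icc 0 T, v x t * G x t = μ * ux x t - R * (θ x t - 1) + R * (v x t - 1) :=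
    fun x t ht => by
      rw [S.eG, mul_div_cancel₀ _ (S.vpos hK x ht).ne']; ring
  have iG := fun t (ht : t ∈ Icc 0 T) => S.int_mul_sq hK ht (S.sG hK ht)
  have hY0 : ∫ x, v x 0 * G x 0 ^ 2 / 2 ≤ Y₀ := by
    have i1 := (S.sux 0 T0).2
    have i2 := (S.sθ 0 T0).2
    have i3 := (S.sv 0 T0).2
    have hi : Integrable fun x => K / 2 * (3 * μ ^ 2 * ux x 0 ^ 2 + 3 * R ^ 2 * (θ x 0 - 1) ^ 2
        + 3 * R ^ 2 * (v x 0 - 1) ^ 2) :=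
      (((i1.const_mul _).add (i2.const_mul _)).add (i3.const_mul _)).const_mul _
    refine (integral_mono (iG 0 T0) hi fun x => ?_).trans ?_
    · have h1 := eG x 0 T0
      have hvp := S.vpos hK x T0
      have hvi : 1 ≤ K * v x 0 := by
        have := mul_le_mul_of_nonneg_left (S.vlo x 0 T0) hK0.le
        rwa [mul_inv_cancel₀ hK0.ne'] at this
      have h2 : v x 0 * G x 0 ^ 2 ≤ K * (v x 0 * G x 0) ^ 2 := by
        have : K * (v x 0 * G x 0) ^ 2 = (K * v x 0) * (v x 0 * G x 0 ^ 2) := by ring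
        rw [this]
        exact le_mul_of_one_le_left (by positivity) hvi
      have h3 : (v x 0 * G x 0) ^ 2 ≤ 3 * μ ^ 2 * ux x 0 ^ 2 + 3 * R ^ 2 * (θ x 0 - 1) ^ 2
        + 3 * R ^ 2 * (v x 0 - 1) ^ 2 := by
        rw [h1]
        nlinarith [sq_nonneg (μ * ux x 0 + R * (θ x 0 - 1)), sq_nonneg (μ * ux x 0 - R * (v x 0 - 1)),
          sq_nonneg (R * (θ x 0 - 1) + R * (v x 0 - 1))]
      have := mul_le_mul_of_nonneg_left h3 hK0.le
      simp only
      linarith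
    · rw [integral_const_mul, integral_lin3 i1 i2 i3 (3 * μ ^ 2) (3 * R ^ 2) (3 * R ^ 2)
        (fun x => rfl), hY₀]
      have := hv 0 T0
      have := hθ 0 T0
      gcongr
  obtain ⟨iJ, bal⟩ := (S.visc_flow hB).balance hμ hK (by positivity)
  have hJ : ∀ᵐ τ ∂volume.restrict (Icc 0 T),
      fluxRate μ (fun x => ux x τ) (fun x => G x τ) (fun x => Gx x τ) (fun x => Gx x τ)
        (fun x => -(R * ((qx x τ + (G x τ - R) * ux x τ) / cv - ux x τ)))
      + μ / 2 * (∫ x, Gx x τ ^ 2)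
      ≤ C₀ * (1 + ∫ x, ux x τ ^ 2) * (∫ x, v x τ * G x τ ^ 2 / 2)
        + C₀ * ((∫ x, θx x τ ^ 2) + ∫ x, ux x τ ^ 2) := by
    filter_upwards [S.sl] with τ hs
    exact hq _ _ _ _ _ _ _ _ _ hs
  have iconst : ∀ r : ℝ, IntegrableOn (fun _ : ℝ => r) (Icc 0 T) := fun r =>
    integrableOn_const (by simp)
  have isum := S.lθx.slice_int.add S.lux.slice_int
  have hux : ∫ τ in (0 : ℝ)..T, (∫ x, ux x τ ^ 2) ≤ E := by
    refine (intervalIntegral.integral_mono_on hT.le ?_ ?_ fun τ _ => ?_).trans hL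
    · exact (intervalIntegrable_iff_integrableOn_Icc_of_le hT.le).2 S.lux.slice_int
    · exact (intervalIntegrable_iff_integrableOn_Icc_of_le hT.le).2 isum
    · linarith [integral_sq_nonneg fun x => θx x τ]
  have ha : ∫ τ in (0 : ℝ)..T, C₀ * (1 + ∫ x, ux x τ ^ 2) ≤ C₀ * (T + E) := by
    rw [intervalIntegral.integral_const_mul, intervalIntegral.integral_add (by simp)
      ((intervalIntegrable_iff_integrableOn_Icc_of_le hT.le).2 S.lux.slice_int)]
    simp only [intervalIntegral.integral_const, sub_zero, smul_eq_mul, mul_one]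
    gcongr
  have hb : ∫ τ in (0 : ℝ)..T, C₀ * ((∫ x, θx x τ ^ 2) + ∫ x, ux x τ ^ 2) ≤ C₀ * E := by
    rw [intervalIntegral.integral_const_mul]
    gcongr
  have Y0 : ∀ t ∈ Icc 0 T, 0 ≤ ∫ x, v x t * G x t ^ 2 / 2 := fun t ht =>
    integral_nonneg fun x => by have := S.vpos hK x ht; positivity
  have gr := gronwall_integral (s := 0) (T := T)
    (Y := fun t => ∫ x, v x t * G x t ^ 2 / 2) (a := fun τ => C₀ * (1 + ∫ x, ux x τ ^ 2))
    (b := fun τ => C₀ * ((∫ x, θx x τ ^ 2) + ∫ x, ux x τ ^ 2))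
    (d := fun τ => μ / 2 * (∫ x, Gx x τ ^ 2))
    (A := C₀ * (T + E)) (B := C₀ * E) hT.le iJ
    (((iconst 1).add S.lux.slice_int).const_mul C₀) (isum.const_mul C₀)
    (S.lGx.slice_int.const_mul _)
    (fun t ht => bal 0 t le_rfl ht.1 ht.2) Y0
    (fun t => mul_nonneg hC₀.le (add_nonneg zero_le_one (integral_sq_nonneg _)))
    (fun t => mul_nonneg hC₀.le (add_nonneg (integral_sq_nonneg _) (integral_sq_nonneg _)))
    (fun t => mul_nonneg (by positivity) (integral_sq_nonneg _))
    hJ ha hb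
  have gr' : ∀ t ∈ Icc 0 T, (∫ x, v x t * G x t ^ 2 / 2)
      + (∫ τ in (0 : ℝ)..t, μ / 2 * (∫ x, Gx x τ ^ 2)) ≤ C₁ := fun t ht => by
    refine (gr t ht).trans ?_
    rw [hC₁]
    gcongr
  have hYle : ∀ t ∈ Icc 0 T, ∫ x, v x t * G x t ^ 2 / 2 ≤ C₁ := fun t ht => by
    have h2 : 0 ≤ ∫ τ in (0 : ℝ)..t, μ / 2 * (∫ x, Gx x τ ^ 2) :=
      intervalIntegral.integral_nonneg ht.1 fun τ _ =>
        mul_nonneg (by positivity) (integral_sq_nonneg _)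
    linarith [gr' t ht]
  refine ⟨fun t ht => ?_, fun t ht => ?_, ?_⟩
  · have h : ∫ x, ux x t ^ 2 ≤ 3 / μ ^ 2 * (2 * K * C₁ + R ^ 2 * E + R ^ 2 * E) := by
      have hi : Integrable fun x => 3 / μ ^ 2 * (2 * K * (v x t * G x t ^ 2 / 2)
          + R ^ 2 * (θ x t - 1) ^ 2 + R ^ 2 * (v x t - 1) ^ 2) :=
        ((((iG t ht).const_mul _).add ((S.sθ t ht).2.const_mul _)).add
          ((S.sv t ht).2.const_mul _)).const_mul _
      refine (integral_mono (S.sux t ht).2 hi fun x => ?_).trans ?_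
      · have h1 := eG x t ht
        have hvp := S.vpos hK x ht
        have h2 : (v x t * G x t) ^ 2 ≤ K * (v x t * G x t ^ 2) := by
          have : (v x t * G x t) ^ 2 = v x t * (v x t * G x t ^ 2) := by ring
          rw [this]
          exact mul_le_mul_of_nonneg_right (S.vhi x t ht) (by positivity)
        have h3 : (μ * ux x t) ^ 2 ≤ 3 * (v x t * G x t) ^ 2 + 3 * (R * (θ x t - 1)) ^ 2
            + 3 * (R * (v x t - 1)) ^ 2 := by
          have e : μ * ux x t = v x t * G x t + R * (θ x t - 1) - R * (v x t - 1) := by linarith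
          rw [e]
          nlinarith [sq_nonneg (v x t * G x t - R * (θ x t - 1)),
            sq_nonneg (v x t * G x t + R * (v x t - 1)),
            sq_nonneg (R * (θ x t - 1) + R * (v x t - 1))]
        simp only
        rw [div_mul_eq_mul_div, le_div_iff₀ (by positivity)]
        linarith
      · rw [integral_const_mul, integral_lin3 (iG t ht) (S.sθ t ht).2 (S.sv t ht).2 (2 * K)
          (R ^ 2) (R ^ 2) (fun x => rfl)]
        have := hv t ht
        have := hθ t ht
        have := hYle t ht
        gcongr
    linarith
  · have h : ∫ x, G x t ^ 2 ≤ 2 * K * C₁ := by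
      refine (integral_mono (S.sG hK ht).2 ((iG t ht).const_mul (2 * K)) fun x => ?_).trans ?_
      · have hvi : 1 ≤ K * v x t := by
          have := mul_le_mul_of_nonneg_left (S.vlo x t ht) hK0.le
          rwa [mul_inv_cancel₀ hK0.ne'] at this
        have := mul_le_mul_of_nonneg_right hvi (sq_nonneg (G x t))
        simp only
        linarith
      · rw [integral_const_mul]
        have := hYle t ht
        gcongr
    linarith
  · have h1 := gr' T TT
    have h2 := Y0 T TT
    rw [intervalIntegral.integral_const_mul] at h1
    have h3 : ∫ τ in (0 : ℝ)..T, (∫ x, Gx x τ ^ 2) ≤ 2 / μ * C₁ := by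
      rw [div_mul_eq_mul_div, le_div_iff₀ hμ]; linarith
    linarith

/-- Control of `θₓ` in `L²`, through the heat flux. -/
lemma heat_bound (hκ : 0 < κ) (hR : 0 < R) (hcv : 0 < cv) (hK : 1 ≤ K)
    {E : ℝ} (hE : 0 < E) (hT : 0 < T) :
    ∃ C > 0, ∀ (B : ℝ) (v u θ vx ux θx G Gx q qx : ℝ → ℝ → ℝ), 0 ≤ B →
      NSFlow μ κ R cv K T B v u θ vx ux θx G Gx q qx →
      (∀ t ∈ Icc 0 T, ∫ x, ux x t ^ 2 ≤ E) → (∀ t ∈ Icc 0 T, ∫ x, G x t ^ 2 ≤ E) →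
      (∫ τ in (0 : ℝ)..T, (∫ x, Gx x τ ^ 2) ≤ E) → (∫ x, θx x 0 ^ 2 ≤ E) →
      ∀ t ∈ Icc 0 T, ∫ x, θx x t ^ 2 ≤ C := by
  obtain ⟨C₀, hC₀, hq⟩ := Slice.heat (μ := μ) hκ hR hcv hK
  have hK0 : 0 < K := by linarith
  set Y₀ := K / 2 * κ ^ 2 * E with hY₀
  set C₁ := (Y₀ + C₀ * E * ((1 + E) * T + E)) * 2 ^ ⌈2 * (C₀ * (1 + E) * T)⌉₊ with hC₁
  have hY₀0 : 0 < Y₀ := by positivity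
  have hC₁0 : 0 < C₁ := by positivity
  refine ⟨2 * K / κ ^ 2 * C₁, by positivity, ?_⟩
  intro B v u θ vx ux θx G Gx q qx hB S hux hG hGx hθx₀
  have T0 : (0 : ℝ) ∈ Icc 0 T := ⟨le_rfl, hT.le⟩
  have eq : ∀ x, ∀ t ∈ Icc 0 T, v x t * q x t = κ * θx x t := fun x t ht => by
    rw [S.eq, mul_div_cancel₀ _ (S.vpos hK x ht).ne']
  have iq := fun t (ht : t ∈ Icc 0 T) => S.int_mul_sq hK ht (S.sq hK ht)
  have hY0 : ∫ x, v x 0 * q x 0 ^ 2 / 2 ≤ Y₀ := by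
    refine (integral_mono (iq 0 T0) ((S.sθx 0 T0).2.const_mul (K / 2 * κ ^ 2)) fun x => ?_).trans ?_
    · have hvp := S.vpos hK x T0
      have hvi : 1 ≤ K * v x 0 := by
        have := mul_le_mul_of_nonneg_left (S.vlo x 0 T0) hK0.le
        rwa [mul_inv_cancel₀ hK0.ne'] at this
      have h2 : v x 0 * q x 0 ^ 2 ≤ K * (v x 0 * q x 0) ^ 2 := by
        have : K * (v x 0 * q x 0) ^ 2 = (K * v x 0) * (v x 0 * q x 0 ^ 2) := by ring
        rw [this]
        exact le_mul_of_one_le_left (by positivity) hvi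
      rw [eq x 0 T0] at h2
      simp only
      linarith
    · rw [integral_const_mul, hY₀]
      gcongr
  obtain ⟨iJ, bal⟩ := (S.heat_flow hB).balance hκ hK hB
  have Y0 : ∀ t ∈ Icc 0 T, 0 ≤ ∫ x, v x t * q x t ^ 2 / 2 := fun t ht =>
    integral_nonneg fun x => by have := S.vpos hK x ht; positivity
  have hJ : ∀ᵐ τ ∂volume.restrict (Icc 0 T),
      fluxRate κ (fun x => ux x τ) (fun x => q x τ) (fun x => qx x τ)
        (fun x => (qx x τ + (G x τ - R) * ux x τ) / cv) (fun _ => 0) + 0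
      ≤ C₀ * (1 + E) * (∫ x, v x τ * q x τ ^ 2 / 2)
        + C₀ * E * ((1 + E) + ∫ x, Gx x τ ^ 2) := by
    filter_upwards [S.sl, ae_restrict_mem measurableSet_Icc] with τ hs hτ
    have h := hq _ _ _ _ _ _ _ _ _ hs
    rw [add_zero]
    refine h.trans ?_
    have h1 := hux τ hτ
    have h2 := hG τ hτ
    have h3 := Y0 τ hτ
    have h4 := integral_sq_nonneg fun x => ux x τ
    have h5 := integral_sq_nonneg fun x => Gx x τ
    have h6 := integral_sq_nonneg fun x => G x τ
    have e : C₀ * E * ((1 + E) + ∫ x, Gx x τ ^ 2)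
        = C₀ * (1 + E + ∫ x, Gx x τ ^ 2) * E := by ring
    rw [e]
    gcongr
  have iconst : ∀ r : ℝ, IntegrableOn (fun _ : ℝ => r) (Icc 0 T) := fun r =>
    integrableOn_const (by simp)
  have hb : ∫ τ in (0 : ℝ)..T, C₀ * E * ((1 + E) + ∫ x, Gx x τ ^ 2)
      ≤ C₀ * E * ((1 + E) * T + E) := by
    rw [intervalIntegral.integral_const_mul, intervalIntegral.integral_add (by simp)
      ((intervalIntegrable_iff_integrableOn_Icc_of_le hT.le).2 S.lGx.slice_int)]
    simp only [intervalIntegral.integral_const, sub_zero, smul_eq_mul]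
    rw [mul_comm T]
    gcongr
  have gr := gronwall_integral (s := 0) (T := T)
    (Y := fun t => ∫ x, v x t * q x t ^ 2 / 2) (a := fun _ => C₀ * (1 + E))
    (b := fun τ => C₀ * E * ((1 + E) + ∫ x, Gx x τ ^ 2))
    (d := fun τ => 0)
    (A := C₀ * (1 + E) * T) (B := C₀ * E * ((1 + E) * T + E)) hT.le iJ
    (iconst _) (((iconst (1 + E)).add S.lGx.slice_int).const_mul (C₀ * E))
    (iconst 0)
    (fun t ht => bal 0 t le_rfl ht.1 ht.2) Y0
    (fun t => by positivity)
    (fun t => mul_nonneg (by positivity) (add_nonneg (by positivity) (integral_sq_nonneg _)))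
    (fun t => le_rfl)
    hJ (by rw [intervalIntegral.integral_const, smul_eq_mul]; apply le_of_eq; ring) hb
  intro t ht
  have hle : ∫ x, v x t * q x t ^ 2 / 2 ≤ C₁ := by
    have h := gr t ht
    simp only [intervalIntegral.integral_zero, add_zero] at h
    refine h.trans ?_
    rw [hC₁]
    gcongr
  refine (integral_mono (S.sθx t ht).2 ((iq t ht).const_mul (2 * K / κ ^ 2)) fun x => ?_).trans ?_
  · have hvp := S.vpos hK x ht
    have h2 : (v x t * q x t) ^ 2 ≤ K * (v x t * q x t ^ 2) := by
      have : (v x t * q x t) ^ 2 = v x t * (v x t * q x t ^ 2) := by ring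
      rw [this]
      exact mul_le_mul_of_nonneg_right (S.vhi x t ht) (by positivity)
    rw [eq x t ht] at h2
    simp only
    rw [div_mul_eq_mul_div, le_div_iff₀ (by positivity)]
    nlinarith
  · rw [integral_const_mul]
    gcongr

/-- On `[0, T]` the temperature is bounded in terms of the energy and of the `H¹` norm of the
initial data. -/
lemma upper_bound (hμ : 0 < μ) (hκ : 0 < κ) (hR : 0 < R) (hcv : 0 < cv) (hK : 1 ≤ K)
    {E : ℝ} (hE : 0 < E) (hT : 0 < T) :
    ∃ C > 0, ∀ (B : ℝ) (v u θ vx ux θx G Gx q qx : ℝ → ℝ → ℝ), 0 ≤ B →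
      NSFlow μ κ R cv K T B v u θ vx ux θx G Gx q qx →
      (∀ t ∈ Icc 0 T, ∫ x, u x t ^ 2 ≤ E) → (∀ t ∈ Icc 0 T, ∫ x, (v x t - 1) ^ 2 ≤ E) →
      (∫ x, (θ x 0 - 1) ^ 2 ≤ E) → (∫ x, ux x 0 ^ 2 ≤ E) → (∫ x, θx x 0 ^ 2 ≤ E) →
      ∀ t ∈ Icc 0 T, ∀ x, θ x t ≤ C := by
  obtain ⟨C₁, hC₁, h₁⟩ := quartic_bound hμ hκ hR hcv hK hE hT
  obtain ⟨C₂, hC₂, h₂⟩ := flux_bound hμ hκ hR hcv hK (E := E + C₁) (by positivity) hT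
  obtain ⟨C₃, hC₃, h₃⟩ := heat_bound (μ := μ) hκ hR hcv hK (E := E + C₂) (by positivity) hT
  refine ⟨1 + √(C₁ + C₃), by positivity, ?_⟩
  intro B v u θ vx ux θx G Gx q qx hB S hu hv hθ₀ hux₀ hθx₀ t ht x
  obtain ⟨hθ, hL⟩ := h₁ _ _ _ _ _ _ _ _ _ _ _ S hu hv hθ₀ hux₀
  obtain ⟨hux, hG, hGx⟩ := h₂ _ _ _ _ _ _ _ _ _ _ _ hB S (fun t ht => by linarith [hv t ht])
    (fun t ht => by linarith [hθ t ht]) (by linarith) (by linarith)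
  have hθx := h₃ _ _ _ _ _ _ _ _ _ _ _ hB S (fun t ht => by linarith [hux t ht])
    (fun t ht => by linarith [hG t ht]) (by linarith) (by linarith) t ht
  have h := sup_sq_le' (f := fun x => θ x t - 1) (fun x => (S.dθ t ht x).sub_const 1)
    (S.sθ t ht) (S.sθx t ht) x
  have h5 : |θ x t - 1| ≤ √(C₁ + C₃) := Real.abs_le_sqrt (by linarith [hθ t ht])
  linarith [le_abs_self (θ x t - 1)]

end NSFlow

/-! ### Times at which the solution is controlled by its energy -/

lemma sub_log_ge {y : ℝ} (hy : 0 < y) : (y - 1) ^ 2 ≤ 2 * (y + 1) * (y - 1 - Real.log y) := by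
  set r := √y with hr
  have hr0 : 0 < r := Real.sqrt_pos.2 hy
  have hy2 : y = r ^ 2 := (Real.sq_sqrt hy.le).symm
  have h1 : Real.log y ≤ 2 * (r - 1) := by
    rw [hy2, Real.log_pow]
    push_cast
    linarith [Real.log_le_sub_one_of_pos hr0]
  have h2 : (y - 1) ^ 2 ≤ 2 * (y + 1) * (y - 1 - 2 * (r - 1)) := by
    rw [hy2]
    nlinarith [mul_nonneg (sq_nonneg (r - 1)) (sq_nonneg (r - 1))]
  have h3 : 2 * (y + 1) * (y - 1 - 2 * (r - 1)) ≤ 2 * (y + 1) * (y - 1 - Real.log y) := by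
    gcongr
  linarith

lemma half_le_of_sq_le {y : ℝ} (hy : 0 < y) (h : ((y - 1) / (y + 1)) ^ 2 ≤ 1 / 9) :
    1 / 2 ≤ y ∧ y ≤ 2 := by
  have h1 : |(y - 1) / (y + 1)| ≤ 1 / 3 := abs_le_of_sq_le_sq (by linarith) (by norm_num)
  rw [abs_le, div_le_iff₀ (by linarith), le_div_iff₀ (by linarith)] at h1
  constructor <;> linarith [h1.1, h1.2]

namespace NSFlow

variable {μ κ R cv K T B : ℝ} {v u θ vx ux θx G Gx q qx : ℝ → ℝ → ℝ}

/-- Consequences of the energy bound at a fixed time. -/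
lemma of_energy (hR : 0 < R) (hcv : 0 < cv) (hK : 1 ≤ K)
    (S : NSFlow μ κ R cv K T B v u θ vx ux θx G Gx q qx) {t : ℝ} (ht : t ∈ Icc 0 T) {E : ℝ}
    (hi : Integrable fun x => energyDensity R cv (v x t) (u x t) (θ x t))
    (hE : ∫ x, energyDensity R cv (v x t) (u x t) (θ x t) ≤ E) :
    (∫ x, u x t ^ 2 ≤ 2 * E) ∧ (∫ x, (v x t - 1) ^ 2 ≤ 2 * (K + 1) / R * E) ∧
      (∀ f : ℝ → ℝ, Sq f → ∀ c > 0, (∀ x, f x ^ 2 ≤ c * (θ x t - 1 - Real.log (θ x t))) →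
        ∫ x, f x ^ 2 ≤ c / cv * E) := by
  have h1 : ∀ x, 0 ≤ v x t - 1 - Real.log (v x t) := fun x => sub_log_nonneg (S.vpos hK x ht)
  have h2 : ∀ x, 0 ≤ θ x t - 1 - Real.log (θ x t) := fun x => sub_log_nonneg (S.θpos x t ht)
  have key : ∀ f : ℝ → ℝ, Sq f → ∀ c > 0,
      (∀ x, f x ^ 2 ≤ c * energyDensity R cv (v x t) (u x t) (θ x t)) → ∫ x, f x ^ 2 ≤ c * E := by
    intro f sf c hc h
    refine (integral_mono sf.2 (hi.const_mul c) h).trans ?_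
    rw [integral_const_mul]
    gcongr
  refine ⟨key _ (S.su t ht) 2 (by norm_num) fun x => ?_,
    key _ (S.sv t ht) _ (by positivity) fun x => ?_, fun f sf c hc h => ?_⟩
  · have := mul_nonneg hR.le (h1 x)
    have := mul_nonneg hcv.le (h2 x)
    unfold energyDensity
    linarith
  · refine (sub_log_ge (S.vpos hK x ht)).trans ?_
    have hv := S.vhi x t ht
    have h3 : 2 * (v x t + 1) * (v x t - 1 - Real.log (v x t))
        ≤ 2 * (K + 1) * (v x t - 1 - Real.log (v x t)) := by
      have := h1 x
      gcongr
    refine h3.trans ?_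
    rw [div_mul_eq_mul_div, le_div_iff₀ hR, mul_assoc]
    have h4 : (v x t - 1 - Real.log (v x t)) * R ≤ energyDensity R cv (v x t) (u x t) (θ x t) := by
      have := mul_nonneg hcv.le (h2 x)
      unfold energyDensity
      nlinarith [sq_nonneg (u x t)]
    gcongr
  · refine key f sf _ (by positivity) fun x => (h x).trans ?_
    rw [div_mul_eq_mul_div, le_div_iff₀ hcv, mul_assoc]
    have h4 : (θ x t - 1 - Real.log (θ x t)) * cv
        ≤ energyDensity R cv (v x t) (u x t) (θ x t) := by
      have := mul_nonneg hR.le (h1 x)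
      unfold energyDensity
      nlinarith [sq_nonneg (u x t)]
    gcongr

/-- At a time of small dissipation the temperature is at least `1/2`, and `θ - 1`, `uₓ`, `θₓ` are
controlled in `L²`. The function `(θ - 1) / (θ + 1)` has `L²` norm controlled by the energy and
derivative controlled by the dissipation, so that it is uniformly small and `1/2 ≤ θ ≤ 2`. -/
lemma good_time (hμ : 0 < μ) (hκ : 0 < κ) (hR : 0 < R) (hcv : 0 < cv) (hK : 1 ≤ K)
    (S : NSFlow μ κ R cv K T B v u θ vx ux θx G Gx q qx) {t : ℝ} (ht : t ∈ Icc 0 T) {E L k : ℝ}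
    (hE0 : 0 < E) (hL0 : 0 < L) (hL : 162 * K * E ^ 2 / (cv * κ) ≤ L)
    (hk0 : 0 < k) (hk : ∀ x, k ≤ θ x t)
    (hi : Integrable fun x => energyDensity R cv (v x t) (u x t) (θ x t))
    (hE : ∫ x, energyDensity R cv (v x t) (u x t) (θ x t) ≤ E)
    (hD : dissip μ κ (fun x => v x t) (fun x => θ x t) (fun x => ux x t) (fun x => θx x t)
      ≤ E / L) :
    (∀ x, 1 / 2 ≤ θ x t) ∧ (∫ x, (θ x t - 1) ^ 2 ≤ 6 / cv * E) ∧
      (∫ x, ux x t ^ 2 ≤ 2 * K / μ * (E / L)) ∧ (∫ x, θx x t ^ 2 ≤ 4 * K / κ * (E / L)) := by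
  have hK0 : 0 < K := by linarith
  have vpos := fun x => S.vpos hK x ht
  have θpos := fun x => S.θpos x t ht
  have cv' := S.cont_v ht
  have cθ : Continuous fun x => θ x t := by simpa using (S.sθ t ht).1.add_const 1
  have cux := (S.sux t ht).1
  have cθx := (S.sθx t ht).1
  have iD : Integrable fun x => μ * ux x t ^ 2 / (v x t * θ x t)
      + κ * θx x t ^ 2 / (v x t * θ x t ^ 2) := by
    have c1 : Continuous fun x => μ * ux x t ^ 2 / (v x t * θ x t) :=
      (by fun_prop : Continuous fun x => μ * ux x t ^ 2).div (cv'.mul cθ)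
        fun x => (mul_pos (vpos x) (θpos x)).ne'
    have c2 : Continuous fun x => κ * θx x t ^ 2 / (v x t * θ x t ^ 2) :=
      (by fun_prop : Continuous fun x => κ * θx x t ^ 2).div (cv'.mul (cθ.pow 2))
        fun x => (mul_pos (vpos x) (pow_pos (θpos x) 2)).ne'
    have ib : Integrable fun x => μ / (K⁻¹ * k) * ux x t ^ 2 + κ / (K⁻¹ * k ^ 2) * θx x t ^ 2 :=
      ((S.sux t ht).2.const_mul _).add ((S.sθx t ht).2.const_mul _)
    refine ib.mono' (c1.add c2).aestronglyMeasurable (Eventually.of_forall fun x => ?_)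
    have h1 := vpos x
    have h2 := θpos x
    have h3 := hk x
    have h4 := S.vlo x t ht
    rw [Real.norm_eq_abs, abs_of_nonneg (by positivity), div_mul_eq_mul_div, div_mul_eq_mul_div]
    gcongr
  -- a bound by the dissipation density transfers to the integrals
  have key : ∀ f : ℝ → ℝ, Sq f → ∀ c > 0, (∀ x, f x ^ 2 ≤ c * (μ * ux x t ^ 2 / (v x t * θ x t)
      + κ * θx x t ^ 2 / (v x t * θ x t ^ 2))) → ∫ x, f x ^ 2 ≤ c * (E / L) := by
    intro f sf c hc h
    refine (integral_mono sf.2 (iD.const_mul c) h).trans ?_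
    rw [integral_const_mul]
    exact mul_le_mul_of_nonneg_left hD hc.le
  obtain ⟨-, -, hθE⟩ := S.of_energy hR hcv hK ht hi hE
  set f : ℝ → ℝ := fun x => (θ x t - 1) / (θ x t + 1) with hf
  set f' : ℝ → ℝ := fun x => 2 * θx x t / (θ x t + 1) ^ 2 with hf'
  have hdf : ∀ x, HasDerivAt f (f' x) x := fun x => by
    have h1 := θpos x
    have h := ((S.dθ t ht x).sub_const 1).div ((S.dθ t ht x).add_const 1)
      (by linarith : θ x t + 1 ≠ 0)
    convert! h using 1
    simp only [hf']
    ring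
  have ci : Continuous fun x => (θ x t + 1)⁻¹ :=
    (cθ.add_const 1).inv₀ fun x => by have := θpos x; positivity
  have bi : ∀ x, |(θ x t + 1)⁻¹| ≤ 1 := fun x => by
    have := θpos x
    rw [abs_of_pos (by positivity)]
    exact inv_le_one_of_one_le₀ (by linarith)
  have sf : Sq f := ((S.sθ t ht).bdd_mul ci bi).congr fun x => by simp only [hf]; ring
  have sf' : Sq f' := ((((S.sθx t ht).bdd_mul ci bi).bdd_mul ci bi).const_mul 2).congr fun x => by
    simp only [hf']; rw [div_eq_mul_inv, ← inv_pow]; ring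
  have hfE : ∫ x, f x ^ 2 ≤ 2 / cv * E := hθE f sf 2 (by norm_num) fun x => by
    have h1 := θpos x
    have h2 := sub_log_ge h1
    have h3 := sub_log_nonneg h1
    simp only [hf]
    rw [div_pow, div_le_iff₀ (by positivity)]
    refine h2.trans ?_
    nlinarith [mul_nonneg h3 h1.le, mul_nonneg (mul_nonneg h3 h1.le) h1.le]
  have hfD : ∫ x, f' x ^ 2 ≤ K / (4 * κ) * (E / L) := key f' sf' _ (by positivity) fun x => by
    have h1 := θpos x
    have hv := vpos x
    have h2 : 0 ≤ μ * ux x t ^ 2 / (v x t * θ x t) := by positivity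
    have h3 : f' x ^ 2 ≤ K / (4 * κ) * (κ * θx x t ^ 2 / (v x t * θ x t ^ 2)) := by
      have e : K / (4 * κ) * (κ * θx x t ^ 2 / (v x t * θ x t ^ 2))
          = K / v x t * (θx x t ^ 2 / (4 * θ x t ^ 2)) := by field_simp
      rw [e]
      have h4 : 1 ≤ K / v x t := (one_le_div hv).2 (S.vhi x t ht)
      have h5 : f' x ^ 2 ≤ θx x t ^ 2 / (4 * θ x t ^ 2) := by
        simp only [hf']
        rw [div_pow, div_le_div_iff₀ (by positivity) (by positivity)]
        have h6 : 4 * θ x t ≤ (θ x t + 1) ^ 2 := by nlinarith [sq_nonneg (θ x t - 1)]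
        have h7 : (4 * θ x t) ^ 2 ≤ ((θ x t + 1) ^ 2) ^ 2 := by gcongr
        nlinarith [mul_le_mul_of_nonneg_left h7 (sq_nonneg (θx x t))]
      exact h5.trans (le_mul_of_one_le_left (by positivity) h4)
    have h8 : 0 ≤ K / (4 * κ) * (μ * ux x t ^ 2 / (v x t * θ x t)) := by positivity
    linarith
  -- the Sobolev parameter `36 E / cv` makes each of the two terms at most `1 / 18`
  have hsup : ∀ x, f x ^ 2 ≤ 1 / 9 := fun x => by
    have hε : 0 < 36 * E / cv := by positivity
    refine (sup_sq_le hdf sf sf' hε x).trans ?_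
    have h1 : (36 * E / cv)⁻¹ * (∫ y, f y ^ 2) ≤ 1 / 18 := by
      calc (36 * E / cv)⁻¹ * (∫ y, f y ^ 2) ≤ (36 * E / cv)⁻¹ * (2 / cv * E) := by gcongr
        _ = 1 / 18 := by field_simp; norm_num
    have h2 : 36 * E / cv * (∫ y, f' y ^ 2) ≤ 1 / 18 := by
      calc 36 * E / cv * (∫ y, f' y ^ 2) ≤ 36 * E / cv * (K / (4 * κ) * (E / L)) := by gcongr
        _ = 1 / 18 * (162 * K * E ^ 2 / (cv * κ)) / L := by field_simp; norm_num
        _ ≤ 1 / 18 := by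
          rw [div_le_iff₀ hL0]; gcongr
    linarith
  have hb := fun x => half_le_of_sq_le (θpos x) (hsup x)
  refine ⟨fun x => (hb x).1, hθE _ (S.sθ t ht) 6 (by norm_num) fun x => ?_,
    key _ (S.sux t ht) _ (by positivity) fun x => ?_,
    key _ (S.sθx t ht) _ (by positivity) fun x => ?_⟩
  · refine (sub_log_ge (θpos x)).trans ?_
    have := sub_log_nonneg (θpos x)
    have := (hb x).2
    gcongr
    linarith
  · have h1 := θpos x
    have hv := vpos x
    have hv' := S.vhi x t ht
    have h2 := (hb x).2
    have h3 : ux x t ^ 2 ≤ 2 * K / μ * (μ * ux x t ^ 2 / (v x t * θ x t)) := by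
      have e : 2 * K / μ * (μ * ux x t ^ 2 / (v x t * θ x t))
          = (K * 2) / (v x t * θ x t) * ux x t ^ 2 := by field_simp
      rw [e]
      refine le_mul_of_one_le_left (sq_nonneg _) ((one_le_div (by positivity)).2 ?_)
      gcongr
    have h4 : 0 ≤ 2 * K / μ * (κ * θx x t ^ 2 / (v x t * θ x t ^ 2)) := by positivity
    linarith
  · have h1 := θpos x
    have hv := vpos x
    have hv' := S.vhi x t ht
    have h2 := (hb x).2
    have h3 : θx x t ^ 2 ≤ 4 * K / κ * (κ * θx x t ^ 2 / (v x t * θ x t ^ 2)) := by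
      have e : 4 * K / κ * (κ * θx x t ^ 2 / (v x t * θ x t ^ 2))
          = (K * 2 ^ 2) / (v x t * θ x t ^ 2) * θx x t ^ 2 := by field_simp; ring
      rw [e]
      refine le_mul_of_one_le_left (sq_nonneg _) ((one_le_div (by positivity)).2 ?_)
      gcongr
    have h4 : 0 ≤ 4 * K / κ * (μ * ux x t ^ 2 / (v x t * θ x t)) := by positivity
    linarith

end NSFlow

/-! ### Conclusion -/

namespace IsClassicalSolution

variable {μ κ R cv K : ℝ} {v u θ : ℝ → ℝ → ℝ}

/-- The system is autonomous. -/
lemma shift (h : IsClassicalSolution μ κ R cv v u θ) {s : ℝ} (hs : 0 ≤ s) :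
    IsClassicalSolution μ κ R cv (fun x t => v x (t + s)) (fun x t => u x (t + s))
      (fun x t => θ x (t + s)) where
  v_pos x t ht := h.v_pos x _ (by linarith)
  θ_pos x t ht := h.θ_pos x _ (by linarith)
  smooth_x_v t ht := h.smooth_x_v _ (by linarith)
  smooth_x_u t ht := h.smooth_x_u _ (by linarith)
  smooth_x_θ t ht := h.smooth_x_θ _ (by linarith)
  smooth_t_v x t ht := ((h.smooth_t_v x (t + s) (by linarith)).hasDerivAt.comp_add_const t s).differentiableAt
  smooth_t_u x t ht := ((h.smooth_t_u x (t + s) (by linarith)).hasDerivAt.comp_add_const t s).differentiableAt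
  smooth_t_θ x t ht := ((h.smooth_t_θ x (t + s) (by linarith)).hasDerivAt.comp_add_const t s).differentiableAt
  eq_mass x t ht := by
    have := h.eq_mass x (t + s) (by linarith)
    unfold pdt at this ⊢
    rw [deriv_comp_add_const (fun r => v x r)]
    exact this
  eq_momentum x t ht := by
    have := h.eq_momentum x (t + s) (by linarith)
    unfold pdt at this ⊢
    rw [deriv_comp_add_const (fun r => u x r)]
    exact this
  eq_energy x t ht := by
    have := h.eq_energy x (t + s) (by linarith)
    unfold pdt at this ⊢
    rw [deriv_comp_add_const (fun r => θ x r)]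
    exact this
  reg_H1 T hT := by
    obtain ⟨B, hB⟩ := h.reg_H1 (T + s) (by linarith)
    exact ⟨B, fun t ht => hB (t + s) ⟨by linarith [ht.1], by linarith [ht.2]⟩⟩
  reg_H2 T hT := by
    refine lt_of_le_of_lt ?_ (h.reg_H2 (T + s) (by linarith))
    set g : ℝ → ENNReal := fun t => H2 (fun x => u x t) ^ 2 + H2 (fun x => θ x t - 1) ^ 2 with hg
    have e : (∫⁻ t in Icc (0 : ℝ) T, g (t + s)) = ∫⁻ t in Icc s (T + s), g t := by
      have := (measurePreserving_add_right volume s).setLIntegral_comp_emb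
        (measurableEmbedding_addRight s) g (Icc 0 T)
      rwa [image_add_const_Icc, zero_add] at this
    change (∫⁻ t in Icc (0 : ℝ) T, g (t + s)) ≤ _
    rw [e]
    exact lintegral_mono_set (Icc_subset_Icc_left hs)
  farfield_v t ht := h.farfield_v _ (by linarith)
  farfield_u t ht := h.farfield_u _ (by linarith)
  farfield_θ t ht := h.farfield_θ _ (by linarith)

end IsClassicalSolution

lemma InitBounded.sq_bounds {μ κ R cv M m : ℝ} {v u θ : ℝ → ℝ → ℝ}
    (h : IsClassicalSolution μ κ R cv v u θ) (hM : 0 ≤ M) (hI : InitBounded M m v u θ) :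
    (Sq (fun x => v x 0 - 1) ∧ ∫ x, (v x 0 - 1) ^ 2 ≤ M ^ 2) ∧
      (Sq (fun x => u x 0) ∧ ∫ x, u x 0 ^ 2 ≤ M ^ 2) ∧
      (Sq (fun x => pdx u x 0) ∧ ∫ x, pdx u x 0 ^ 2 ≤ M ^ 2) ∧
      (Sq (fun x => θ x 0 - 1) ∧ ∫ x, (θ x 0 - 1) ^ 2 ≤ M ^ 2) ∧
      (Sq (fun x => pdx θ x 0) ∧ ∫ x, pdx θ x 0 ^ 2 ≤ M ^ 2) := by
  have h1 := hI.1
  have hv := h.smooth_x_v 0 le_rfl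
  have hu := h.smooth_x_u 0 le_rfl
  have hθ := h.smooth_x_θ 0 le_rfl
  have e : (fun x => pdx θ x 0) = deriv (fun x => θ x 0 - 1) := by ext x; simp [pdx]
  refine ⟨sq_of_L2 (hv.continuous.sub continuous_const) hM (le_trans ?_ h1),
    sq_of_L2 hu.continuous hM (le_trans ?_ h1),
    sq_of_L2 (IsClassicalSolution.contDiff_pdx hu).continuous hM (le_trans ?_ h1),
    sq_of_L2 (hθ.continuous.sub continuous_const) hM (le_trans ?_ h1),
    sq_of_L2 (IsClassicalSolution.contDiff_pdx hθ).continuous hM (le_trans ?_ h1)⟩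
  · exact le_self_add.trans (le_self_add.trans le_self_add)
  · exact le_self_add.trans (le_add_self.trans le_self_add)
  · exact (le_add_self (b := L2 fun x => u x 0)).trans (le_add_self.trans le_self_add)
  · exact le_self_add.trans le_add_self
  · rw [e]
    exact (le_add_self (b := L2 fun x => θ x 0 - 1)).trans le_add_self

namespace IsClassicalSolution

variable {μ κ R cv K : ℝ} {v u θ : ℝ → ℝ → ℝ}

/-- The energy and the total dissipation are bounded by the data, uniformly in `T`. The lower bound
for the temperature used for integrability degenerates as `T → ∞`, but does not enter the
estimate. -/
lemma energy_bound (h : IsClassicalSolution μ κ R cv v u θ) (hV : VolBounded K v)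
    (hμ : 0 < μ) (hκ : 0 < κ) (hR : 0 < R) (hcv : 0 < cv) (hK : 1 ≤ K) {k₀ : ℝ} (hk0 : 0 < k₀)
    (hk1 : k₀ < 1) (hθ0 : ∀ x, k₀ ≤ θ x 0) {A : ℝ}
    (hv : Sq (fun x => v x 0 - 1) ∧ ∫ x, (v x 0 - 1) ^ 2 ≤ A)
    (hu : Sq (fun x => u x 0) ∧ ∫ x, u x 0 ^ 2 ≤ A)
    (hθ : Sq (fun x => θ x 0 - 1) ∧ ∫ x, (θ x 0 - 1) ^ 2 ≤ A) {T : ℝ} (hT : 0 < T) :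
    IntegrableOn (fun t => dissip μ κ (fun x => v x t) (fun x => θ x t) (fun x => pdx u x t)
      fun x => pdx θ x t) (Icc 0 T) ∧
    (∫ t in Icc 0 T, dissip μ κ (fun x => v x t) (fun x => θ x t) (fun x => pdx u x t)
      fun x => pdx θ x t) ≤ (1 / 2 + R * K + cv * k₀⁻¹) * A ∧
    ∀ t ∈ Icc 0 T, Integrable (fun x => energyDensity R cv (v x t) (u x t) (θ x t)) ∧
      (∫ x, energyDensity R cv (v x t) (u x t) (θ x t)) ≤ (1 / 2 + R * K + cv * k₀⁻¹) * A := by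
  have hK0 : 0 < K := by linarith
  obtain ⟨B, hB, S⟩ := h.flow hV hcv hK hT
  set a := R ^ 2 * K / (4 * μ * cv) with ha
  have ha0 : 0 ≤ a := by positivity
  have hlow : ∀ x, ∀ t ∈ Icc 0 T, (k₀⁻¹ + a * T)⁻¹ ≤ θ x t := fun x t ht => by
    refine le_trans ?_ (S.lower_bound hμ hκ hcv hK hk0 hk1 hθ0 ht x)
    have h1 := ht.1
    have h2 := ht.2
    gcongr
  obtain ⟨hi, he⟩ := S.entropy hcv hK (k := (k₀⁻¹ + a * T)⁻¹) (by positivity) hlow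
  have hD : ∀ t ∈ Icc 0 T, 0 ≤ dissip μ κ (fun x => v x t) (fun x => θ x t) (fun x => pdx u x t)
      fun x => pdx θ x t := fun t ht => integral_nonneg fun x => by
    have h1 := h.v_pos x t ht.1
    have h2 := h.θ_pos x t ht.1
    positivity
  have hE : ∀ t ∈ Icc 0 T, 0 ≤ ∫ x, energyDensity R cv (v x t) (u x t) (θ x t) :=
    fun t ht => integral_nonneg fun x => by
      have h1 := sub_log_nonneg (h.v_pos x t ht.1)
      have h2 := sub_log_nonneg (h.θ_pos x t ht.1)
      simp only [energyDensity]
      positivity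
  have hE0 : (∫ x, energyDensity R cv (v x 0) (u x 0) (θ x 0))
      ≤ (1 / 2 + R * K + cv * k₀⁻¹) * A := by
    have i1 : Integrable fun x => 1 / 2 * u x 0 ^ 2 := hu.1.2.const_mul _
    have i2 : Integrable fun x => R * K * (v x 0 - 1) ^ 2 := hv.1.2.const_mul _
    have i3 : Integrable fun x => cv * k₀⁻¹ * (θ x 0 - 1) ^ 2 := hθ.1.2.const_mul _
    have i12 : Integrable fun x => 1 / 2 * u x 0 ^ 2 + R * K * (v x 0 - 1) ^ 2 := i1.add i2
    have h_dom : Integrable fun x => 1 / 2 * u x 0 ^ 2 + R * K * (v x 0 - 1) ^ 2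
        + cv * k₀⁻¹ * (θ x 0 - 1) ^ 2 :=
      i12.add i3
    have h1 := integral_mono (he 0 ⟨le_rfl, hT.le⟩).1 h_dom fun x => by
      have hv0 := h.v_pos x 0 le_rfl
      have hθp := h.θ_pos x 0 le_rfl
      have e1 : v x 0 - 1 - Real.log (v x 0) ≤ K * (v x 0 - 1) ^ 2 :=
        (sub_log_le hv0).trans (mul_le_mul_of_nonneg_right
          (inv_le_of_inv_le₀ hK0 (hV x 0 le_rfl).1) (sq_nonneg _))
      have e2 : θ x 0 - 1 - Real.log (θ x 0) ≤ k₀⁻¹ * (θ x 0 - 1) ^ 2 :=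
        (sub_log_le hθp).trans (mul_le_mul_of_nonneg_right
          (inv_anti₀ hk0 (hθ0 x)) (sq_nonneg _))
      have e3 := mul_le_mul_of_nonneg_left e1 hR.le
      have e4 := mul_le_mul_of_nonneg_left e2 hcv.le
      simp only [energyDensity]
      linarith
    refine h1.trans ?_
    rw [integral_add i12 i3, integral_add i1 i2, integral_const_mul, integral_const_mul,
      integral_const_mul]
    have e1 := mul_le_mul_of_nonneg_left hv.2 (by positivity : 0 ≤ R * K)
    have e2 := mul_le_mul_of_nonneg_left hθ.2 (by positivity : 0 ≤ cv * k₀⁻¹)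
    linarith [hu.2]
  refine ⟨hi, ?_, fun t ht => ⟨(he t ht).1, ?_⟩⟩
  · have h1 := (he T ⟨hT.le, le_rfl⟩).2
    have h2 := hE T ⟨hT.le, le_rfl⟩
    rw [integral_Icc_eq_integral_Ioc, ← intervalIntegral.integral_of_le hT.le]
    linarith
  · have h1 := (he t ht).2
    have h2 := intervalIntegral.integral_nonneg (μ := volume) ht.1 fun τ hτ => hD τ ⟨hτ.1, hτ.2.trans ht.2⟩
    linarith

end IsClassicalSolution

/-- uniform two-sided bounds on the temperature. -/
theorem temperature_uniform_bounds
    (μ κ R cv M m K : ℝ) (hμ : 0 < μ) (hκ : 0 < κ) (hR : 0 < R) (hcv : 0 < cv)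
    (hM : 0 < M) (hm : 0 < m) (hK : 1 ≤ K) :
    ∃ C₀ : ℝ, 0 < C₀ ∧
      ∀ v u θ : ℝ → ℝ → ℝ,
        IsClassicalSolution μ κ R cv v u θ →
        InitBounded M m v u θ →
        VolBounded K v →
        ∀ x t : ℝ, 0 ≤ t → C₀⁻¹ ≤ θ x t ∧ θ x t ≤ C₀ := by
  have hK0 : 0 < K := by linarith
  obtain ⟨k₀, hk₀⟩ : ∃ k₀, k₀ = min m (1 / 2) := ⟨_, rfl⟩
  have hk0 : 0 < k₀ := by rw [hk₀]; positivity
  have hkm : k₀ ≤ m := by rw [hk₀]; exact min_le_left _ _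
  have hkh : k₀ ≤ 1 / 2 := by rw [hk₀]; exact min_le_right _ _
  obtain ⟨E0, hE0⟩ : ∃ E0, E0 = (1 / 2 + R * K + cv * k₀⁻¹) * M ^ 2 := ⟨_, rfl⟩
  have hE0p : 0 < E0 := by rw [hE0]; positivity
  obtain ⟨L, hL⟩ : ∃ L, L = 162 * K * E0 ^ 2 / (cv * κ) := ⟨_, rfl⟩
  have hLp : 0 < L := by rw [hL]; positivity
  -- `E` dominates every bound that the energy gives at a fixed time or at a good time
  obtain ⟨E, hE⟩ : ∃ E, E = M ^ 2 + 2 * E0 + 2 * (K + 1) / R * E0 + 6 / cv * E0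
    + 2 * K / μ * (E0 / L) + 4 * K / κ * (E0 / L) := ⟨_, rfl⟩
  have p1 : 0 < M ^ 2 := by positivity
  have p2 : 0 < 2 * (K + 1) / R * E0 := by positivity
  have p3 : 0 < 6 / cv * E0 := by positivity
  have p4 : 0 < 2 * K / μ * (E0 / L) := by positivity
  have p5 : 0 < 4 * K / κ * (E0 / L) := by positivity
  have hEp : 0 < E := by linarith
  obtain ⟨C, hC, hup⟩ := NSFlow.upper_bound hμ hκ hR hcv hK hEp hLp
  obtain ⟨a, ha⟩ : ∃ a, a = R ^ 2 * K / (4 * μ * cv) := ⟨_, rfl⟩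
  have ha0 : 0 ≤ a := by rw [ha]; positivity
  refine ⟨max C (k₀⁻¹ + a * L), lt_max_of_lt_left hC, fun v u θ h hI hV => ?_⟩
  obtain ⟨iv, iu, iux, iθ, iθx⟩ := hI.sq_bounds h hM.le
  have hθ0 : ∀ x, k₀ ≤ θ x 0 := fun x => hkm.trans (hI.2.2 x)
  have hbd : ∀ {T : ℝ}, 0 < T → _ := fun {T} hT =>
    h.energy_bound hV hμ hκ hR hcv hK hk0 (by linarith) hθ0 iv iu iθ hT
  simp only [← hE0] at hbd
  have hslice : ∀ t, 0 ≤ t → (∫ x, u x t ^ 2 ≤ E) ∧ ∫ x, (v x t - 1) ^ 2 ≤ E := fun t ht => by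
    have ht1 : 0 < t + 1 := by linarith
    have ht' : t ∈ Icc 0 (t + 1) := ⟨ht, by linarith⟩
    obtain ⟨B, -, S⟩ := h.flow hV hcv hK ht1
    obtain ⟨h1, h2, -⟩ := S.of_energy hR hcv hK ht' ((hbd ht1).2.2 t ht').1 ((hbd ht1).2.2 t ht').2
    exact ⟨by linarith, by linarith⟩
  -- both bounds on a time window of length `L` that starts at a time `s` with controlled data
  have window : ∀ s, 0 ≤ s → (∀ x, k₀ ≤ θ x s) → (∫ x, (θ x s - 1) ^ 2 ≤ E) →
      (∫ x, pdx u x s ^ 2 ≤ E) → (∫ x, pdx θ x s ^ 2 ≤ E) → ∀ t ∈ Icc s (s + L), ∀ x,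
      (max C (k₀⁻¹ + a * L))⁻¹ ≤ θ x t ∧ θ x t ≤ max C (k₀⁻¹ + a * L) := by
    intro s hs w1 w2 w3 w4 t ht x
    have hV' : VolBounded K fun x t => v x (t + s) := fun x t ht => hV x (t + s) (by linarith)
    obtain ⟨B, hB, S⟩ := (h.shift hs).flow hV' hcv hK hLp
    have ht' : t - s ∈ Icc 0 L := ⟨by linarith [ht.1], by linarith [ht.2]⟩
    have hl := S.lower_bound hμ hκ hcv hK hk0 (by linarith) (by simpa using w1) ht' x
    have hu := hup _ _ _ _ _ _ _ _ _ _ _ hB S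
      (fun t ht => (hslice (t + s) (by linarith [ht.1])).1)
      (fun t ht => (hslice (t + s) (by linarith [ht.1])).2) (by simpa using w2)
      (by change ∫ x, pdx u x (0 + s) ^ 2 ≤ E; rwa [zero_add])
      (by change ∫ x, pdx θ x (0 + s) ^ 2 ≤ E; rwa [zero_add]) (t - s) ht' x
    simp only [sub_add_cancel, ← ha] at hl hu
    refine ⟨le_trans ?_ hl, hu.trans (le_max_left _ _)⟩
    have h0 := ht'.1
    refine inv_anti₀ (by positivity) (le_trans ?_ (le_max_right _ _))
    have := mul_le_mul_of_nonneg_left ht'.2 ha0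
    linarith
  intro x t ht
  rcases le_or_gt t L with htL | htL
  · exact window 0 le_rfl hθ0 (by linarith [iθ.2]) (by linarith [iux.2]) (by linarith [iθx.2]) t
      ⟨ht, by linarith⟩ x
  · -- the dissipation is at most its average at some time of `[t - L, t]`
    have ht0 : 0 < t := by linarith
    obtain ⟨hi, hD, hen⟩ := hbd ht0
    have hsub : Icc (t - L) t ⊆ Icc 0 t := Icc_subset_Icc_left (by linarith)
    obtain ⟨s, hs, hsD⟩ := exists_le_setAverage (μ := volume) (s := Icc (t - L) t)
      (by rw [Real.volume_Icc]; simpa using hLp) (by rw [Real.volume_Icc]; exact ENNReal.ofReal_ne_top)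
      (hi.mono_set hsub)
    have hsD' : dissip μ κ (fun x => v x s) (fun x => θ x s) (fun x => pdx u x s)
        (fun x => pdx θ x s) ≤ E0 / L := by
      refine hsD.trans ?_
      rw [setAverage_eq, Real.volume_real_Icc_of_le (by linarith), sub_sub_cancel, smul_eq_mul,
        inv_mul_eq_div]
      refine div_le_div_of_nonneg_right (le_trans ?_ hD) hLp.le
      refine setIntegral_mono_set hi ?_ hsub.eventuallyLE
      refine (ae_restrict_iff' measurableSet_Icc).2 (Eventually.of_forall fun τ hτ =>
        integral_nonneg fun y => ?_)
      have h1 := h.v_pos y τ hτ.1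
      have h2 := h.θ_pos y τ hτ.1
      simp only [Pi.zero_apply]
      positivity
    have hst := hsub hs
    obtain ⟨B, -, S⟩ := h.flow hV hcv hK ht0
    have hlow : ∀ y, (k₀⁻¹ + a * s)⁻¹ ≤ θ y s := fun y => by
      rw [ha]; exact S.lower_bound hμ hκ hcv hK hk0 (by linarith) hθ0 hst y
    have has : 0 < (k₀⁻¹ + a * s)⁻¹ := by have := hst.1; positivity
    obtain ⟨g1, g2, g3, g4⟩ := S.good_time hμ hκ hR hcv hK hst hE0p hLp hL.ge has hlow
      (hen s hst).1 (hen s hst).2 hsD'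
    exact window s hst.1 (fun y => hkh.trans (g1 y)) (by linarith) (by linarith) (by linarith) t
      ⟨hs.2, by linarith [hs.1]⟩ x
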